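/- arXiv:math/0208078 — 9 statements merged into one kernel-verified Lean document; each statement's English description precedes it below -/
import Mathlib

section
/- Let k be a field of characteristic 0, let n be a natural number, let S be the polynomial ring k[x₁,…,xₙ] in n variables over k, and let R be a k-subalgebra of S that is isomorphic as a k-algebra to the polynomial ring in n variables over k. Let F : S → S be a k-algebra endomorphism with F(R) ⊆ R. Then F is bijective if and only if the restriction of F to R, viewed as a map R → R, is bijective. -/
/-!
Choosing an isomorphism `R ≃ S` turns the inclusion `R ⊆ S` into an injective endomorphism `g` of
`S = k[x₁,…,xₙ]` and the restriction `F|_R` into an endomorphism `H` of `S` with `F ∘ g = g ∘ H`.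
The claim becomes: `F` is bijective iff `H` is (`bijective_iff_of_comp_eq`). If either one is
bijective, both are injective, because `S` is algebraic over `g(S)`
(`injective_of_comp_injective`). Two invariants are then compared.

*Degree.* The degree of an injective endomorphism is that of the field extension it induces on
`Frac S`. It is finite and multiplicative, so `F ∘ g = g ∘ H` gives `deg F = deg H`, and if one of
`F`, `H` is bijective then both are birational.

*Jacobian.* Writing `J` for the Jacobian determinant, the chain rule gives
`F(J g) · J F = g(J H) · J g`, where `J g ≠ 0` since `k` has characteristic 0
(`jacobian_ne_zero`). Count prime factors in the UFD `S`. An injective endomorphism cannot lower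
the number of prime factors, because the units of `S` are the nonzero constants
(`card_factors_le_map`). If `H` is bijective, `J H` is a unit and the count forces `J F` to be a
unit; if `F` is bijective, `F(J g)` and `J g` have equally many prime factors and `J H` is a unit.

It remains to show Keller's theorem (`bijective_of_keller`): a birational injective endomorphism
`φ` with unit Jacobian is bijective. The unit Jacobian makes `φ` étale, hence flat
(`flat_of_jacobian`). Given `r ∈ S`, write `φ(b) r = φ(a)` with `a`, `b` coprime. By flatness this
relation comes from relations `b u = a v` in the source, where `b ∣ v`; it follows that `φ(b)` is a
unit (`isUnit_of_flat`), so `b` is a constant and `r` lies in the image.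
-/

namespace ConnellZweibel

open MvPolynomial


/-! ### Flatness from the Jacobian, and Keller's theorem -/

section Keller

open KaehlerDifferential TensorProduct

/-- The hypothesis `hM` says that `M` is a left inverse of the Jacobian matrix of `φ`. The source
and target variables are kept distinct so that the algebra structure given by `φ` does not clash
with the identity one. -/
theorem flat_of_jacobian {k σ τ : Type*} [Field k] [Fintype σ] [Fintype τ] [DecidableEq τ]
    (hcard : Fintype.card σ = Fintype.card τ)
    (φ : MvPolynomial σ k →ₐ[k] MvPolynomial τ k)
    (M : Matrix τ σ (MvPolynomial τ k))
    (hM : ∀ j l, ∑ i, M j i * pderiv l (φ (X i)) = if j = l then 1 else 0) :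
    φ.toRingHom.Flat := by
  algebraize [φ.toRingHom]
  change Module.Flat (MvPolynomial σ k) (MvPolynomial τ k)
  have : IsScalarTower k (MvPolynomial σ k) (MvPolynomial τ k) :=
    IsScalarTower.of_algHom φ
  have hD : ∀ p : MvPolynomial τ k, D k (MvPolynomial τ k) p =
      ∑ l, pderiv l p • D k (MvPolynomial τ k) (X l) := by
    intro p
    rw [← (mvPolynomialBasis k τ).sum_repr (D k _ p)]
    simp [mvPolynomialBasis_repr_apply]
  -- The map `B ⊗ Ω[A/k] → Ω[B/k]` has the Jacobian matrix of `φ` as its matrix; it is an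
  -- isomorphism, so the Jacobi–Zariski sequence kills both `Ω[B/A]` and `H¹(L_{B/A})`.
  have hsurj : Function.Surjective
      (mapBaseChange k (MvPolynomial σ k) (MvPolynomial τ k)) := by
    rw [← LinearMap.range_eq_top, eq_top_iff, ← (mvPolynomialBasis k τ).span_eq,
      Submodule.span_le]
    rintro _ ⟨j, rfl⟩
    refine ⟨∑ i, M j i ⊗ₜ D k _ (X i), ?_⟩
    have h (i : σ) : algebraMap (MvPolynomial σ k) (MvPolynomial τ k) (X i) = φ (X i) := rfl
    simp only [map_sum, mapBaseChange_tmul, map_D, h, mvPolynomialBasis_apply]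
    simp_rw [hD (φ _), Finset.smul_sum, smul_smul]
    rw [Finset.sum_comm]
    simp_rw [← Finset.sum_smul, hM]
    simp
  have hinj : Function.Injective
      (mapBaseChange k (MvPolynomial σ k) (MvPolynomial τ k)) := by
    let e := ((mvPolynomialBasis k σ).baseChange (MvPolynomial τ k)).equiv
      (mvPolynomialBasis k τ) (Fintype.equivOfCardEq hcard)
    have : Module.Finite (MvPolynomial τ k) Ω[MvPolynomial τ k⁄k] :=
      Module.Finite.of_basis (mvPolynomialBasis k τ)
    exact OrzechProperty.injective_of_surjective_of_injective e.toLinearMap _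
      e.injective hsurj
  have h1 : Subsingleton Ω[MvPolynomial τ k⁄MvPolynomial σ k] := by
    refine subsingleton_of_forall_eq 0 fun y ↦ ?_
    obtain ⟨x, rfl⟩ := map_surjective k (MvPolynomial σ k) (MvPolynomial τ k) y
    exact (exact_mapBaseChange_map k _ _ x).mpr (hsurj x)
  have h2 : Subsingleton (Algebra.H1Cotangent (MvPolynomial σ k) (MvPolynomial τ k)) := by
    refine subsingleton_of_forall_eq 0 fun y ↦ ?_
    have hy : Algebra.H1Cotangent.δ k (MvPolynomial σ k) (MvPolynomial τ k) y = 0 := by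
      apply hinj
      rw [map_zero]
      exact (Algebra.H1Cotangent.exact_δ_mapBaseChange k _ _ _).mpr ⟨y, rfl⟩
    obtain ⟨x, rfl⟩ := (Algebra.H1Cotangent.exact_map_δ k _ _ _).mp hy
    rw [Subsingleton.elim x 0, map_zero]
  have : Algebra.FormallySmooth (MvPolynomial σ k) (MvPolynomial τ k) :=
    ⟨inferInstance, h2⟩
  have : Algebra.FinitePresentation (MvPolynomial σ k) (MvPolynomial τ k) :=
    .of_restrict_scalars_finitePresentation k _ _
  have : Algebra.Smooth (MvPolynomial σ k) (MvPolynomial τ k) := ⟨inferInstance, inferInstance⟩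
  exact Algebra.Smooth.flat _ _

/-- Units of a polynomial ring over a field are constants, and `φ` fixes constants. -/
theorem isUnit_of_isUnit_map {k σ τ : Type*} [Field k]
    {φ : MvPolynomial σ k →ₐ[k] MvPolynomial τ k} (hinj : Function.Injective φ)
    {b : MvPolynomial σ k} (hb : IsUnit (φ b)) : IsUnit b := by
  obtain ⟨c, hc, h⟩ := isUnit_iff_eq_C_of_isReduced.mp hb
  have : b = C c := hinj (h.trans (φ.commutes c).symm)
  exact this ▸ hc.map C

/-- The equational criterion for flatness applied to the relation `b • r - a • 1 = 0`. -/
theorem exists_of_flat {A B : Type*} [CommRing A] [CommRing B] [Algebra A B] [Module.Flat A B]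
    {a b : A} {r : B} (hab : algebraMap A B b * r = algebraMap A B a) :
    ∃ (m : ℕ) (u v : Fin m → A) (y : Fin m → B),
      1 = ∑ j, algebraMap A B (v j) * y j ∧ ∀ j, b * u j = a * v j := by
  have hs : ∑ i, (![b, -a] : Fin 2 → A) i • (![r, 1] : Fin 2 → B) i = 0 := by
    rw [Fin.sum_univ_two]
    simp [Algebra.smul_def, hab]
  obtain ⟨m, u, y, hy, hu⟩ := Module.Flat.isTrivialRelation_of_sum_smul_eq_zero
    (R := A) (M := B) hs
  refine ⟨m, u 0, u 1, y, ?_, fun j ↦ ?_⟩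
  · have := hy 1
    simp_rw [Algebra.smul_def] at this
    exact this
  · have := hu j
    rw [Fin.sum_univ_two] at this
    simp only [Matrix.cons_val_zero, Matrix.cons_val_one, neg_mul] at this
    exact add_neg_eq_zero.mp this

theorem isUnit_of_flat {A B : Type*} [CommRing A] [UniqueFactorizationMonoid A]
    [CommRing B] (f : A →+* B) (hf : f.Flat) {a b : A} (hrel : IsRelPrime b a) {r : B}
    (hab : f b * r = f a) : IsUnit (f b) := by
  algebraize [f]
  obtain ⟨m, u, v, y, hone, hu⟩ := exists_of_flat (A := A) (B := B) (a := a) (b := b) (r := r) hab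
  rw [isUnit_iff_dvd_one, hone]
  exact Finset.dvd_sum fun j _ ↦ Dvd.dvd.mul_right
    (map_dvd f (hrel.dvd_of_dvd_mul_left ⟨u j, (hu j).symm⟩)) _

theorem surjective_of_flat {k σ τ : Type*} [Field k]
    (φ : MvPolynomial σ k →ₐ[k] MvPolynomial τ k) (hflat : φ.toRingHom.Flat)
    (hinj : Function.Injective φ)
    (hbir : ∀ r, ∃ a b, b ≠ 0 ∧ φ b * r = φ a) : Function.Surjective φ := by
  intro r
  obtain ⟨a₀, b₀, hb₀, h₀⟩ := hbir r
  obtain ⟨b, a, c, hrel, rfl, rfl⟩ :=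
    UniqueFactorizationMonoid.exists_reduced_factors b₀ hb₀ a₀
  have hc : φ c ≠ 0 := by
    rw [Ne, map_eq_zero_iff φ hinj]
    exact left_ne_zero_of_mul hb₀
  have hab : φ b * r = φ a := by
    apply mul_left_cancel₀ hc
    rw [← mul_assoc, ← map_mul, h₀, map_mul]
  have hunit : IsUnit (φ b) := isUnit_of_flat φ.toRingHom hflat hrel hab
  obtain ⟨v, hv⟩ := (isUnit_of_isUnit_map hinj hunit).exists_left_inv
  refine ⟨v * a, ?_⟩
  rw [map_mul, ← hab, ← mul_assoc, ← map_mul, hv, map_one, one_mul]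

end Keller

/-! ### Counting prime factors -/

section Factors

open UniqueFactorizationMonoid
variable {A : Type*} [CommRing A] [UniqueFactorizationMonoid A]

theorem card_factors_mul {x y : A} (hx : x ≠ 0) (hy : y ≠ 0) :
    (factors (x * y)).card = (factors x).card + (factors y).card := by
  simpa using Multiset.card_eq_card_of_rel (factors_mul hx hy)

theorem card_factors_eq_zero {x : A} (hx : x ≠ 0) : (factors x).card = 0 ↔ IsUnit x := by
  rw [Multiset.card_eq_zero]
  constructor
  · intro h
    have := factors_prod hx
    rw [h, Multiset.prod_zero] at this
    exact associated_one_iff_isUnit.mp this.symm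
  · intro h
    exact factors_of_isUnit h

theorem card_factors_le_map (F : A →+* A) (hF : Function.Injective F)
    (hu : ∀ x, IsUnit (F x) → IsUnit x) {d : A} (hd : d ≠ 0) :
    (factors d).card ≤ (factors (F d)).card := by
  induction d using induction_on_prime with
  | h₁ => exact absurd rfl hd
  | h₂ x hx => rw [(card_factors_eq_zero hd).mpr hx]; exact Nat.zero_le _
  | h₃ a p ha hp ih =>
    have hFa := (map_ne_zero_iff F hF).mpr ha
    have hFp := (map_ne_zero_iff F hF).mpr hp.ne_zero
    have h1 : (factors (F p)).card ≠ 0 := fun h ↦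
      hp.not_isUnit (hu p ((card_factors_eq_zero hFp).mp h))
    have h2 : (factors p).card = 1 := card_factors_of_irreducible hp.irreducible
    rw [map_mul, card_factors_mul hp.ne_zero ha, card_factors_mul hFp hFa, h2]
    have := ih ha
    omega

end Factors

/-! ### Algebraicity over the image of an injective endomorphism -/

theorem range_eq_adjoin {k σ B : Type*} [Field k] [CommRing B] [Algebra k B]
    (φ : MvPolynomial σ k →ₐ[k] B) :
    φ.range = Algebra.adjoin k (Set.range fun i ↦ φ (X i)) := by
  rw [Algebra.adjoin_range_eq_range_aeval]
  exact congrArg AlgHom.range (MvPolynomial.aeval_unique φ)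

section Algebraic

variable {k σ : Type*} [Field k] [Fintype σ]

theorem isTranscendenceBasis {φ : MvPolynomial σ k →ₐ[k] MvPolynomial σ k}
    (hφ : Function.Injective φ) : IsTranscendenceBasis k (fun i ↦ φ (X i)) := by
  apply AlgebraicIndependent.isTranscendenceBasis_of_lift_trdeg_le_of_finite
  · exact (MvPolynomial.algebraicIndependent_X σ k).map' hφ
  · rw [MvPolynomial.trdeg_of_isDomain]
    simp

theorem isAlgebraic_range {φ : MvPolynomial σ k →ₐ[k] MvPolynomial σ k}
    (hφ : Function.Injective φ) : Algebra.IsAlgebraic φ.range (MvPolynomial σ k) := by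
  rw [range_eq_adjoin]
  exact (isTranscendenceBasis hφ).isAlgebraic

/-- A nonzero kernel element `x` of `F` divides some nonzero `g p`, because it is algebraic over
the range of `g`; then `F (g p) = 0`. -/
theorem injective_of_comp_injective {F g : MvPolynomial σ k →ₐ[k] MvPolynomial σ k}
    (hg : Function.Injective g) (h : Function.Injective (F.comp g)) : Function.Injective F := by
  rw [injective_iff_map_eq_zero]
  intro x hx
  by_contra hx0
  have := isAlgebraic_range hg
  obtain ⟨⟨_, p, rfl⟩, hr, y, hy⟩ :=
    (Algebra.IsAlgebraic.isAlgebraic (R := g.range) x).exists_nonzero_dvd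
      (mem_nonZeroDivisors_of_ne_zero hx0)
  have hp : p = 0 := by
    apply h
    have : g p = x * y := hy
    simp [this, hx]
  exact hr (Subtype.ext (by simp [hp]))

end Algebraic

/-! ### The Jacobian determinant -/

theorem derivation_eq_zero_of_isAlgebraic {A B : Type*} [CommRing A] [CommRing B] [IsDomain B]
    [Algebra A B] [CharZero A] [FaithfulSMul A B] [IsDomain A] (D : Derivation A B B) {x : B}
    (hx : IsAlgebraic A x) : D x = 0 := by
  obtain ⟨p, hp, hpx⟩ := hx
  induction h : p.natDegree using Nat.strong_induction_on generalizing p with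
  | _ d ih =>
    have h0 : p.natDegree ≠ 0 := by
      intro h0
      rw [Polynomial.eq_C_of_natDegree_eq_zero h0] at hp hpx
      simp at hp hpx
      exact hp hpx
    have hD := D.map_aeval p x
    rw [hpx, map_zero, smul_eq_mul, eq_comm, mul_eq_zero] at hD
    rcases hD with hp' | hD
    · refine ih _ ?_ p.derivative ?_ hp' rfl
      · exact h ▸ Polynomial.natDegree_derivative_lt h0
      · exact fun h' ↦ h0 (Polynomial.derivative_eq_zero.mp h')
    · exact hD

section Jacobian

variable {k σ : Type*} [Field k] [Fintype σ] [DecidableEq σ]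

/-- The Jacobian determinant `det (∂φ(Xᵢ)/∂Xⱼ)` of an endomorphism of a polynomial ring. -/
noncomputable def jacobian (φ : MvPolynomial σ k →ₐ[k] MvPolynomial σ k) : MvPolynomial σ k :=
  (Matrix.of fun i j ↦ pderiv j (φ (X i))).det

/-- The chain rule. -/
theorem pderiv_algHom (F : MvPolynomial σ k →ₐ[k] MvPolynomial σ k) (p : MvPolynomial σ k)
    (j : σ) :
    pderiv j (F p) = ∑ l, F (pderiv l p) * pderiv j (F (X l)) := by
  induction p using MvPolynomial.induction_on with
  | C a =>
    have : F (C a) = C a := F.commutes a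
    simp [this]
  | add p q hp hq => simp [hp, hq, add_mul, Finset.sum_add_distrib]
  | mul_X p i hp =>
    simp only [map_mul, Derivation.leibniz, smul_eq_mul, map_add, hp, add_mul,
      Finset.sum_add_distrib, Finset.mul_sum]
    congr 1
    · simp [pderiv_X, Pi.single_apply, apply_ite]
    · exact Finset.sum_congr rfl fun l _ ↦ by ring

theorem jacobian_comp (F g : MvPolynomial σ k →ₐ[k] MvPolynomial σ k) :
    jacobian (F.comp g) = F (jacobian g) * jacobian F := by
  rw [jacobian, jacobian, jacobian, AlgHom.map_det, ← Matrix.det_mul]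
  congr 1
  ext1 i j
  simp [Matrix.mul_apply, pderiv_algHom F (g (X i)) j]

theorem jacobian_id : jacobian (AlgHom.id k (MvPolynomial σ k)) = 1 := by
  have : (Matrix.of fun i j ↦ pderiv j ((AlgHom.id k (MvPolynomial σ k)) (X i))) = 1 := by
    ext1 i j
    simp [pderiv_X, Matrix.one_apply, Pi.single_apply]
  rw [jacobian, this, Matrix.det_one]

theorem isUnit_jacobian {F : MvPolynomial σ k →ₐ[k] MvPolynomial σ k}
    (hF : Function.Bijective F) : IsUnit (jacobian F) := by
  let e := AlgEquiv.ofBijective F hF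
  have h : F.comp e.symm.toAlgHom = AlgHom.id k _ := by
    ext1 i
    exact e.apply_symm_apply _
  refine .of_mul_eq_one_right (F (jacobian e.symm.toAlgHom)) ?_
  rw [← jacobian_comp, h, jacobian_id]

/-- A kernel vector `v` of the Jacobian matrix gives a nonzero derivation `∑ vⱼ ∂ⱼ` that vanishes
on the range of `g`, over which the polynomial ring is algebraic. -/
theorem jacobian_ne_zero [CharZero k] {g : MvPolynomial σ k →ₐ[k] MvPolynomial σ k}
    (hg : Function.Injective g) : jacobian g ≠ 0 := by
  intro h
  obtain ⟨v, hv, hv0⟩ := Matrix.exists_mulVec_eq_zero_iff.mpr h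
  let D : Derivation k (MvPolynomial σ k) (MvPolynomial σ k) := ∑ j, v j • pderiv j
  have hD (p : MvPolynomial σ k) : D p = ∑ j, v j * pderiv j p := by
    have := congrFun (map_sum (Derivation.coeFnAddMonoidHom (R := k) (A := MvPolynomial σ k)
      (M := MvPolynomial σ k)) (fun j ↦ v j • pderiv j) Finset.univ) p
    refine this.trans ?_
    simp [Finset.sum_apply]
  have hDX (i : σ) : D (X i) = v i := by
    simp [hD, pderiv_X, Pi.single_apply]
  have hDg (p : MvPolynomial σ k) : D (g p) = 0 := by
    have hcomp (i : σ) : D (g (X i)) = 0 := by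
      have := congrFun hv0 i
      simpa [Matrix.mulVec, dotProduct, hD, mul_comm] using this
    induction p using MvPolynomial.induction_on with
    | C a =>
      have : g (C a) = algebraMap k _ a := g.commutes a
      simp [this]
    | add p q hp hq => simp [hp, hq]
    | mul_X p i hp => simp [hp, hcomp]
  let D' : Derivation g.range (MvPolynomial σ k) (MvPolynomial σ k) :=
    Derivation.mk'
      { toFun := D
        map_add' := D.map_add
        map_smul' := by
          rintro ⟨_, p, rfl⟩ q
          change D (g p * q) = g p * D q
          simp [hDg] }
      (fun a b ↦ D.leibniz a b)
  have := isAlgebraic_range hg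
  have : CharZero g.range := inferInstance
  refine hv (funext fun i ↦ ?_)
  rw [← hDX]
  exact derivation_eq_zero_of_isAlgebraic D' (Algebra.IsAlgebraic.isAlgebraic (X i))

end Jacobian

/-! ### The degree of an injective endomorphism -/

section Degree

variable {k σ : Type*} [Field k] [Fintype σ]

theorem toFractionRing_injective {φ : MvPolynomial σ k →ₐ[k] MvPolynomial σ k}
    (hφ : Function.Injective φ) : Function.Injective ((IsScalarTower.toAlgHom k
      (MvPolynomial σ k) (FractionRing (MvPolynomial σ k))).comp φ) :=
  (IsFractionRing.injective _ (FractionRing (MvPolynomial σ k))).comp hφ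

/-- The endomorphism of the field of rational functions induced by `φ`. -/
noncomputable def fracMap (φ : MvPolynomial σ k →ₐ[k] MvPolynomial σ k)
    (hφ : Function.Injective φ) :
    FractionRing (MvPolynomial σ k) →ₐ[k] FractionRing (MvPolynomial σ k) :=
  IsFractionRing.liftAlgHom (toFractionRing_injective hφ)

theorem fracMap_algebraMap (φ : MvPolynomial σ k →ₐ[k] MvPolynomial σ k)
    (hφ : Function.Injective φ) (p : MvPolynomial σ k) :
    fracMap φ hφ (algebraMap _ _ p) = algebraMap _ _ (φ p) := by
  rw [fracMap, IsFractionRing.liftAlgHom_apply, IsFractionRing.lift_algebraMap]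
  rfl

/-- The degree of `Frac S` over the subfield generated by `φ(S)`, where `S` is the polynomial
ring. Like `Module.finrank`, it would be `0` for an infinite extension; see `degree_ne_zero`. -/
noncomputable def degree (φ : MvPolynomial σ k →ₐ[k] MvPolynomial σ k)
    (hφ : Function.Injective φ) : ℕ :=
  (fracMap φ hφ).fieldRange.relfinrank ⊤

/-- The extension is algebraic (the `φ(Xᵢ)` form a transcendence basis) and finitely generated,
hence finite. -/
theorem degree_ne_zero (φ : MvPolynomial σ k →ₐ[k] MvPolynomial σ k)
    (hφ : Function.Injective φ) : degree φ hφ ≠ 0 := by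
  have : Algebra.IsAlgebraic (MvPolynomial σ k) (FractionRing (MvPolynomial σ k)) :=
    IsLocalization.isAlgebraic _ (nonZeroDivisors (MvPolynomial σ k))
  have hb := (isTranscendenceBasis hφ).algebraMap_comp (A := FractionRing (MvPolynomial σ k))
  have hr : (fracMap φ hφ).fieldRange = IntermediateField.adjoin k
      (Set.range (algebraMap _ (FractionRing (MvPolynomial σ k)) ∘ fun i ↦ φ (X i))) :=
    IsFractionRing.liftAlgHom_fieldRange_eq_of_range_eq _ (range_eq_adjoin _)
  have : Algebra.IsAlgebraic (fracMap φ hφ).fieldRange (FractionRing (MvPolynomial σ k)) := by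
    rw [hr]
    exact hb.isAlgebraic_field
  have : Algebra.EssFiniteType (MvPolynomial σ k) (FractionRing (MvPolynomial σ k)) :=
    .of_isLocalization _ (nonZeroDivisors (MvPolynomial σ k))
  have : Algebra.EssFiniteType k (FractionRing (MvPolynomial σ k)) :=
    .comp k (MvPolynomial σ k) _
  have : Algebra.EssFiniteType (fracMap φ hφ).fieldRange (FractionRing (MvPolynomial σ k)) :=
    .of_comp k _ _
  have := Algebra.finite_of_essFiniteType_of_isAlgebraic (F := (fracMap φ hφ).fieldRange)
    (E := FractionRing (MvPolynomial σ k))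
  rw [degree, IntermediateField.relfinrank_top_right]
  exact Module.finrank_pos.ne'

theorem fracMap_comp {F g : MvPolynomial σ k →ₐ[k] MvPolynomial σ k}
    (hF : Function.Injective F) (hg : Function.Injective g)
    (h : Function.Injective (F.comp g)) :
    fracMap (F.comp g) h = (fracMap F hF).comp (fracMap g hg) := by
  apply AlgHom.coe_ringHom_injective
  apply IsLocalization.ringHom_ext (nonZeroDivisors (MvPolynomial σ k))
  apply RingHom.ext
  intro p
  simp [fracMap_algebraMap]

theorem degree_comp {F g : MvPolynomial σ k →ₐ[k] MvPolynomial σ k}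
    (hF : Function.Injective F) (hg : Function.Injective g)
    (h : Function.Injective (F.comp g)) :
    degree (F.comp g) h = degree g hg * degree F hF := by
  have h1 : (fracMap (F.comp g) h).fieldRange = (fracMap g hg).fieldRange.map (fracMap F hF) := by
    rw [fracMap_comp hF hg h, AlgHom.map_fieldRange]
  have h2 : (fracMap F hF).fieldRange = IntermediateField.map (fracMap F hF) ⊤ :=
    AlgHom.fieldRange_eq_map _
  have h3 : degree g hg = (fracMap (F.comp g) h).fieldRange.relfinrank (fracMap F hF).fieldRange := by
    rw [h1, h2, IntermediateField.relfinrank_map_map, degree]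
  rw [h3, degree, degree]
  refine (IntermediateField.relfinrank_mul_relfinrank ?_ le_top).symm
  rw [h1, h2]
  exact IntermediateField.map_mono _ le_top

theorem degree_eq_one_of_bijective {φ : MvPolynomial σ k →ₐ[k] MvPolynomial σ k}
    (hφ : Function.Bijective φ) : degree φ hφ.1 = 1 := by
  rw [degree, IntermediateField.relfinrank_eq_one_iff]
  rintro x -
  obtain ⟨a, b, hb, rfl⟩ := IsFractionRing.div_surjective (A := MvPolynomial σ k) x
  obtain ⟨a, rfl⟩ := hφ.2 a
  obtain ⟨b, rfl⟩ := hφ.2 b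
  exact ⟨algebraMap _ _ a / algebraMap _ _ b, by
    simp [fracMap_algebraMap]⟩

theorem birational_of_degree_eq_one {φ : MvPolynomial σ k →ₐ[k] MvPolynomial σ k}
    (hφ : Function.Injective φ) (h : degree φ hφ = 1) (r : MvPolynomial σ k) :
    ∃ a b, b ≠ 0 ∧ φ b * r = φ a := by
  rw [degree, IntermediateField.relfinrank_eq_one_iff] at h
  obtain ⟨x, hx⟩ := h (show algebraMap _ (FractionRing (MvPolynomial σ k)) r ∈ _ from trivial)
  obtain ⟨a, b, hb, rfl⟩ := IsFractionRing.div_surjective (A := MvPolynomial σ k) x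
  have hb0 := nonZeroDivisors.ne_zero hb
  refine ⟨a, b, hb0, ?_⟩
  apply IsFractionRing.injective (MvPolynomial σ k) (FractionRing (MvPolynomial σ k))
  have hx' : algebraMap _ (FractionRing (MvPolynomial σ k)) (φ a) / algebraMap _ _ (φ b) =
      algebraMap _ _ r := by
    rw [← fracMap_algebraMap φ hφ, ← fracMap_algebraMap φ hφ, ← map_div₀]
    exact hx
  have hb1 : algebraMap _ (FractionRing (MvPolynomial σ k)) (φ b) ≠ 0 := by
    simpa [map_eq_zero_iff φ hφ] using hb0
  rw [map_mul, ← hx', mul_div_cancel₀ _ hb1]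

end Degree

/-! ### Comparison of `F` and `H` -/

section Main

variable {k σ : Type*} [Field k] [Fintype σ] [DecidableEq σ]

/-- Keller's theorem: birational with unit Jacobian implies bijective. -/
theorem bijective_of_keller {φ : MvPolynomial σ k →ₐ[k] MvPolynomial σ k}
    (hφ : Function.Injective φ) (hJ : IsUnit (jacobian φ)) (hdeg : degree φ hφ = 1) :
    Function.Bijective φ := by
  refine ⟨hφ, surjective_of_flat φ ?_ hφ (birational_of_degree_eq_one hφ hdeg)⟩
  refine flat_of_jacobian rfl φ (Matrix.of fun i j ↦ pderiv j (φ (X i)))⁻¹ fun j l ↦ ?_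
  have h := congrFun (congrFun (Matrix.nonsing_inv_mul _ hJ) j) l
  rw [Matrix.mul_apply, Matrix.one_apply] at h
  exact h

/-- The Connell–Zweibel theorem with `R` replaced by the image of an injective endomorphism `g`
and `F|_R` by `H`. -/
theorem bijective_iff_of_comp_eq [CharZero k] {F g H : MvPolynomial σ k →ₐ[k] MvPolynomial σ k}
    (hg : Function.Injective g) (hcomp : F.comp g = g.comp H) :
    Function.Bijective F ↔ Function.Bijective H := by
  have hJ : F (jacobian g) * jacobian F = g (jacobian H) * jacobian g := by
    rw [← jacobian_comp, ← jacobian_comp, hcomp]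
  have hJg := jacobian_ne_zero hg
  have key (hF : Function.Injective F) (hH : Function.Injective H) :
      degree F hF = degree H hH ∧
      (UniqueFactorizationMonoid.factors (F (jacobian g))).card +
        (UniqueFactorizationMonoid.factors (jacobian F)).card =
      (UniqueFactorizationMonoid.factors (g (jacobian H))).card +
        (UniqueFactorizationMonoid.factors (jacobian g)).card := by
    constructor
    · have h1 := degree_comp hF hg (hF.comp hg)
      have h2 := degree_comp hg hH (hg.comp hH)
      have h3 : degree (F.comp g) (hF.comp hg) = degree (g.comp H) (hg.comp hH) := by
        congr 1
      rw [h1, h2, mul_comm] at h3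
      exact Nat.eq_of_mul_eq_mul_right (Nat.pos_of_ne_zero (degree_ne_zero g hg)) h3
    · rw [← card_factors_mul ((map_ne_zero_iff F hF).mpr hJg) (jacobian_ne_zero hF), hJ,
        card_factors_mul ((map_ne_zero_iff g hg).mpr (jacobian_ne_zero hH)) hJg]
  constructor
  · intro hF
    have hH : Function.Injective H := by
      have : Function.Injective (g.comp H) := hcomp ▸ hF.1.comp hg
      exact Function.Injective.of_comp this
    obtain ⟨hdeg, hcard⟩ := key hF.1 hH
    rw [degree_eq_one_of_bijective hF] at hdeg
    refine bijective_of_keller hH ?_ hdeg.symm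
    let e := AlgEquiv.ofBijective F hF
    have hle := card_factors_le_map (e.symm : MvPolynomial σ k →+* MvPolynomial σ k)
      e.symm.injective (fun x hx ↦ isUnit_of_isUnit_map (φ := e.symm.toAlgHom) e.symm.injective hx)
      ((map_ne_zero_iff F hF.1).mpr hJg)
    have he : (e.symm : MvPolynomial σ k →+* MvPolynomial σ k) (F (jacobian g)) = jacobian g :=
      e.symm_apply_apply _
    rw [he] at hle
    rw [(card_factors_eq_zero (jacobian_ne_zero hF.1)).mpr (isUnit_jacobian hF)] at hcard
    refine isUnit_of_isUnit_map hg ((card_factors_eq_zero ?_).mp (by omega))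
    exact (map_ne_zero_iff g hg).mpr (jacobian_ne_zero hH)
  · intro hH
    have hF : Function.Injective F := by
      refine injective_of_comp_injective hg ?_
      rw [hcomp]
      exact hg.comp hH.1
    obtain ⟨hdeg, hcard⟩ := key hF hH.1
    rw [degree_eq_one_of_bijective hH] at hdeg
    refine bijective_of_keller hF ?_ hdeg
    have hle := card_factors_le_map (F : MvPolynomial σ k →+* MvPolynomial σ k) hF
      (fun x hx ↦ isUnit_of_isUnit_map hF hx) hJg
    rw [RingHom.coe_coe] at hle
    have hunit : IsUnit (g (jacobian H)) := (isUnit_jacobian hH).map g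
    rw [(card_factors_eq_zero hunit.ne_zero).mpr hunit] at hcard
    exact (card_factors_eq_zero (jacobian_ne_zero hF)).mp (by omega)

end Main

end ConnellZweibel

/-- The Connell–Zweibel theorem.  Let `k` be a field of characteristic 0, let
`S = k[x₁,…,xₙ]` and let `R` be a `k`-subalgebra of `S` that is `k`-isomorphic to the
polynomial ring in `n` variables.  If `F : S → S` is a `k`-algebra endomorphism with
`F(R) ⊆ R`, then `F` is bijective iff the restriction `F|_R : R → R` is bijective. -/
theorem connell_zweibel
    {k : Type*} [Field k] [CharZero k] (n : ℕ)
    (R : Subalgebra k (MvPolynomial (Fin n) k))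
    (hR : Nonempty (↥R ≃ₐ[k] MvPolynomial (Fin n) k))
    (F : MvPolynomial (Fin n) k →ₐ[k] MvPolynomial (Fin n) k)
    (hF : ∀ r ∈ R, F r ∈ R) :
    Function.Bijective F ↔
      Function.Bijective (fun r : ↥R => (⟨F r.1, hF r.1 r.2⟩ : ↥R)) := by
  obtain ⟨e⟩ := hR
  let FR : R →ₐ[k] R := (F.comp R.val).codRestrict R fun r ↦ hF r.1 r.2
  let g : MvPolynomial (Fin n) k →ₐ[k] MvPolynomial (Fin n) k := R.val.comp e.symm.toAlgHom
  let H : MvPolynomial (Fin n) k →ₐ[k] MvPolynomial (Fin n) k :=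
    e.toAlgHom.comp (FR.comp e.symm.toAlgHom)
  have hg : Function.Injective g := Subtype.val_injective.comp e.symm.injective
  have hcomp : F.comp g = g.comp H := by
    ext1 i
    change F (e.symm (MvPolynomial.X i)).1 = (e.symm (e (FR (e.symm (MvPolynomial.X i))))).1
    rw [e.symm_apply_apply]
    rfl
  have hH : Function.Bijective H ↔ Function.Bijective FR := by
    change Function.Bijective (e ∘ (FR ∘ e.symm)) ↔ _
    rw [Function.Bijective.of_comp_iff' e.bijective, Function.Bijective.of_comp_iff _ e.symm.bijective]
  exact (ConnellZweibel.bijective_iff_of_comp_eq hg hcomp).trans hH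
end

section
/- Let R and S be integral domains that are finitely generated ℂ-algebras, let ι : R → S be an injective ℂ-algebra homomorphism, and let F : S → S and G : R → R be ℂ-algebra homomorphisms with ι ∘ G = F ∘ ι. If F is injective and the induced endomorphism of the fraction field Frac(S) (extending F) is bijective (i.e., the corresponding morphism f : Spec S → Spec S is birational), then G is injective and the induced endomorphism of the fraction field Frac(R) is bijective (i.e., the corresponding morphism g : Spec R → Spec R is birational). -/
/-!
Put `K = Frac R ⊆ L = Frac S`, and let `Φ` be the automorphism of `L` induced by `F`; it maps `K`
into `K`, inducing `Ψ`. Then `K ⊆ Φ⁻¹(K) ⊆ Φ⁻²(K) ⊆ ⋯` is an ascending chain of intermediate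
fields of the finitely generated extension `L / ℂ`. Such chains are stationary, so
`Φ⁻ⁿ(K) = Φ⁻⁽ⁿ⁺¹⁾(K)` for some `n`, whence `K = Φ⁻¹(K)` because `Φ` is bijective. Together with
surjectivity of `Φ` this says that `Ψ` is surjective.

The ascending chain condition (`wellFoundedGT_intermediateField`) is deduced from noetherianity of
`L ⊗[ℂ] L`: an intermediate field `M` is determined by the kernel of `L ⊗[ℂ] L → L ⊗[M] L`, the
ideal generated by the elements `a ⊗ 1 - 1 ⊗ a` with `a ∈ M`, since faithfully flat descent gives
`M = {a ∈ L | a ⊗ 1 = 1 ⊗ a in L ⊗[M] L}`.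
-/

open scoped TensorProduct

/-- The ideal of `L ⊗[k] L` generated by the elements `a ⊗ 1 - 1 ⊗ a` with `a ∈ M`. -/
def diagonalIdeal {k L : Type*} [Field k] [Field L] [Algebra k L] (M : IntermediateField k L) :
    Ideal (L ⊗[k] L) :=
  Ideal.span (Algebra.TensorProduct.includeLeftSubRight k L '' (M : Set L))

lemma mem_of_mem_diagonalIdeal {k L : Type*} [Field k] [Field L] [Algebra k L]
    (M : IntermediateField k L) {a : L}
    (ha : Algebra.TensorProduct.includeLeftSubRight k L a ∈ diagonalIdeal M) : a ∈ M := by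
  let q : L ⊗[k] L →ₐ[k] L ⊗[M] L := Algebra.TensorProduct.mapOfCompatibleSMul M k k L L
  have hq (b : L) : q (Algebra.TensorProduct.includeLeftSubRight k L b) =
      Algebra.TensorProduct.includeLeftSubRight M L b := by
    simp [q]
  have hle : diagonalIdeal M ≤ RingHom.ker q := by
    refine Ideal.span_le.2 ?_
    rintro _ ⟨b, hb, rfl⟩
    rw [SetLike.mem_coe, RingHom.mem_ker, hq]
    exact Algebra.TensorProduct.includeLeftSubRight_algebraMap_zero (⟨b, hb⟩ : M)
  have h0 := RingHom.mem_ker.1 (hle ha)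
  rw [hq] at h0
  obtain ⟨m, rfl⟩ := (Algebra.IsEffective.of_faithfullyFlat M L a).1 h0
  exact m.2

/-- Intermediate fields of a finitely generated field extension satisfy the ascending chain
condition. -/
lemma wellFoundedGT_intermediateField (k L : Type*) [Field k] [Field L] [Algebra k L]
    [Algebra.EssFiniteType k L] : WellFoundedGT (IntermediateField k L) := by
  have : IsNoetherianRing (L ⊗[k] L) := Algebra.EssFiniteType.isNoetherianRing L _
  have hmono : Monotone (diagonalIdeal (k := k) (L := L)) := fun M N h ↦
    Ideal.span_mono (Set.image_mono h)
  have hinj : Function.Injective (diagonalIdeal (k := k) (L := L)) := by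
    intro M N h
    refine le_antisymm (fun a ha ↦ ?_) (fun a ha ↦ ?_)
    · exact mem_of_mem_diagonalIdeal N (h ▸ Ideal.subset_span ⟨a, ha, rfl⟩)
    · exact mem_of_mem_diagonalIdeal M (h ▸ Ideal.subset_span ⟨a, ha, rfl⟩)
  exact (hmono.strictMono_of_injective hinj).wellFoundedGT

/-- An automorphism of a finitely generated field extension that maps an intermediate field `K`
into itself maps it onto itself. -/
lemma comap_eq_of_le_comap {k L : Type*} [Field k] [Field L] [Algebra k L]
    [Algebra.EssFiniteType k L] (σ : L →ₐ[k] L) (hσ : Function.Surjective σ)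
    (K : IntermediateField k L) (hK : K ≤ K.comap σ) : K.comap σ = K := by
  have := wellFoundedGT_intermediateField k L
  have hmono : Monotone (IntermediateField.comap σ) := (IntermediateField.gc_map_comap σ).monotone_u
  have hinj : Function.Injective (IntermediateField.comap σ) := by
    intro M N h
    ext x
    obtain ⟨y, rfl⟩ := hσ x
    exact SetLike.ext_iff.1 h y
  obtain ⟨n, hn⟩ := WellFoundedGT.monotone_chain_condition
    ⟨fun n ↦ (IntermediateField.comap σ)^[n] K, hmono.monotone_iterate_of_le_map hK⟩
  have h := hn (n + 1) n.le_succ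
  simp only [OrderHom.coe_mk, Function.iterate_succ_apply] at h
  exact (hinj.iterate n h).symm

/-- Let `R`, `S` be affine domains over `ℂ` and `ι : R → S` an injective `ℂ`-algebra
homomorphism.  Let `F : S → S` and `G : R → R` be `ℂ`-algebra homomorphisms with
`ι ∘ G = F ∘ ι`.  If `F` is injective and its induced endomorphism of `Frac(S)` is
bijective (`f` is birational), then `G` is injective and its induced endomorphism of
`Frac(R)` is bijective (`g` is birational). -/
theorem birational_descends
    {R S : Type*} [CommRing R] [IsDomain R] [CommRing S] [IsDomain S]
    [Algebra ℂ R] [Algebra ℂ S] [Algebra.FiniteType ℂ R] [Algebra.FiniteType ℂ S]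
    (ι : R →ₐ[ℂ] S) (hι : Function.Injective ι)
    (F : S →ₐ[ℂ] S) (G : R →ₐ[ℂ] R) (hcomm : ∀ r, ι (G r) = F (ι r))
    (hFinj : Function.Injective F)
    (hFbir : ∃ Φ : FractionRing S →+* FractionRing S,
      (∀ s, Φ (algebraMap S (FractionRing S) s) = algebraMap S (FractionRing S) (F s)) ∧
      Function.Bijective Φ) :
    Function.Injective G ∧
      ∃ Ψ : FractionRing R →+* FractionRing R,
        (∀ r, Ψ (algebraMap R (FractionRing R) r) = algebraMap R (FractionRing R) (G r)) ∧
        Function.Bijective Ψ := by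
  obtain ⟨Φ, hΦ, hΦbij⟩ := hFbir
  have hG : Function.Injective G := by
    intro a b h
    apply hι
    apply hFinj
    rw [← hcomm, ← hcomm, h]
  have hRK := IsFractionRing.injective R (FractionRing R)
  have hSL := IsFractionRing.injective S (FractionRing S)
  let σ : FractionRing S →ₐ[ℂ] FractionRing S :=
    { Φ with
      commutes' := fun c ↦ by
        change Φ _ = _
        rw [IsScalarTower.algebraMap_apply ℂ S (FractionRing S), hΦ, AlgHom.commutes] }
  let j₀ : R →ₐ[ℂ] FractionRing S := (IsScalarTower.toAlgHom ℂ S (FractionRing S)).comp ι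
  have hj₀ : Function.Injective j₀ := hSL.comp hι
  let j : FractionRing R →ₐ[ℂ] FractionRing S := IsFractionRing.liftAlgHom hj₀
  have hj (r : R) : j (algebraMap R _ r) = algebraMap S _ (ι r) :=
    IsFractionRing.lift_algebraMap (g := j₀.toRingHom) hj₀ r
  let g : R →+* FractionRing R := (algebraMap R (FractionRing R)).comp G.toRingHom
  have hg : Function.Injective g := hRK.comp hG
  let Ψ : FractionRing R →+* FractionRing R := IsFractionRing.lift hg
  have hΨ (r : R) : Ψ (algebraMap R _ r) = algebraMap R _ (G r) :=
    IsFractionRing.lift_algebraMap hg r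
  have hjΨ (x : FractionRing R) : j (Ψ x) = Φ (j x) := by
    have h : (j : FractionRing R →+* FractionRing S).comp Ψ =
        Φ.comp (j : FractionRing R →+* FractionRing S) := by
      apply IsLocalization.ringHom_ext (nonZeroDivisors R)
      ext r
      simp [hΨ, hj, hΦ, hcomm]
    exact RingHom.congr_fun h x
  have hK : j.fieldRange.comap σ = j.fieldRange := by
    refine comap_eq_of_le_comap σ hΦbij.2 _ ?_
    rintro _ ⟨x, rfl⟩
    exact ⟨Ψ x, hjΨ x⟩
  refine ⟨hG, Ψ, hΨ, Ψ.injective, fun y ↦ ?_⟩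
  obtain ⟨z, hz⟩ := hΦbij.2 (j y)
  have hzK : z ∈ j.fieldRange.comap σ := ⟨y, hz.symm⟩
  rw [hK] at hzK
  obtain ⟨x, rfl⟩ := hzK
  exact ⟨x, j.injective ((hjΨ x).trans hz)⟩
end

section
/- Let R and S be integral domains that are finitely generated ℂ-algebras with the same transcendence degree over ℂ, let ι : R → S be an injective ℂ-algebra homomorphism, and let F : S → S and G : R → R be ℂ-algebra homomorphisms with ι ∘ G = F ∘ ι. If G is injective and the induced endomorphism of the fraction field Frac(R) (extending G) is bijective, then F is injective and the induced endomorphism of the fraction field Frac(S) is bijective. -/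
/-!
Equality of the (finite) transcendence degrees forces `S` to be algebraic over `ι(R)`.

Injectivity of `F`: a nonzero element of `ker F` would divide a nonzero element `ι r`, because it
is algebraic over `R`; then `ι (G r) = F (ι r) = 0`, contradicting injectivity of `ι` and `G`.

Bijectivity on fraction fields: `L = Frac S` is an algebraic and finitely generated extension of
`K = Frac R`, hence a finite one. The map `Φ` induced by `F` is an injective map `L → L`,
semilinear over the automorphism `Ψ` of `K` induced by `G`. Hence it sends a `K`-basis of `L` to a
linearly independent family of the same cardinality, that is, to another basis, and it is
surjective (`surjective_of_semilinear`).
-/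

/-- The transcendence degree of a commutative `k`-algebra `A`: the supremum of the
cardinalities of algebraically independent subsets of `A` over `k`. -/
noncomputable def trdeg (k A : Type*) [CommRing k] [CommRing A] [Algebra k A] : Cardinal :=
  ⨆ s : {s : Set A // AlgebraicIndependent k ((↑) : s → A)}, Cardinal.mk s.1

universe u v

/-- Equality of transcendence degrees along an injection makes the extension algebraic. Finiteness
of the transcendence degree, supplied by finite generation, is what allows cancellation. -/
lemma isAlgebraic_of_trdeg_eq {R : Type u} {S : Type v} [CommRing R] [IsDomain R] [CommRing S]
    [IsDomain S] [Algebra ℂ R] [Algebra ℂ S] [Algebra R S] [IsScalarTower ℂ R S]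
    [FaithfulSMul R S] [Algebra.FiniteType ℂ R]
    (htr : Cardinal.lift.{v} (trdeg ℂ R) = Cardinal.lift.{u} (trdeg ℂ S)) :
    Algebra.IsAlgebraic R S := by
  have hadd := lift_trdeg_add_eq ℂ R S
  have htr' : Cardinal.lift.{v} (Algebra.trdeg ℂ R) = Cardinal.lift.{u} (Algebra.trdeg ℂ S) := htr
  rw [← htr'] at hadd
  have hfin : Cardinal.lift.{v} (Algebra.trdeg ℂ R) < Cardinal.aleph0 :=
    Cardinal.lift_lt_aleph0.mpr trdeg_lt_aleph0_of_finiteType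
  have hzero : Cardinal.lift.{u} (Algebra.trdeg R S) = 0 :=
    Cardinal.eq_of_add_eq_add_left (by rw [hadd, add_zero]) hfin
  exact trdeg_eq_zero_iff.mp (Cardinal.lift_eq_zero.mp hzero)

/-- An endomorphism of a finite extension `L / K` that restricts to a surjective endomorphism of
`K` is surjective: it carries a `K`-basis to a `K`-basis. -/
lemma surjective_of_semilinear {K L : Type*} [Field K] [Field L] [Algebra K L]
    [FiniteDimensional K L] (Ψ : K →+* K) (Φ : L →+* L) (hΨ : Function.Surjective Ψ)
    (hΦ : ∀ k, Φ (algebraMap K L k) = algebraMap K L (Ψ k)) : Function.Surjective Φ := by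
  let b := Module.finBasis K L
  have hli : LinearIndependent K (Φ.toAddMonoidHom ∘ b) :=
    b.linearIndependent.map_of_surjective_injective Ψ Φ.toAddMonoidHom hΨ
      (fun m hm ↦ (map_eq_zero Φ).mp hm)
      (fun r m ↦ by simp [Algebra.smul_def, hΦ])
  have hspan := hli.span_eq_top_of_card_eq_finrank' (by simp)
  intro y
  have hy : y ∈ Submodule.span K (Set.range (Φ.toAddMonoidHom ∘ b)) := hspan ▸ Submodule.mem_top
  induction hy using Submodule.span_induction with
  | mem x hx => obtain ⟨i, rfl⟩ := hx; exact ⟨b i, rfl⟩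
  | zero => exact ⟨0, map_zero Φ⟩
  | add x y _ _ hx hy =>
    obtain ⟨x, rfl⟩ := hx
    obtain ⟨y, rfl⟩ := hy
    exact ⟨x + y, map_add Φ x y⟩
  | smul a x _ hx =>
    obtain ⟨x, rfl⟩ := hx
    obtain ⟨a, rfl⟩ := hΨ a
    exact ⟨a • x, by simp [Algebra.smul_def, hΦ]⟩

/-- Let `R`, `S` be affine domains over `ℂ` with the same transcendence degree over `ℂ`
and `ι : R → S` an injective `ℂ`-algebra homomorphism.  Let `F : S → S` and `G : R → R`
be `ℂ`-algebra homomorphisms with `ι ∘ G = F ∘ ι`.  If `G` is injective and its induced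
endomorphism of `Frac(R)` is bijective (`g` is birational), then `F` is injective and
its induced endomorphism of `Frac(S)` is bijective (`f` is birational). -/
theorem birational_ascends
    {R : Type u} {S : Type v} [CommRing R] [IsDomain R] [CommRing S] [IsDomain S]
    [Algebra ℂ R] [Algebra ℂ S] [Algebra.FiniteType ℂ R] [Algebra.FiniteType ℂ S]
    (htr : Cardinal.lift.{v} (trdeg ℂ R) = Cardinal.lift.{u} (trdeg ℂ S))
    (ι : R →ₐ[ℂ] S) (hι : Function.Injective ι)
    (F : S →ₐ[ℂ] S) (G : R →ₐ[ℂ] R) (hcomm : ∀ r, ι (G r) = F (ι r))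
    (hGinj : Function.Injective G)
    (hGbir : ∃ Ψ : FractionRing R →+* FractionRing R,
      (∀ r, Ψ (algebraMap R (FractionRing R) r) = algebraMap R (FractionRing R) (G r)) ∧
      Function.Bijective Ψ) :
    Function.Injective F ∧
      ∃ Φ : FractionRing S →+* FractionRing S,
        (∀ s, Φ (algebraMap S (FractionRing S) s) = algebraMap S (FractionRing S) (F s)) ∧
        Function.Bijective Φ := by
  let : Algebra R S := ι.toRingHom.toAlgebra
  have hmap : ∀ r, algebraMap R S r = ι r := fun _ ↦ rfl
  have : IsScalarTower ℂ R S := IsScalarTower.of_algebraMap_eq fun c ↦ (ι.commutes c).symm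
  have : FaithfulSMul R S := (faithfulSMul_iff_algebraMap_injective R S).mpr hι
  have : Algebra.IsAlgebraic R S := isAlgebraic_of_trdeg_eq htr
  have hF : Function.Injective F := by
    rw [injective_iff_map_eq_zero]
    intro s hs
    by_contra hne
    obtain ⟨r, hr, t, ht⟩ := (Algebra.IsAlgebraic.isAlgebraic (R := R) s).exists_nonzero_dvd
      (mem_nonZeroDivisors_of_ne_zero hne)
    have h0 : ι (G r) = 0 := by rw [hcomm, ← hmap, ht, map_mul, hs, zero_mul]
    rw [map_eq_zero_iff ι hι, map_eq_zero_iff G hGinj] at h0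
    exact hr h0
  refine ⟨hF, ?_⟩
  obtain ⟨Ψ, hΨ, hΨbij⟩ := hGbir
  let : Algebra (FractionRing R) (FractionRing S) := FractionRing.liftAlgebra R (FractionRing S)
  have : IsScalarTower R (FractionRing R) (FractionRing S) :=
    FractionRing.isScalarTower_liftAlgebra R (FractionRing S)
  have : Algebra.IsAlgebraic R (FractionRing S) :=
    (IsFractionRing.isAlgebraic_iff' R S (FractionRing S)).mp inferInstance
  have : Algebra.IsAlgebraic (FractionRing R) (FractionRing S) :=
    (IsFractionRing.comap_isAlgebraic_iff (A := R)).mp inferInstance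
  have : Algebra.FiniteType R S := Algebra.FiniteType.of_restrictScalars_finiteType ℂ R S
  have : Algebra.EssFiniteType (FractionRing R) (FractionRing S) :=
    Algebra.EssFiniteType.of_comp R (FractionRing R) (FractionRing S)
  have : FiniteDimensional (FractionRing R) (FractionRing S) :=
    Algebra.finite_of_essFiniteType_of_isAlgebraic
  let Φ : FractionRing S →+* FractionRing S := IsFractionRing.map (j := F.toRingHom) hF
  have hΦ : ∀ s, Φ (algebraMap S (FractionRing S) s) = algebraMap S (FractionRing S) (F s) :=
    fun s ↦ IsLocalization.map_eq _ s
  refine ⟨Φ, hΦ, Φ.injective, surjective_of_semilinear Ψ Φ hΨbij.2 ?_⟩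
  -- Both sides are ring homomorphisms out of `Frac R`, so it suffices to compare them on `R`.
  have key : Φ.comp (algebraMap (FractionRing R) (FractionRing S)) =
      (algebraMap (FractionRing R) (FractionRing S)).comp Ψ := by
    refine IsLocalization.ringHom_ext (nonZeroDivisors R) (RingHom.ext fun r ↦ ?_)
    simp only [RingHom.comp_apply, hΨ, ← IsScalarTower.algebraMap_apply]
    rw [IsScalarTower.algebraMap_apply R S (FractionRing S),
      IsScalarTower.algebraMap_apply R S (FractionRing S), hΦ, hmap, hmap, hcomm]
  exact fun k ↦ RingHom.congr_fun key k
end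

section
/- Let R and S be integral domains that are finitely generated ℂ-algebras with the same transcendence degree over ℂ, let ι : R → S be an injective ℂ-algebra homomorphism, and let F : S → S and G : R → R be ℂ-algebra homomorphisms with ι ∘ G = F ∘ ι. Then F is injective with the induced endomorphism of Frac(S) bijective if and only if G is injective with the induced endomorphism of Frac(R) bijective (i.e., f is birational if and only if g is birational). -/
universe u v

/-- The degree `[L : f(K)]` of a field homomorphism `f : K → L`, with value `0` when the extension
is infinite. Working with homomorphisms rather than `Algebra` instances accommodates several
embeddings between the same two fields. -/
noncomputable def fieldHomDegree {K L : Type*} [Field K] [Field L] (f : K →+* L) : ℕ :=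
  letI := f.toAlgebra
  Module.finrank K L

lemma fieldHomDegree_comp {K L M : Type*} [Field K] [Field L] [Field M]
    (f : K →+* L) (g : L →+* M) :
    fieldHomDegree (g.comp f) = fieldHomDegree f * fieldHomDegree g := by
  let _ := f.toAlgebra
  let _ := g.toAlgebra
  let _ := (g.comp f).toAlgebra
  have : IsScalarTower K L M := IsScalarTower.of_algebraMap_eq fun _ => rfl
  exact (Module.finrank_mul_finrank K L M).symm

lemma fieldHomDegree_eq_one_iff {K L : Type*} [Field K] [Field L] (f : K →+* L) :
    fieldHomDegree f = 1 ↔ Function.Bijective f := by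
  let _ := f.toAlgebra
  change Module.finrank K L = 1 ↔ Function.Bijective (algebraMap K L)
  rw [← Subalgebra.bot_eq_top_iff_finrank_eq_one, Algebra.bijective_algebraMap_iff, eq_comm]

lemma bijective_iff_of_comm {K L : Type*} [Field K] [Field L] (j : K →+* L)
    (hj : fieldHomDegree j ≠ 0) (ψ : K →+* K) (φ : L →+* L) (h : j.comp ψ = φ.comp j) :
    Function.Bijective φ ↔ Function.Bijective ψ := by
  rw [← fieldHomDegree_eq_one_iff, ← fieldHomDegree_eq_one_iff]
  have key := congrArg fieldHomDegree h
  rw [fieldHomDegree_comp, fieldHomDegree_comp, mul_comm] at key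
  rw [Nat.eq_of_mul_eq_mul_left (Nat.pos_of_ne_zero hj) key]

/-- The field extension `Frac R ⊆ Frac S` is algebraic, and finitely generated because `S` is a
finitely generated `ℂ`-algebra, hence finite. -/
lemma degree_fractionMap_ne_zero
    {R : Type u} {S : Type v} [CommRing R] [IsDomain R] [CommRing S] [IsDomain S]
    [Algebra ℂ R] [Algebra ℂ S] [Algebra R S] [IsScalarTower ℂ R S] [FaithfulSMul R S]
    [Algebra.FiniteType ℂ S] [Algebra.IsAlgebraic R S] :
    fieldHomDegree (IsFractionRing.map (K := FractionRing R) (L := FractionRing S)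
      (FaithfulSMul.algebraMap_injective R S)) ≠ 0 := by
  let _ := (IsFractionRing.map (K := FractionRing R) (L := FractionRing S)
      (FaithfulSMul.algebraMap_injective R S)).toAlgebra
  have : IsScalarTower R (FractionRing R) (FractionRing S) :=
    IsScalarTower.of_algebraMap_eq fun r => by
      rw [IsScalarTower.algebraMap_apply R S (FractionRing S)]
      exact (IsLocalization.map_eq (S := FractionRing R) (Q := FractionRing S)
        (nonZeroDivisors_le_comap_nonZeroDivisors_of_injective _
          (FaithfulSMul.algebraMap_injective R S)) r).symm
  have : Algebra.EssFiniteType S (FractionRing S) := .of_isLocalization _ (nonZeroDivisors S)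
  have : Algebra.EssFiniteType R S := .of_comp ℂ R S
  have : Algebra.EssFiniteType R (FractionRing S) := .comp R S _
  have : Algebra.EssFiniteType (FractionRing R) (FractionRing S) := .of_comp R _ _
  have halg : Algebra.IsAlgebraic R (FractionRing S) :=
    (IsFractionRing.isAlgebraic_iff' R S (FractionRing S)).1 inferInstance
  have : Algebra.IsAlgebraic (FractionRing R) (FractionRing S) :=
    ⟨fun x => (IsFractionRing.isAlgebraic_iff R (FractionRing R) (FractionRing S)).1
      (halg.isAlgebraic x)⟩
  have : Module.Finite (FractionRing R) (FractionRing S) :=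
    Algebra.finite_of_essFiniteType_of_isAlgebraic
  exact Module.finrank_pos.ne'

lemma ringHom_eq_fractionMap {A : Type*} [CommRing A] [IsDomain A] (E : A →+* A)
    (hE : Function.Injective E) (Θ : FractionRing A →+* FractionRing A)
    (hΘ : ∀ a, Θ (algebraMap A (FractionRing A) a) = algebraMap A (FractionRing A) (E a)) :
    Θ = IsFractionRing.map hE := by
  refine IsLocalization.ringHom_ext (nonZeroDivisors A) (RingHom.ext fun a => ?_)
  simp only [RingHom.comp_apply, hΘ]
  exact (IsLocalization.map_eq _ a).symm

/-- For injective `E`, the endomorphism of `Frac A` extending `E` exists and is unique, so the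
existential over extensions can be replaced by the explicit map `IsFractionRing.map hE`. -/
lemma exists_bijective_iff {A : Type*} [CommRing A] [IsDomain A] (E : A →+* A)
    (hE : Function.Injective E) :
    (∃ Θ : FractionRing A →+* FractionRing A,
      (∀ a, Θ (algebraMap A (FractionRing A) a) = algebraMap A (FractionRing A) (E a)) ∧
      Function.Bijective Θ) ↔
    Function.Bijective
      (IsFractionRing.map (K := FractionRing A) (L := FractionRing A) hE) := by
  constructor
  · rintro ⟨Θ, hΘ, hb⟩
    rwa [← ringHom_eq_fractionMap E hE Θ hΘ]
  · exact fun hb => ⟨_, fun a => IsLocalization.map_eq _ a, hb⟩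

/-- Let `R`, `S` be affine domains over `ℂ` with the same transcendence degree over `ℂ`
and `ι : R → S` an injective `ℂ`-algebra homomorphism.  Let `F : S → S` and `G : R → R`
be `ℂ`-algebra homomorphisms with `ι ∘ G = F ∘ ι`.  Then `f` is birational iff `g` is
birational, i.e. `F` is injective with bijective induced endomorphism of `Frac(S)` iff
`G` is injective with bijective induced endomorphism of `Frac(R)`. -/
theorem birational_iff
    {R : Type u} {S : Type v} [CommRing R] [IsDomain R] [CommRing S] [IsDomain S]
    [Algebra ℂ R] [Algebra ℂ S] [Algebra.FiniteType ℂ R] [Algebra.FiniteType ℂ S]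
    (htr : Cardinal.lift.{v} (trdeg ℂ R) = Cardinal.lift.{u} (trdeg ℂ S))
    (ι : R →ₐ[ℂ] S) (hι : Function.Injective ι)
    (F : S →ₐ[ℂ] S) (G : R →ₐ[ℂ] R) (hcomm : ∀ r, ι (G r) = F (ι r)) :
    (Function.Injective F ∧
      ∃ Φ : FractionRing S →+* FractionRing S,
        (∀ s, Φ (algebraMap S (FractionRing S) s) = algebraMap S (FractionRing S) (F s)) ∧
        Function.Bijective Φ) ↔
    (Function.Injective G ∧
      ∃ Ψ : FractionRing R →+* FractionRing R,
        (∀ r, Ψ (algebraMap R (FractionRing R) r) = algebraMap R (FractionRing R) (G r)) ∧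
        Function.Bijective Ψ) := by
  let _ := ι.toRingHom.toAlgebra
  have : IsScalarTower ℂ R S := IsScalarTower.of_algebraMap_eq fun c => (ι.commutes c).symm
  have : FaithfulSMul R S := (faithfulSMul_iff_algebraMap_injective R S).2 hι
  have : Algebra.IsAlgebraic R S := isAlgebraic_of_trdeg_eq htr
  have hinj : Function.Injective F ↔ Function.Injective G := by
    constructor
    · intro hF a b hab
      exact hι (hF (by rw [← hcomm, ← hcomm, hab]))
    · intro hG
      rw [injective_iff_map_eq_zero]
      intro x hx
      by_contra hx0
      -- The kernel of `F` contracts to zero in `R`, contradicting algebraicity of `x ≠ 0`.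
      refine Ideal.comap_ne_bot_of_algebraic_mem (R := R) (I := RingHom.ker F) hx0 hx
        (Algebra.IsAlgebraic.isAlgebraic x) (eq_bot_iff.2 ?_)
      intro r hr
      have hr' : F (ι r) = 0 := hr
      rw [← hcomm] at hr'
      exact (injective_iff_map_eq_zero G).1 hG r ((injective_iff_map_eq_zero ι).1 hι _ hr')
  rw [← hinj]
  refine and_congr_right fun hF => ?_
  have hG := hinj.1 hF
  refine (exists_bijective_iff F.toRingHom hF).trans
    (Iff.trans ?_ (exists_bijective_iff G.toRingHom hG).symm)
  refine bijective_iff_of_comm _ (degree_fractionMap_ne_zero (R := R) (S := S)) _ _ ?_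
  refine IsLocalization.ringHom_ext (nonZeroDivisors R) (RingHom.ext fun r => ?_)
  simp only [RingHom.comp_apply, IsFractionRing.map, IsLocalization.map_eq]
  exact congrArg _ (hcomm r)
end

section
/- Let R and S be integral domains that are finitely generated ℂ-algebras, let ι : R → S be an injective ℂ-algebra homomorphism, assume R is integrally closed in its fraction field (so Y = Spec R is normal), let F : S → S be a bijective ℂ-algebra homomorphism, and let G : R → R be a ℂ-algebra homomorphism with ι ∘ G = F ∘ ι. Then there exists a nonempty (hence dense) open subscheme U of Spec R such that the morphism Spec(G) : Spec R → Spec R restricts to an automorphism of U; that is, there is an isomorphism of schemes e : U ≅ U such that the inclusion of U composed with Spec(G) equals e followed by the inclusion of U. -/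
/-!
Write `f : X → Y` for `Spec ι`, `φ` for the automorphism `Spec F` of `X = Spec S`, and `g` for
`Spec G`, so that `g ∘ f = f ∘ φ`. Let `K = Frac R ⊆ L = Frac S`.

*`g` is birational* (`exists_frac_preimage`). The automorphism of `L` induced by `F` maps `K` into
itself, so the subfields `F⁻ⁿ(K)` form an ascending chain in `L`. Since `L` is finitely generated
over `ℂ`, the ring `L ⊗ L` is Noetherian and such chains stabilize; hence `F(K) = K`.

*An invariant open subset of `X`.* Call `x ∈ X` good if `S_x ∩ K = R_{f x}`. If `φ x` is
good, then `F` maps `R_{g (f x)} = S_{φ x} ∩ K` isomorphically onto `S_x ∩ K` because `F(K) = K`.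
This isomorphism factors as `R_{g (f x)} → R_{f x} ⊆ S_x ∩ K`, so `x` is good and
`R_{g (f x)} → R_{f x}` is an isomorphism. The interior `X''` of the good
locus thus satisfies `φ⁻¹ X'' ⊆ X''`, and equality holds because `X` is Noetherian. The set `X''`
is nonempty (`exists_descend`): adjoining one generator of `S` at a time, a relation `a t = b s`
with `a, b ∈ R` descends from `S` to `R`, away from the zeros of one element `u ≠ 0`.

*Descent to `Y`.* The set `C = f(X'')` satisfies `g(C) = C` and has nonempty interior by
Chevalley's theorem. As `R` is of finite type, `g` is an isomorphism over an open neighbourhood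
`T` of `g(C)` in `Y`. Hence `U = interior C` satisfies `g⁻¹ U = U`, and `g` restricts to an
automorphism of `U`.
-/

open AlgebraicGeometry CategoryTheory

universe u

/-! ### Birationality of `G` -/

open TensorProduct in
/-- Ascending chains of intermediate fields of a finitely generated extension `L / k` stabilize.
A subfield `M` is determined by the ideal of the Noetherian ring `L ⊗[k] L` generated by all
`m ⊗ 1 - 1 ⊗ m` with `m ∈ M`, i.e. the kernel of `L ⊗[k] L → L ⊗[M] L`. -/
theorem intermediateField_chain_stabilizes {k L : Type*} [Field k] [Field L] [Algebra k L]
    [Algebra.EssFiniteType k L] (M : ℕ →o IntermediateField k L) :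
    ∃ n, M n = M (n + 1) := by
  have hN : IsNoetherianRing (L ⊗[k] L) := Algebra.EssFiniteType.isNoetherianRing L _
  let I : ℕ →o Ideal (L ⊗[k] L) :=
    ⟨fun n ↦ Ideal.span ((fun m : L ↦ m ⊗ₜ[k] (1 : L) - (1 : L) ⊗ₜ[k] m) '' (M n : Set L)),
      fun i j hij ↦ Ideal.span_mono (Set.image_mono (M.monotone hij))⟩
  obtain ⟨n, hn⟩ := monotone_stabilizes_iff_noetherian.mpr hN I
  refine ⟨n, le_antisymm (M.monotone n.le_succ) fun z hz ↦ ?_⟩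
  have hzI : z ⊗ₜ[k] (1 : L) - (1 : L) ⊗ₜ[k] z ∈ I n := by
    rw [hn (n + 1) n.le_succ]
    exact Ideal.subset_span ⟨z, hz, rfl⟩
  obtain ⟨l, hl⟩ := LinearMap.exists_leftInverse_of_injective (Algebra.linearMap (M n) L)
    (LinearMap.ker_eq_bot.mpr (algebraMap (M n) L).injective)
  have hl1 : l 1 = 1 := by simpa using LinearMap.congr_fun hl 1
  have hlm : ∀ m ∈ M n, ∀ y, ((l (m * y) : M n) : L) = m * l y := fun m hm y ↦ by
    simpa [Algebra.smul_def] using congrArg (Subtype.val) (l.map_smul ⟨m, hm⟩ y)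
  -- `Φ (x ⊗ y) = l y * x` kills the ideal `I n`, and its value at `z ⊗ 1 - 1 ⊗ z` is `z - l z`.
  let Φ : L ⊗[k] L →ₗ[k] L := LinearMap.mul' k L ∘ₗ
    TensorProduct.map LinearMap.id ((M n).val.toLinearMap ∘ₗ l.restrictScalars k)
  have key : ∀ e ∈ I n, ∀ w, Φ (w * e) = 0 := by
    intro e he
    refine Submodule.span_induction ?_ ?_ ?_ ?_ he
    · rintro _ ⟨m, hm, rfl⟩ w
      induction w with
      | zero => simp
      | tmul x y =>
        simp [Φ, mul_sub, mul_comm y m, hlm m hm]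
        ring
      | add a b ha hb => rw [add_mul, map_add, ha, hb, add_zero]
    · simp
    · intro a b _ _ ha hb w
      rw [mul_add, map_add, ha, hb, add_zero]
    · intro c a _ ha w
      rw [smul_eq_mul, ← mul_assoc, ha]
  have h := key _ hzI 1
  simp [Φ, hl1, sub_eq_zero] at h
  rw [h]
  exact (l z).2

/-- The map induced by `G` on the fraction field of `R` is surjective: every `a / b` equals
`G a' / G b'` for some `a', b'`. -/
theorem exists_frac_preimage
    {R S : Type*} [CommRing R] [IsDomain R] [CommRing S] [IsDomain S]
    [Algebra ℂ R] [Algebra ℂ S] [Algebra.FiniteType ℂ S]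
    (ι : R →ₐ[ℂ] S) (hι : Function.Injective ι)
    (F : S →ₐ[ℂ] S) (hF : Function.Bijective F)
    (G : R →ₐ[ℂ] R) (hcomm : ∀ r, ι (G r) = F (ι r)) (a b : R) (hb : b ≠ 0) :
    ∃ a' b' : R, b' ≠ 0 ∧ a * G b' = b * G a' := by
  let K := FractionRing R
  let L := FractionRing S
  have : Algebra.EssFiniteType S L := .of_isLocalization _ (nonZeroDivisors S)
  have : Algebra.EssFiniteType ℂ L := .comp ℂ S L
  let j : S →ₐ[ℂ] L := IsScalarTower.toAlgHom ℂ S L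
  have hj : Function.Injective j := IsFractionRing.injective S L
  let σ : L ≃ₐ[ℂ] L := (IsFractionRing.fieldEquivOfAlgEquiv ℂ L L (AlgEquiv.ofBijective F hF))
  have hσ : ∀ s, σ (j s) = j (F s) := fun s ↦
    IsFractionRing.fieldEquivOfAlgEquiv_algebraMap ℂ L L (AlgEquiv.ofBijective F hF) s
  let κ : K →ₐ[ℂ] L := IsFractionRing.liftAlgHom (g := j.comp ι) (hj.comp hι)
  have hκ : ∀ r : R, κ (algebraMap R K r) = j (ι r) := fun r ↦
    IsFractionRing.lift_algebraMap (g := ((j.comp ι : R →ₐ[ℂ] L) : R →+* L)) (hj.comp hι) r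
  -- `M₀` is the image of `Frac R` in `L`, and `M n` below is its preimage under `σ ^ n`.
  let M₀ : IntermediateField ℂ L := κ.fieldRange
  have hM₀ : ∀ z ∈ M₀, ∃ a b : R, b ≠ 0 ∧ z * j (ι b) = j (ι a) := by
    rintro _ ⟨z, rfl⟩
    obtain ⟨a, b, hb, rfl⟩ := IsFractionRing.div_surjective (A := R) z
    have hb := nonZeroDivisors.ne_zero hb
    refine ⟨a, b, hb, ?_⟩
    change κ _ * _ = _
    rw [← hκ, ← hκ, ← map_mul, div_mul_cancel₀]
    simpa using hb
  have hM₀' : ∀ a b : R, j (ι a) / j (ι b) ∈ M₀ := fun a b ↦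
    ⟨algebraMap R K a / algebraMap R K b, by
      change κ _ = _
      rw [map_div₀, hκ, hκ]⟩
  let τ : IntermediateField ℂ L → IntermediateField ℂ L := IntermediateField.map σ.symm.toAlgHom
  have hτi : Function.Injective τ := IntermediateField.map_injective _
  have hτm : Monotone τ := fun _ _ h ↦ IntermediateField.map_mono _ h
  have h0 : M₀ ≤ τ M₀ := by
    intro z hz
    obtain ⟨a, b, hb, h⟩ := hM₀ z hz
    have hb' : j (ι b) ≠ 0 := by simpa [map_eq_zero_iff _ hj, map_eq_zero_iff _ hι] using hb
    refine ⟨σ z, ?_, by simp⟩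
    rw [eq_div_of_mul_eq hb' h, map_div₀, hσ, hσ, ← hcomm, ← hcomm]
    exact hM₀' _ _
  let M : ℕ →o IntermediateField ℂ L := ⟨fun n ↦ τ^[n] M₀,
    monotone_nat_of_le_succ fun n ↦ by
      rw [Function.iterate_succ_apply]
      exact hτm.iterate n h0⟩
  obtain ⟨n, hn⟩ := intermediateField_chain_stabilizes M
  have h1 : M₀ = τ M₀ := by
    apply hτi.iterate n
    rw [← Function.iterate_succ_apply]
    exact hn
  have hz : σ.symm (j (ι a) / j (ι b)) ∈ M₀ := by
    rw [h1]
    exact ⟨_, hM₀' a b, rfl⟩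
  obtain ⟨a', b', hb', h⟩ := hM₀ _ hz
  refine ⟨a', b', hb', hι (hj ?_)⟩
  have h2 := congrArg σ h
  have hb2 : j (ι b) ≠ 0 := by simpa [map_eq_zero_iff _ hj, map_eq_zero_iff _ hι] using hb
  rw [map_mul, AlgEquiv.apply_symm_apply, hσ, hσ, ← hcomm, ← hcomm] at h2
  rw [div_mul_eq_mul_div, div_eq_iff hb2, mul_comm _ (j (ι b))] at h2
  simpa using h2
/-! ### The generic point of `Spec S` is an interior point of the good locus -/

open Polynomial in
/-- Pseudo-division by a polynomial `m` vanishing at `w`. -/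
theorem exists_pseudo_remainder {A B : Type*} [CommRing A] [IsDomain A] [CommRing B] [Algebra A B]
    (w : B) (m : A[X]) (hm0 : m ≠ 0) (hm : aeval w m = 0) (p : A[X]) :
    ∃ (N : ℕ) (p' : A[X]), p'.degree < m.degree ∧ aeval w p' = m.leadingCoeff ^ N • aeval w p := by
  induction hk : p.degree using WellFoundedLT.induction generalizing p with
  | ind d ih =>
    by_cases hlt : p.degree < m.degree
    · exact ⟨0, p, hlt, by simp⟩
    · have hp0 : p ≠ 0 := by
        rintro rfl
        exact hlt (by simpa [bot_lt_iff_ne_bot] using hm0)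
      have hlc : m.leadingCoeff ≠ 0 := leadingCoeff_ne_zero.mpr hm0
      have hlcp : p.leadingCoeff ≠ 0 := leadingCoeff_ne_zero.mpr hp0
      have hle : m.natDegree ≤ p.natDegree := natDegree_le_natDegree (not_lt.mp hlt)
      have hdeg : (C m.leadingCoeff * p).degree = p.degree := degree_C_mul hlc
      have hlt' : (C m.leadingCoeff * p -
          C p.leadingCoeff * X ^ (p.natDegree - m.natDegree) * m).degree < p.degree := by
        rw [← hdeg]
        apply degree_sub_lt_left
        · rw [hdeg, degree_mul, degree_C_mul_X_pow _ hlcp, degree_eq_natDegree hm0,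
            degree_eq_natDegree hp0, ← Nat.cast_add, Nat.sub_add_cancel hle]
        · simp [hlc, hp0]
        · simp only [leadingCoeff_mul, leadingCoeff_C, leadingCoeff_X_pow, mul_one]
          exact mul_comm _ _
      obtain ⟨N, p', h1, h2⟩ := ih _ (hk ▸ hlt') _ rfl
      refine ⟨N + 1, p', h1, ?_⟩
      rw [h2]
      simp [hm, Algebra.smul_def, pow_succ, mul_assoc]

open Polynomial in
/-- Relations `a t = b s` descend from `A[w]` to `A`, away from the zeros of some `v ≠ 0`: if `w`
is transcendental, compare coefficients; otherwise take `v` to be the leading coefficient of a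
polynomial of minimal degree vanishing at `w`, and compare coefficients of pseudo-remainders. -/
theorem exists_descend_one {A B : Type*} [CommRing A] [IsDomain A] [CommRing B] [IsDomain B]
    [Algebra A B] (w : B) :
    ∃ v : A, v ≠ 0 ∧ ∀ x : Ideal B, x.IsPrime → algebraMap A B v ∉ x → ∀ (a b : A) (p q : A[X]),
      aeval w p ∉ x → algebraMap A B a * aeval w p = algebraMap A B b * aeval w q →
      ∃ t s : A, algebraMap A B t ∉ x ∧ a * t = b * s := by
  -- If `C a * p = C b * q`, then some coefficient of `p` outside `x` serves as `t`.
  have coeffs : ∀ x : Ideal B, ∀ (a b : A) (p q : A[X]), aeval w p ∉ x → C a * p = C b * q →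
      ∃ t s : A, algebraMap A B t ∉ x ∧ a * t = b * s := by
    intro x a b p q hp h
    by_contra! hcon
    refine hp ?_
    rw [aeval_eq_sum_range]
    refine x.sum_mem fun i _ ↦ ?_
    rw [Algebra.smul_def]
    refine x.mul_mem_right _ ?_
    by_contra hi
    exact hcon _ (q.coeff i) hi (by simpa using congrArg (fun r ↦ r.coeff i) h)
  by_cases hw : Transcendental A w
  · refine ⟨1, one_ne_zero, fun x _ _ a b p q hp h ↦ coeffs x a b p q hp ?_⟩
    exact transcendental_iff_injective.mp hw (by simpa using h)
  · have hex : ∃ m : A[X], m ≠ 0 ∧ aeval w m = 0 := by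
      simpa [Transcendental, IsAlgebraic] using hw
    obtain ⟨m, ⟨hm0, hm⟩, hmin⟩ :=
      WellFounded.has_min (wellFounded_lt.onFun (r := (· < ·)) (f := (degree : A[X] → _)))
      {m : A[X] | m ≠ 0 ∧ aeval w m = 0} hex
    have hmin' : ∀ r : A[X], aeval w r = 0 → r.degree < m.degree → r = 0 := by
      intro r hr hd
      by_contra h0
      exact hmin r ⟨h0, hr⟩ hd
    refine ⟨m.leadingCoeff, leadingCoeff_ne_zero.mpr hm0, fun x hx hv a b p q hp h ↦ ?_⟩
    obtain ⟨N, p', hp'd, hp'⟩ := exists_pseudo_remainder w m hm0 hm p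
    obtain ⟨N', q', hq'd, hq'⟩ := exists_pseudo_remainder w m hm0 hm q
    refine coeffs x a b (C (m.leadingCoeff ^ N') * p') (C (m.leadingCoeff ^ N) * q') ?_ ?_
    · simp only [map_mul, map_pow, aeval_C, hp', Algebra.smul_def]
      exact hx.mul_notMem (fun h ↦ hv (hx.mem_of_pow_mem _ h))
        (hx.mul_notMem (fun h ↦ hv (hx.mem_of_pow_mem _ h)) hp)
    · rw [← sub_eq_zero]
      apply hmin'
      · simp only [map_sub, map_mul, map_pow, aeval_C, hp', hq', Algebra.smul_def]
        linear_combination (algebraMap A B m.leadingCoeff) ^ N' *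
          (algebraMap A B m.leadingCoeff) ^ N * h
      · refine (degree_sub_le _ _).trans_lt (max_lt ?_ ?_) <;>
        rw [← mul_assoc, ← C_mul, ← smul_eq_C_mul] <;>
        exact (degree_smul_le _ _).trans_lt ‹_›

/-- A substitute for generic flatness: there is `u ≠ 0` in `S` such that for every prime `x` of `S`
not containing `u`, a fraction of `R` lying in `S_x` already lies in the localization of `R` at
the contraction of `x`. -/
theorem exists_descend {R S : Type*} [CommRing R] [IsDomain R] [CommRing S] [IsDomain S]
    [Algebra R S] [Algebra.FiniteType R S] (hRS : Function.Injective (algebraMap R S)) :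
    ∃ u : S, u ≠ 0 ∧ ∀ x : Ideal S, x.IsPrime → u ∉ x → ∀ (a b : R) (t s : S), t ∉ x →
      algebraMap R S a * t = algebraMap R S b * s →
      ∃ d c : R, algebraMap R S d ∉ x ∧ a * d = b * c := by
  classical
  suffices H : ∀ T : Finset S, ∃ u : S, u ≠ 0 ∧ ∀ x : Ideal S, x.IsPrime → u ∉ x →
      ∀ (a b : R), ∀ t ∈ Algebra.adjoin R (T : Set S), ∀ s ∈ Algebra.adjoin R (T : Set S), t ∉ x →
      algebraMap R S a * t = algebraMap R S b * s →
      ∃ d c : R, algebraMap R S d ∉ x ∧ a * d = b * c by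
    obtain ⟨T, hT⟩ := Algebra.FiniteType.out (R := R) (A := S)
    obtain ⟨u, hu, h⟩ := H T
    exact ⟨u, hu, fun x hx hux a b t s ↦ h x hx hux a b t (by simp [hT]) s (by simp [hT])⟩
  intro T
  induction T using Finset.induction_on with
  | empty =>
    refine ⟨1, one_ne_zero, fun x _ _ a b t ht s hs htx h ↦ ?_⟩
    simp only [Finset.coe_empty, Algebra.adjoin_empty, Algebra.mem_bot] at ht hs
    obtain ⟨t, rfl⟩ := ht
    obtain ⟨s, rfl⟩ := hs
    exact ⟨t, s, htx, hRS (by simpa using h)⟩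
  | insert w T _ ih =>
    obtain ⟨u, hu, ih⟩ := ih
    let A := Algebra.adjoin R (T : Set S)
    obtain ⟨v, hv, hstep⟩ := exists_descend_one (A := A) w
    have hpoly : ∀ t ∈ Algebra.adjoin R ((insert w T : Finset S) : Set S),
        ∃ p : Polynomial A, Polynomial.aeval w p = t := by
      intro t ht
      rw [Finset.coe_insert, Set.insert_eq, Set.union_comm,
        Algebra.adjoin_union_eq_adjoin_adjoin] at ht
      rw [Subalgebra.mem_restrictScalars, Algebra.adjoin_singleton_eq_range_aeval] at ht
      exact ht
    refine ⟨u * v, mul_ne_zero hu (by simpa using hv), fun x hx hux a b t ht s hs htx h ↦ ?_⟩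
    obtain ⟨p, rfl⟩ := hpoly t ht
    obtain ⟨q, rfl⟩ := hpoly s hs
    obtain ⟨t', s', ht', h'⟩ := hstep x hx (fun h ↦ hux (x.mul_mem_left _ h))
      (algebraMap R A a) (algebraMap R A b) p q htx h
    exact ih x hx (fun h ↦ hux (x.mul_mem_right _ h)) a b t' t'.2 s' s'.2 ht'
      (congrArg Subtype.val h')

/-! ### Topology of the spectra -/

/-- An open set with `h⁻¹ O ⊆ O` gives an ascending chain `O ⊆ h(O) ⊆ h²(O) ⊆ ⋯`, which is
stationary. -/
theorem preimage_eq_of_noetherian {X : Type*} [TopologicalSpace X]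
    [TopologicalSpace.NoetherianSpace X] (h : X ≃ₜ X) (O : Set X) (hO : IsOpen O)
    (hsub : h ⁻¹' O ⊆ O) : h ⁻¹' O = O := by
  let τ : TopologicalSpace.Opens X → TopologicalSpace.Opens X :=
    fun V ↦ ⟨h.symm ⁻¹' V, V.2.preimage h.symm.continuous⟩
  have hτm : Monotone τ := fun _ _ hle x hx ↦ hle hx
  have hτi : Function.Injective τ := fun V W hVW ↦ by
    ext x
    have := congrArg (fun T : TopologicalSpace.Opens X ↦ h x ∈ T) hVW
    simpa [τ] using this
  let V : TopologicalSpace.Opens X := ⟨O, hO⟩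
  have hV : V ≤ τ V := fun x hx ↦ hsub (show h (h.symm x) ∈ O by rwa [h.apply_symm_apply])
  obtain ⟨n, hn⟩ := WellFoundedGT.monotone_chain_condition
    (⟨fun n ↦ τ^[n] V, monotone_nat_of_le_succ fun n ↦ by
      rw [Function.iterate_succ_apply]
      exact hτm.iterate n hV⟩ : ℕ →o TopologicalSpace.Opens X)
  have h1 : V = τ V := by
    apply hτi.iterate n
    rw [← Function.iterate_succ_apply]
    exact hn (n + 1) n.le_succ
  ext x
  have := congrArg (fun T : TopologicalSpace.Opens X ↦ h x ∈ T) h1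
  simpa [τ, V] using this

/-- The image of `D(u)` is constructible and contains the generic point, hence contains a nonempty
basic open set. -/
theorem exists_basicOpen_subset_image {R S : Type*} [CommRing R] [IsDomain R] [CommRing S]
    [IsDomain S] (f : R →+* S) (hf : Function.Injective f) (hfp : f.FinitePresentation)
    (u : S) (hu : u ≠ 0) :
    ∃ r : R, r ≠ 0 ∧ (PrimeSpectrum.basicOpen r : Set (PrimeSpectrum R)) ⊆
      PrimeSpectrum.comap f '' (PrimeSpectrum.basicOpen u) := by
  have hc := PrimeSpectrum.isConstructible_comap_image hfp
    (PrimeSpectrum.isConstructible_basicOpen (f := u))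
  obtain ⟨D, hD⟩ := PrimeSpectrum.exists_constructibleSetData_iff.mpr hc
  have hgen : (⊥ : PrimeSpectrum R) ∈ D.toSet := by
    rw [hD]
    refine ⟨⊥, by simpa using hu, ?_⟩
    ext x
    simp [map_eq_zero_iff f hf]
  simp only [PrimeSpectrum.ConstructibleSetData.toSet, Set.mem_iUnion] at hgen
  obtain ⟨C, hC, h⟩ := hgen
  simp only [PrimeSpectrum.BasicConstructibleSetData.toSet, Set.mem_sdiff,
    PrimeSpectrum.mem_zeroLocus, Set.range_subset_iff, Set.singleton_subset_iff] at h
  refine ⟨C.f, by simpa using h.2, fun y hy ↦ ?_⟩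
  rw [← hD]
  refine Set.mem_biUnion hC ⟨?_, ?_⟩
  · rintro _ ⟨i, rfl⟩
    have : C.g i = 0 := by simpa using h.1 i
    simp [this]
  · simpa using hy

/-! ### Morphisms that are isomorphisms over an open subset -/

theorem isIso_morphismRestrict_of_le_iSup {X Y : Scheme.{u}} (f : X ⟶ Y) {J : Type*}
    (V : J → Y.Opens) (U : Y.Opens) (hU : U ≤ ⨆ i, V i) (h : ∀ i, IsIso (f ∣_ V i)) :
    IsIso (f ∣_ U) := by
  have hcov : ⨆ i, U.ι ⁻¹ᵁ V i = ⊤ := by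
    rw [eq_top_iff]
    intro x _
    have := hU x.2
    simp only [TopologicalSpace.Opens.mem_iSup] at this ⊢
    exact this
  refine IsZariskiLocalAtTarget.of_iSup_eq_top (P := MorphismProperty.isomorphisms Scheme)
    _ hcov fun i ↦ ?_
  have e : U.ι ''ᵁ U.ι ⁻¹ᵁ V i = (V i).ι ''ᵁ (V i).ι ⁻¹ᵁ U := by
    simp [Scheme.Hom.image_preimage_eq_opensRange_inf, inf_comm]
  refine (MorphismProperty.arrow_mk_iso_iff (MorphismProperty.isomorphisms Scheme)
    (morphismRestrictRestrict f U _ ≪≫ morphismRestrictEq f e ≪≫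
      (morphismRestrictRestrict f (V i) _).symm)).mpr ?_
  exact IsZariskiLocalAtTarget.restrict (P := MorphismProperty.isomorphisms Scheme) (h i) _

/-- The hypothesis `hs` says that `G` becomes surjective after inverting `s`. -/
theorem isIso_restrict_basicOpen {R : Type u} [CommRing R] [IsDomain R] (G : R →+* R)
    (hG : Function.Injective G) (s : R)
    (hs : ∀ r, ∃ (n : ℕ) (a : R), G a = r * G s ^ n) :
    IsIso (Spec.map (CommRingCat.ofHom G) ∣_ PrimeSpectrum.basicOpen s) := by
  have hbij : Function.Bijective (Localization.awayMap G s) := by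
    constructor
    · rw [injective_iff_map_eq_zero]
      intro z hz
      obtain ⟨r, ⟨_, k, rfl⟩, rfl⟩ := IsLocalization.exists_mk'_eq (Submonoid.powers s) z
      rw [Localization.awayMap, IsLocalization.Away.map, IsLocalization.map_mk',
        IsLocalization.mk'_eq_zero_iff] at hz
      obtain ⟨⟨_, m, rfl⟩, hm⟩ := hz
      rw [IsLocalization.mk'_eq_zero_iff]
      exact ⟨⟨s ^ m, m, rfl⟩, hG (by simpa using hm)⟩
    · intro z
      obtain ⟨r, ⟨_, k, rfl⟩, rfl⟩ := IsLocalization.exists_mk'_eq (Submonoid.powers (G s)) z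
      obtain ⟨n, a, ha⟩ := hs r
      refine ⟨IsLocalization.mk' _ a (⟨s ^ (k + n), k + n, rfl⟩ : Submonoid.powers s), ?_⟩
      rw [Localization.awayMap, IsLocalization.Away.map, IsLocalization.map_mk',
        IsLocalization.mk'_eq_iff_eq]
      congr 1
      simp only [ha, pow_add, map_mul, map_pow]
      ring
  have : IsIso (CommRingCat.ofHom (Localization.awayMap G s)) :=
    (ConcreteCategory.isIso_iff_bijective _).mpr hbij
  exact (MorphismProperty.arrow_mk_iso_iff (MorphismProperty.isomorphisms Scheme)
    (SpecMapRestrictBasicOpenIso (CommRingCat.ofHom G) s)).mpr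
      (inferInstanceAs (IsIso (Spec.map (CommRingCat.ofHom (Localization.awayMap G s)))))

/-- If `g` is an isomorphism over an open `T` whose preimage contains a set `C` with `g(C) = C`,
then `g` restricts to an automorphism of `U = interior C`, since `g⁻¹ U = U`. -/
theorem exists_iso_of_invariant_set {Y : Scheme.{u}} (g : Y ⟶ Y) (T : Y.Opens) (C : Set Y)
    (hT : IsIso (g ∣_ T)) (hCT : C ⊆ g ⁻¹' (T : Set Y)) (hgC : g '' C = C)
    (hne : (interior C).Nonempty) :
    ∃ U : Y.Opens, Nonempty ↥U ∧ ∃ e : U.toScheme ≅ U.toScheme, U.ι ≫ g = e.hom ≫ U.ι := by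
  have hCT' : C ⊆ (T : Set Y) := by
    rw [← hgC]
    rintro _ ⟨y, hy, rfl⟩
    exact hCT hy
  have hemb : Topology.IsOpenEmbedding (fun y : (g ⁻¹ᵁ T : Y.Opens) ↦ g y.1) := by
    have : IsOpenImmersion ((g ⁻¹ᵁ T).ι ≫ g) := by
      rw [← morphismRestrict_ι]
      infer_instance
    exact ((g ⁻¹ᵁ T).ι ≫ g).isOpenEmbedding
  have hinj : Set.InjOn g (g ⁻¹' (T : Set Y)) := fun a ha b hb hab ↦
    congrArg Subtype.val (@hemb.injective ⟨a, ha⟩ ⟨b, hb⟩ hab)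
  let U : Y.Opens := ⟨interior C, isOpen_interior⟩
  have hUC : (U : Set Y) ⊆ C := interior_subset
  have hpre : g ⁻¹ᵁ U = U := by
    apply le_antisymm
    · refine interior_maximal (fun y hy ↦ ?_) (g ⁻¹ᵁ U).2
      have hgy : g y ∈ C := hUC hy
      obtain ⟨y', hy', h⟩ := hgC.symm ▸ hgy
      rwa [← hinj (hCT hy') (hCT' hgy) h]
    · intro y hy
      have ho : IsOpen (g '' (U : Set Y)) := by
        convert hemb.isOpenMap _ (U.2.preimage continuous_subtype_val) using 1
        ext z
        constructor
        · rintro ⟨y, hy, rfl⟩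
          exact ⟨⟨y, hCT (hUC hy)⟩, hy, rfl⟩
        · rintro ⟨y, hy, rfl⟩
          exact ⟨y.1, hy, rfl⟩
      have hsub : g '' (U : Set Y) ⊆ C := (Set.image_mono hUC).trans hgC.subset
      exact interior_maximal hsub ho ⟨y, hy, rfl⟩
  have hiso : IsIso (g ∣_ U) := isIso_morphismRestrict_of_le_iSup g (fun _ : Unit ↦ T) U
    (by simpa using hUC.trans hCT') fun _ ↦ hT
  refine ⟨U, hne.to_subtype, (Y.isoOfEq hpre).symm ≪≫ asIso (g ∣_ U), ?_⟩
  simp [morphismRestrict_ι]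

/-- If every `r` is a fraction `G c / G d` with `G d ∉ y`, then a single `G s ∉ y` serves as a
denominator up to powers: take for `s` the product of the `d`s of finitely many generators. -/
theorem exists_clearing {R : Type*} [CommRing R] [Algebra ℂ R] [Algebra.FiniteType ℂ R]
    (G : R →ₐ[ℂ] R) (y : Ideal R) (hy : y.IsPrime)
    (h : ∀ r : R, ∃ d c : R, G d ∉ y ∧ r * G d = G c) :
    ∃ s, G s ∉ y ∧ ∀ r, ∃ (n : ℕ) (a : R), G a = r * G s ^ n := by
  classical
  obtain ⟨T, hT⟩ := Algebra.FiniteType.out (R := ℂ) (A := R)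
  choose d c hd hc using h
  refine ⟨∏ i ∈ T, d i, ?_, fun r ↦ ?_⟩
  · rw [map_prod]
    exact fun h ↦ (hy.prod_mem_iff.mp h).elim fun i hi ↦ hd i hi.2
  have hr : r ∈ Algebra.adjoin ℂ (T : Set R) := by simp [hT]
  induction hr using Algebra.adjoin_induction with
  | mem x hx =>
    refine ⟨1, c x * ∏ i ∈ T.erase x, d i, ?_⟩
    rw [pow_one, ← Finset.mul_prod_erase T d hx, map_mul, map_mul, ← mul_assoc, hc]
  | algebraMap z => exact ⟨0, algebraMap ℂ R z, by simp⟩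
  | add x y _ _ hx hy =>
    obtain ⟨n, a, ha⟩ := hx
    obtain ⟨m, b, hb⟩ := hy
    refine ⟨n + m, a * (∏ i ∈ T, d i) ^ m + b * (∏ i ∈ T, d i) ^ n, ?_⟩
    rw [map_add, map_mul, map_mul, ha, hb, map_pow, map_pow]
    ring
  | mul x y _ _ hx hy =>
    obtain ⟨n, a, ha⟩ := hx
    obtain ⟨m, b, hb⟩ := hy
    refine ⟨n + m, a * b, ?_⟩
    rw [map_mul, ha, hb]
    ring

/-- Let `R`, `S` be affine domains over `ℂ`, `ι : R → S` an injective `ℂ`-algebra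
homomorphism, `R` integrally closed in its fraction field (so `Y = Spec R` is normal),
`F : S → S` a bijective `ℂ`-algebra homomorphism, and `G : R → R` a `ℂ`-algebra
homomorphism with `ι ∘ G = F ∘ ι`.  Then there is a nonempty (hence dense) open
subscheme `U` of `Spec R` such that `Spec G : Spec R ⟶ Spec R` restricts to an
automorphism of `U`. -/
theorem exists_open_subscheme_restriction_automorphism
    {R S : Type u} [CommRing R] [IsDomain R] [CommRing S] [IsDomain S]
    [Algebra ℂ R] [Algebra ℂ S] [Algebra.FiniteType ℂ R] [Algebra.FiniteType ℂ S]
    [IsIntegrallyClosed R]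
    (ι : R →ₐ[ℂ] S) (hι : Function.Injective ι)
    (F : S →ₐ[ℂ] S) (hF : Function.Bijective F)
    (G : R →ₐ[ℂ] R) (hcomm : ∀ r, ι (G r) = F (ι r)) :
    ∃ U : (Spec (CommRingCat.of R)).Opens, Nonempty ↥U ∧
      ∃ e : U.toScheme ≅ U.toScheme,
        U.ι ≫ Spec.map (CommRingCat.ofHom G.toRingHom) = e.hom ≫ U.ι := by
  have hG : Function.Injective G := fun a b hab ↦
    hι (hF.1 (by rw [← hcomm, ← hcomm, hab]))
  have hNR : IsNoetherianRing R := Algebra.FiniteType.isNoetherianRing ℂ R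
  have hNS : IsNoetherianRing S := Algebra.FiniteType.isNoetherianRing ℂ S
  let f : PrimeSpectrum S → PrimeSpectrum R := PrimeSpectrum.comap ι.toRingHom
  let g : PrimeSpectrum R → PrimeSpectrum R := PrimeSpectrum.comap G.toRingHom
  let φ : PrimeSpectrum S ≃ₜ PrimeSpectrum S :=
    PrimeSpectrum.homeomorphOfRingEquiv (RingEquiv.ofBijective F hF).symm
  have hφ : ∀ x s, s ∈ (φ x).asIdeal ↔ F s ∈ x.asIdeal := fun x s ↦ Iff.rfl
  have hfφ : ∀ x, f (φ x) = g (f x) := fun x ↦ by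
    ext r
    change F (ι r) ∈ x.asIdeal ↔ ι (G r) ∈ x.asIdeal
    rw [hcomm]
  -- Points `x` with `S_x ∩ Frac R = R_{f x}`, expressed by clearing denominators.
  let good : Set (PrimeSpectrum S) := {x | ∀ (a b : R) (t s : S), t ∉ x.asIdeal →
    ι a * t = ι b * s → ∃ d c : R, ι d ∉ x.asIdeal ∧ a * d = b * c}
  -- If `φ x` is good, then every fraction in `S_x ∩ Frac R` comes from `R_{g (f x)}` via `G`.
  have key : ∀ x, φ x ∈ good → ∀ (a b : R) (t s : S), t ∉ x.asIdeal →
      ι a * t = ι b * s → ∃ d c : R, ι (G d) ∉ x.asIdeal ∧ a * G d = b * G c := by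
    intro x hx a b t s ht h
    by_cases hb : b = 0
    · subst hb
      have ht0 : t ≠ 0 := fun h0 ↦ ht (h0 ▸ x.asIdeal.zero_mem)
      have ha : a = 0 := by simpa [ht0, map_eq_zero_iff _ hι] using h
      exact ⟨1, 0, by simpa using x.isPrime.one_notMem, by simp [ha]⟩
    obtain ⟨a', b', hb', h'⟩ := exists_frac_preimage ι hι F hF G hcomm a b hb
    obtain ⟨t, rfl⟩ := hF.2 t
    obtain ⟨s, rfl⟩ := hF.2 s
    have hιb : ι b ≠ 0 := by simpa [map_eq_zero_iff _ hι] using hb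
    have hGb : G b' ≠ 0 := by simpa [map_eq_zero_iff _ hG] using hb'
    have h1 : ι a' * t = ι b' * s := by
      apply hF.1
      rw [map_mul, map_mul, ← hcomm, ← hcomm]
      apply mul_left_cancel₀ hιb
      have h2 := congrArg ι h'
      rw [map_mul, map_mul] at h2
      linear_combination ι (G b') * h - F t * h2
    obtain ⟨d, c, hd, hdc⟩ := hx a' b' t s (by rwa [hφ]) h1
    refine ⟨d, c, by rwa [hφ, ← hcomm] at hd, mul_left_cancel₀ hGb ?_⟩
    have h3 := congrArg G hdc
    rw [map_mul, map_mul] at h3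
    linear_combination G d * h' + b * h3
  have hgood : φ ⁻¹' good ⊆ good := fun x hx a b t s ht h ↦ by
    obtain ⟨d, c, h1, h2⟩ := key x hx a b t s ht h
    exact ⟨G d, G c, h1, h2⟩
  have hint : φ ⁻¹' interior good = interior good := by
    refine preimage_eq_of_noetherian φ _ isOpen_interior ?_
    rw [φ.preimage_interior]
    exact interior_mono hgood
  let C : Set (PrimeSpectrum R) := f '' interior good
  have hgC : g '' C = C := by
    change g '' (f '' _) = _
    rw [Set.image_image]
    simp only [← hfφ]
    rw [← Set.image_image f φ]
    conv_lhs => rw [← hint, Set.image_preimage_eq _ φ.surjective]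
  have hCne : (interior C).Nonempty := by
    let := ι.toRingHom.toAlgebra
    have : IsScalarTower ℂ R S := .of_algebraMap_eq fun z ↦ (ι.commutes z).symm
    have : Algebra.FiniteType R S := .of_restrictScalars_finiteType ℂ R S
    obtain ⟨u, hu, hdesc⟩ := exists_descend (R := R) (S := S) hι
    have hDu : (PrimeSpectrum.basicOpen u : Set (PrimeSpectrum S)) ⊆ interior good :=
      interior_maximal (fun x hx ↦ hdesc x.asIdeal x.isPrime hx) (PrimeSpectrum.basicOpen u).2
    obtain ⟨r, hr, hsub⟩ := exists_basicOpen_subset_image ι.toRingHom hι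
      (RingHom.FinitePresentation.of_finiteType.mp ‹Algebra.FiniteType R S›) u hu
    exact ⟨⊥, interior_maximal (hsub.trans (Set.image_mono hDu)) (PrimeSpectrum.basicOpen r).2
      (by simpa using hr)⟩
  let J := {s : R // ∀ r, ∃ (n : ℕ) (a : R), G a = r * G s ^ n}
  let V : J → (Spec (CommRingCat.of R)).Opens := fun s ↦ PrimeSpectrum.basicOpen s.1
  refine exists_iso_of_invariant_set _ (⨆ s, V s) C
    (isIso_morphismRestrict_of_le_iSup _ V _ le_rfl fun s ↦
      isIso_restrict_basicOpen G.toRingHom hG s.1 s.2) ?_ hgC hCne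
  rintro _ ⟨x, hx, rfl⟩
  have hφx : φ x ∈ good := interior_subset (show x ∈ φ ⁻¹' interior good from hint.symm ▸ hx)
  obtain ⟨s, hs, hs'⟩ := exists_clearing G (f x).asIdeal (f x).isPrime fun r ↦ by
    obtain ⟨d, c, hd, hdc⟩ := key x hφx r 1 1 (ι r) x.isPrime.one_notMem (by simp)
    exact ⟨d, c, hd, by simpa using hdc⟩
  exact TopologicalSpace.Opens.mem_iSup.mpr ⟨⟨s, hs'⟩, hs⟩
end

section
/- Let R be an integral domain that is a finitely generated ℂ-algebra and is integrally closed in its fraction field (so Y = Spec R is a normal affine variety). Let G : R → R be an injective ℂ-algebra homomorphism such that the induced endomorphism of Frac(R) is bijective (g = Spec(G) : Y → Y is a birational endomorphism) but G is not surjective (g is not an automorphism). Assume there is a nonempty open subscheme U of Spec R such that Spec(G) restricts to an automorphism of U. Then: (1) there exists a prime ideal p of R with height p = 1 and height G⁻¹(p) ≥ 2 (an exceptional divisor D = V(p) with codim_Y g(D) ≥ 2 exists); and (2) there exist an integer m ≥ 1 and a prime ideal p of R with height p = 1 such that height (G^m)⁻¹(p) ≥ 2 and G^m(p) ⊆ p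 (replacing g by g^m, one can take the exceptional divisor D with g(D) ⊆ D). -/
/-!
Write `g = Spec G`, and let `Φ` be the automorphism of `K = Frac R` extending `G`. A *divisor* is a
height-one prime of `R`, and `g` sends a prime `y` to `G⁻¹(y)`.

Since `R` is Noetherian and normal, the local ring at a divisor is a valuation ring of `K`, and each
local ring `R_x` is the intersection of the `R_q` over divisors `q ⊆ x` (`IsHtOne.regAt_or_inv`,
`exists_htOne_not_regAt`). Both come down to the fact that a prime `(b : c)` with `b ≠ 0` has height
one (`isHtOne_of_eq_colon`). If `g(y) = q` is a divisor, then `R_y` dominates the valuation ring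
`Φ(R_q)` and has the same fraction field, so `Φ⁻¹(R_y) = R_q` and `y` is itself a divisor
(`RegAt.of_map`, `IsHtOne.of_comap`).

Let `P` consist of the primes in `U` and the `g`-periodic primes. Every divisor in `P` is the image
of a divisor in `P`, and the set `F` of divisors outside `P` is finite.

* `F` is nonempty: otherwise every divisor is the image of a divisor, whence `Φ⁻¹(R) ⊆ R` and `G` is
  surjective (`surjective_of_forall_comap`).
* If `D ∈ F`, then `g(D)` lies in some `E ∈ F` (`exists_le_comap`). To see this take `s ∈ K` whose
  only pole is `D` (`exists_pole`). Then `Φ⁻¹(s)` is regular at every divisor in `P`; if no element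
  of `F` contained `g(D)`, it would be regular at the generic point of `g(D)`, making `s` regular at
  `D`.

By finiteness some `D ∈ F` satisfies `g^m(D) ⊆ D` with `m ≥ 1`. As `D` is not periodic the inclusion
is strict, so `g^m(D)` has codimension at least two. Hence at some step along `D, g(D), …, g^m(D)` a
divisor is mapped to something of codimension at least two, which is the first claim.
-/

open AlgebraicGeometry CategoryTheory

universe u

/-- The height of an ideal `I`: the infimum of the heights of the prime ideals
containing `I` (in the prime spectrum, ordered by inclusion). -/
noncomputable def Ideal.heightOf {R : Type*} [CommRing R] (I : Ideal R) : ℕ∞ :=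
  ⨅ p ∈ {p : PrimeSpectrum R | I ≤ p.asIdeal}, Order.height p

/-! ### Height-one primes -/

/-- `p` is a prime of height one of a domain, phrased without reference to a numerical height. -/
structure IsHtOne {R : Type*} [CommRing R] (p : Ideal R) : Prop where
  prime : p.IsPrime
  ne_bot : p ≠ ⊥
  eq_or : ∀ z : Ideal R, z.IsPrime → z ≤ p → z = ⊥ ∨ z = p

theorem heightOf_prime {R : Type*} [CommRing R] (p : Ideal R) (hp : p.IsPrime) :
    p.heightOf = p.height := by
  have h := PrimeSpectrum.height_eq_orderHeight (⟨p, hp⟩ : PrimeSpectrum R)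
  rw [show p.height = Order.height (⟨p, hp⟩ : PrimeSpectrum R) from h]
  apply le_antisymm
  · exact iInf₂_le_of_le (⟨p, hp⟩ : PrimeSpectrum R) (le_refl p) le_rfl
  · exact le_iInf₂ fun q hq => Order.height_mono hq

section Heights
variable {R : Type*} [CommRing R] [IsDomain R]

theorem IsHtOne.heightOf_eq_one {p : Ideal R} (hp : IsHtOne p) : p.heightOf = 1 := by
  have := hp.prime
  rw [heightOf_prime p hp.prime]
  apply le_antisymm
  · refine (Ideal.height_le_iff (n := 1)).2 fun q hq hqp => ?_
    rcases hp.eq_or q hq hqp.le with h | h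
    · subst h
      simp
    · exact absurd h hqp.ne
  · rw [Order.one_le_iff_ne_zero]
    intro h
    exact hp.ne_bot (p.height_eq_zero_iff_eq_bot.1 h)

theorem isHtOne_of_height_le_one {p : Ideal R} (hp : p.IsPrime) (h0 : p ≠ ⊥)
    (h : p.height ≤ 1) : IsHtOne p := by
  refine ⟨hp, h0, fun z hz hzp => ?_⟩
  by_contra! hcon
  have h1 := (Ideal.height_le_iff (n := 1)).1 h z hz (lt_of_le_of_ne hzp hcon.2)
  have h2 : z.height = 0 := by
    simpa using h1
  exact hcon.1 (z.height_eq_zero_iff_eq_bot.1 h2)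

theorem two_le_heightOf {p : Ideal R} (hp : p.IsPrime) (h0 : p ≠ ⊥) (h : ¬ IsHtOne p) :
    2 ≤ p.heightOf := by
  rw [heightOf_prime p hp]
  by_contra hlt
  refine h (isHtOne_of_height_le_one hp h0 ?_)
  rw [not_le] at hlt
  exact Order.le_of_lt_add_one (by simpa [one_add_one_eq_two] using hlt)

omit [IsDomain R] in
theorem IsHtOne.mem_minimalPrimes {p : Ideal R} (hp : IsHtOne p) {t : R} (ht : t ∈ p)
    (ht0 : t ≠ 0) : p ∈ (Ideal.span {t}).minimalPrimes := by
  refine ⟨⟨hp.prime, (Ideal.span_singleton_le_iff_mem p).2 ht⟩, ?_⟩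
  rintro z ⟨hz, htz⟩ hzp
  rcases hp.eq_or z hz hzp with h | h
  · exact absurd ((Ideal.span_singleton_le_iff_mem z).1 htz) (by simpa [h] using ht0)
  · exact h.ge

end Heights

/-! ### Local rings of a normal domain inside its fraction field -/

section Normal
variable {R K : Type*} [CommRing R] [IsDomain R] [Field K] [Algebra R K] [IsFractionRing R K]

/-- `k ∈ K = Frac R` lies in the local ring `R_p ⊆ K`. -/
def RegAt (p : Ideal R) (k : K) : Prop :=
  ∃ a b : R, b ∉ p ∧ k * algebraMap R K b = algebraMap R K a

variable [IsNoetherianRing R] [IsIntegrallyClosed R]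

/-- In a Noetherian normal domain, a prime of the form `(b : c)` with `b ≠ 0` has height one.
By integral closedness `c / b` cannot map `q` into itself, so `u * (c / b) = v ∉ q` for some
`u ∈ q`; then `q` is minimal over `u` and Krull's principal ideal theorem applies. -/
theorem isHtOne_of_eq_colon {q : Ideal R} (hq : q.IsPrime) {b c : R} (hb : b ≠ 0)
    (hqc : q = (Ideal.span {b}).colon {c}) : IsHtOne q := by
  let K := FractionRing R
  have hmem : ∀ r, r ∈ q ↔ ∃ w, r * c = b * w := fun r => by
    rw [hqc, Submodule.mem_colon_singleton, smul_eq_mul, Ideal.mem_span_singleton]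
    rfl
  have hbq : b ∈ q := (hmem b).2 ⟨c, rfl⟩
  have hq0 : q ≠ ⊥ := fun h => hb (by simpa [h] using hbq)
  have hbK : algebraMap R K b ≠ 0 := by simpa using hb
  have hcb : ¬ b ∣ c := fun ⟨w, hw⟩ =>
    hq.ne_top ((Ideal.eq_top_iff_one q).2 ((hmem 1).2 ⟨w, by rw [one_mul, hw]⟩))
  have key : ∃ u ∈ q, ∃ v, v ∉ q ∧ u * c = b * v := by
    by_contra! hcon
    have hint : IsIntegral R (algebraMap R K c / algebraMap R K b) := by
      refine isIntegral_of_smul_mem_submodule (M := K) (Submodule.map (Algebra.linearMap R K) q)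
        ?_ ((IsNoetherian.noetherian q).map _) _ ?_
      · rw [Submodule.ne_bot_iff]
        exact ⟨_, ⟨b, hbq, rfl⟩, hbK⟩
      · rintro _ ⟨r, hr, rfl⟩
        obtain ⟨w, hw⟩ := (hmem r).1 hr
        have hwq : w ∈ q := by
          by_contra h
          exact hcon r hr w h hw
        refine ⟨w, hwq, ?_⟩
        have := congrArg (algebraMap R K) hw
        simp only [map_mul] at this
        simp only [Algebra.linearMap_apply, smul_eq_mul]
        rw [div_mul_eq_mul_div, eq_div_iff hbK]
        linear_combination -this
    obtain ⟨y, hy⟩ := IsIntegrallyClosed.algebraMap_eq_of_integral hint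
    refine hcb ⟨y, IsFractionRing.injective R K ?_⟩
    rw [map_mul, hy, mul_comm, div_mul_cancel₀ _ hbK]
  obtain ⟨u, hu, v, hv, huv⟩ := key
  refine isHtOne_of_height_le_one hq hq0 ?_
  refine Ideal.height_le_one_of_isPrincipal_of_mem_minimalPrimes (Ideal.span {u}) q
    ⟨⟨hq, (Ideal.span_singleton_le_iff_mem q).2 hu⟩, ?_⟩
  rintro z ⟨hz, huz⟩ hzq r hr
  obtain ⟨w, hw⟩ := (hmem r).1 hr
  have h1 : r * v = u * w := mul_left_cancel₀ hb (by linear_combination (-r) * huv + u * hw)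
  have h2 : r * v ∈ z := h1 ▸ z.mul_mem_right w ((Ideal.span_singleton_le_iff_mem z).1 huz)
  exact (hz.mem_or_mem h2).resolve_right fun h => hv (hzq h)

/-- `R_x` is the intersection of the `R_q` with `q ⊆ x` of height one. -/
theorem exists_htOne_not_regAt {x : Ideal R} (hx : x.IsPrime) {k : K} (hk : ¬ RegAt x k) :
    ∃ q : Ideal R, IsHtOne q ∧ q ≤ x ∧ ¬ RegAt q k := by
  obtain ⟨a, b, hb, rfl⟩ := IsFractionRing.div_surjective (A := R) k
  have hb0 : b ≠ 0 := nonZeroDivisors.ne_zero hb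
  have hbK : algebraMap R K b ≠ 0 := by simpa using hb0
  have hmem : ∀ r, r ∈ (Ideal.span {b}).colon {a} ↔
      ∃ w, algebraMap R K a / algebraMap R K b * algebraMap R K r = algebraMap R K w := fun r => by
    rw [Submodule.mem_colon_singleton, smul_eq_mul, Ideal.mem_span_singleton]
    refine exists_congr fun w => ?_
    rw [← (IsFractionRing.injective R K).eq_iff, map_mul, map_mul]
    constructor
    · intro h
      field_simp
      linear_combination h
    · intro h
      field_simp at h
      linear_combination h
  have hle : (Ideal.span {b}).colon {a} ≤ x := fun r hr => by
    by_contra h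
    obtain ⟨w, hw⟩ := (hmem r).1 hr
    exact hk ⟨w, r, h, hw⟩
  obtain ⟨q, hq, hqx⟩ := Ideal.exists_minimalPrimes_le hle
  obtain ⟨c, hc⟩ := Submodule.exists_eq_colon_of_mem_minimalPrimes hq
  refine ⟨q, isHtOne_of_eq_colon hq.1.1 hb0 hc, hqx, ?_⟩
  rintro ⟨w, r, hr, h⟩
  exact hr (hq.1.2 ((hmem r).2 ⟨w, h⟩))

/-- `R` is the intersection of its localizations at height-one primes. -/
theorem exists_eq_algebraMap_of_regAt {k : K} (hk : ∀ q : Ideal R, IsHtOne q → RegAt q k) :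
    ∃ r : R, algebraMap R K r = k := by
  have hx : ∀ x : Ideal R, x.IsPrime → RegAt x k := fun x hx => by
    by_contra h
    obtain ⟨q, hq, -, hqk⟩ := exists_htOne_not_regAt hx h
    exact hqk (hk q hq)
  -- the ideal of denominators of `k`
  let I : Ideal R :=
    { carrier := {b | ∃ a, k * algebraMap R K b = algebraMap R K a}
      zero_mem' := ⟨0, by simp⟩
      add_mem' := by
        rintro _ _ ⟨a, ha⟩ ⟨a', ha'⟩
        exact ⟨a + a', by rw [map_add, map_add, mul_add, ha, ha']⟩
      smul_mem' := by
        rintro c _ ⟨a, ha⟩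
        exact ⟨c * a, by rw [smul_eq_mul, map_mul, map_mul, ← ha]; ring⟩ }
  have hI : I = ⊤ := by
    by_contra h
    obtain ⟨M, hM, hIM⟩ := Ideal.exists_le_maximal I h
    obtain ⟨a, b, hb, hab⟩ := hx M hM.isPrime
    exact hb (hIM ⟨a, hab⟩)
  obtain ⟨a, ha⟩ := (Ideal.eq_top_iff_one I).1 hI
  exact ⟨a, by simpa using ha.symm⟩

/-- For every prime divisor `p` some rational function has a pole along `p` and no other poles. -/
theorem exists_pole (K : Type*) [Field K] [Algebra R K] [IsFractionRing R K]
    {p : Ideal R} (hp : IsHtOne p) :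
    ∃ s : K, ¬ RegAt p s ∧ ∀ q : Ideal R, IsHtOne q → q ≠ p → RegAt q s := by
  obtain ⟨t, htp, ht0⟩ := (Submodule.ne_bot_iff _).1 hp.ne_bot
  have htK : algebraMap R K t ≠ 0 := by simpa using ht0
  have hmin := hp.mem_minimalPrimes htp ht0
  have h1 : (Ideal.span {t}).colon {(1 : R)} = Ideal.span {t} := by
    ext r
    rw [Submodule.mem_colon_singleton, smul_eq_mul, mul_one]
  rw [← h1] at hmin
  obtain ⟨c, hc⟩ := Submodule.exists_eq_colon_of_mem_minimalPrimes hmin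
  have hmem : ∀ r, r ∈ p ↔ ∃ w, r * c = t * w := fun r => by
    rw [hc, Submodule.mem_colon_singleton, smul_eq_mul, Ideal.mem_span_singleton]
    rfl
  have hreg : ∀ q : Ideal R, IsHtOne q → q ≠ p →
      RegAt q (algebraMap R K c / algebraMap R K t) := fun q hq hqp => by
    have hnot : ¬ p ≤ q := fun h => by
      rcases hq.eq_or p hp.prime h with h | h
      · exact hp.ne_bot h
      · exact hqp h.symm
    obtain ⟨a, hap, haq⟩ := SetLike.not_le_iff_exists.1 hnot
    obtain ⟨w, hw⟩ := (hmem a).1 hap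
    refine ⟨w, a, haq, ?_⟩
    have := congrArg (algebraMap R K) hw
    simp only [map_mul] at this
    field_simp
    linear_combination this
  refine ⟨algebraMap R K c / algebraMap R K t, fun hbad => ?_, hreg⟩
  -- a function regular at every height-one prime is in `R`, which would force `1 ∈ p`
  obtain ⟨r, hr⟩ := exists_eq_algebraMap_of_regAt (R := R)
    (k := algebraMap R K c / algebraMap R K t) fun q hq => by
      by_cases h : q = p
      · exact h ▸ hbad
      · exact hreg q hq h
  refine hp.prime.ne_top ((Ideal.eq_top_iff_one p).2 ((hmem 1).2 ⟨r, ?_⟩))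
  apply IsFractionRing.injective R K
  rw [one_mul, map_mul, hr]
  field_simp

/-- The local ring at a height-one prime is a valuation ring: if `k ∉ R_q` then `k⁻¹ = d / s`
lies in its maximal ideal. -/
theorem IsHtOne.regAt_or_inv {q : Ideal R} (hq : IsHtOne q) (k : K) :
    RegAt q k ∨ ∃ d s : R, d ∈ q ∧ s ∉ q ∧ k * algebraMap R K d = algebraMap R K s := by
  have := hq.prime
  have hdom : IsDomain (Localization.AtPrime q) :=
    IsLocalization.isDomain_localization q.primeCompl_le_nonZeroDivisors
  have hnoeth : IsNoetherianRing (Localization.AtPrime q) :=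
    IsLocalization.isNoetherianRing q.primeCompl _ inferInstance
  have hic : IsIntegrallyClosed (Localization.AtPrime q) :=
    isIntegrallyClosed_of_isLocalization _ q.primeCompl q.primeCompl_le_nonZeroDivisors
  have hmax : ∀ P : Ideal (Localization.AtPrime q), P ≠ ⊥ → P.IsPrime →
      P = IsLocalRing.maximalIdeal (Localization.AtPrime q) := fun P hP0 hP => by
    have hunder : P.under R = q := by
      have hle : P.under R ≤ q := by
        refine le_of_le_of_eq ?_ (Localization.AtPrime.under_maximalIdeal (I := q))
        exact Ideal.comap_mono (IsLocalRing.le_maximalIdeal hP.ne_top)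
      refine (hq.eq_or _ (hP.comap _) hle).resolve_left fun h => hP0 ?_
      change P.under R = ⊥ at h
      rw [← IsLocalization.map_under q.primeCompl (Localization.AtPrime q) P, h, Ideal.map_bot]
    rw [← IsLocalization.map_under q.primeCompl (Localization.AtPrime q) P, hunder,
      Localization.AtPrime.map_eq_maximalIdeal]
  have htfae := (tfae_of_isNoetherianRing_of_isLocalRing_of_isDomain
    (Localization.AtPrime q)).out 3 1
  have hval : ValuationRing (Localization.AtPrime q) := htfae.1 ⟨hic, hmax⟩
  obtain ⟨a, b, hb, rfl⟩ := IsFractionRing.div_surjective (A := R) k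
  have hb0 : b ≠ 0 := nonZeroDivisors.ne_zero hb
  have hbK : algebraMap R K b ≠ 0 := by simpa using hb0
  have hinj : Function.Injective (algebraMap R (Localization.AtPrime q)) :=
    IsLocalization.injective _ q.primeCompl_le_nonZeroDivisors
  obtain ⟨c, hc⟩ := ValuationRing.cond (algebraMap R (Localization.AtPrime q) a)
    (algebraMap R (Localization.AtPrime q) b)
  obtain ⟨⟨d, s⟩, hds⟩ := IsLocalization.surj q.primeCompl c
  have hs : (s : R) ∉ q := s.2
  simp only at hds
  rcases hc with hc | hc
  · have h : a * d = b * s := hinj (by rw [map_mul, map_mul, ← hds, ← hc]; ring)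
    have hK := congrArg (algebraMap R K) h
    simp only [map_mul] at hK
    have hKds : algebraMap R K a / algebraMap R K b * algebraMap R K d = algebraMap R K s := by
      field_simp
      linear_combination hK
    by_cases hd : d ∈ q
    · exact Or.inr ⟨d, s, hd, hs, hKds⟩
    · exact Or.inl ⟨s, d, hd, hKds⟩
  · have h : b * d = a * s := hinj (by rw [map_mul, map_mul, ← hds, ← hc]; ring)
    have hK := congrArg (algebraMap R K) h
    simp only [map_mul] at hK
    refine Or.inl ⟨d, s, hs, ?_⟩
    field_simp
    linear_combination -hK

end Normal

/-! ### Height-one primes under a birational endomorphism -/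

section Birational
variable {R K : Type*} [CommRing R] [IsDomain R] [Algebra ℂ R] [Field K] [Algebra R K]
  [IsFractionRing R K] (G : R →ₐ[ℂ] R) (Φ : K →+* K)
  (hΦ : ∀ r, Φ (algebraMap R K r) = algebraMap R K (G r))

include hΦ

omit [IsDomain R] [IsFractionRing R K] in
theorem RegAt.map {y : Ideal R} {k : K} (h : RegAt (Ideal.comap G y) k) : RegAt y (Φ k) := by
  obtain ⟨a, b, hb, hab⟩ := h
  exact ⟨G a, G b, hb, by rw [← hΦ, ← hΦ, ← map_mul, hab]⟩

/-- No nonzero prime contracts to zero: otherwise `Φ K = K` would be contained in `R_y`. -/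
theorem comap_ne_bot (hsurj : Function.Surjective Φ) {y : Ideal R} (h0 : y ≠ ⊥) :
    Ideal.comap G y ≠ ⊥ := by
  intro h
  obtain ⟨r, hr, hr0⟩ := (Submodule.ne_bot_iff _).1 h0
  have hrK : algebraMap R K r ≠ 0 := by simpa using hr0
  obtain ⟨k, hk⟩ := hsurj (algebraMap R K r)⁻¹
  have hreg : RegAt y (Φ k) := by
    apply RegAt.map G Φ hΦ
    rw [h]
    obtain ⟨a, b, hb, rfl⟩ := IsFractionRing.div_surjective (A := R) k
    have hb0 : b ≠ 0 := nonZeroDivisors.ne_zero hb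
    have hbK : algebraMap R K b ≠ 0 := by simpa using hb0
    exact ⟨a, b, by simpa using hb0, by field_simp⟩
  rw [hk] at hreg
  obtain ⟨a, b, hb, hab⟩ := hreg
  refine hb ?_
  have : b = r * a := IsFractionRing.injective R K (by rw [map_mul, ← hab]; field_simp)
  exact this ▸ y.mul_mem_right a hr

variable [IsNoetherianRing R] [IsIntegrallyClosed R]

/-- If `y` contracts to a height-one prime `q`, the valuation ring `Φ(R_q)` is dominated by `R_y`,
so that `Φ⁻¹(R_y) ⊆ R_q`. -/
theorem RegAt.of_map {y q : Ideal R} (hy : y.IsPrime) (hq : IsHtOne q)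
    (hyq : Ideal.comap G y = q) {k : K} (h : RegAt y (Φ k)) : RegAt q k := by
  refine (hq.regAt_or_inv k).resolve_right ?_
  rintro ⟨d, s, hd, hs, hk⟩
  obtain ⟨a, b, hb, hab⟩ := h
  have h1 := congrArg Φ hk
  rw [map_mul, hΦ, hΦ] at h1
  have h2 : G s * b = a * G d := IsFractionRing.injective R K (by
    rw [map_mul, map_mul, ← hab, ← h1]; ring)
  rw [← hyq] at hd hs
  have h3 : G s * b ∈ y := h2 ▸ y.mul_mem_left a hd
  exact (hy.mem_or_mem h3).elim hs hb

theorem IsHtOne.of_comap (hsurj : Function.Surjective Φ) {y : Ideal R} (hy : y.IsPrime)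
    (hq : IsHtOne (Ideal.comap G y)) : IsHtOne y := by
  refine ⟨hy, ?_, fun z hz hzy => or_iff_not_imp_left.2 fun hz0 => le_antisymm hzy ?_⟩
  · rintro rfl
    obtain ⟨t, ht, ht0⟩ := (Submodule.ne_bot_iff _).1 hq.ne_bot
    have hGt : G t = 0 := by simpa using ht
    have h := hΦ t
    rw [hGt, map_zero, map_eq_zero] at h
    exact ht0 (by simpa using h)
  · intro r hr
    -- with `q = G⁻¹(y)`, one has `Φ(R_q) ⊆ R_y ⊆ R_z = Φ(R_q)` for `0 ≠ z ⊆ y`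
    by_contra hrz
    have hzq : Ideal.comap G z = Ideal.comap G y :=
      (hq.eq_or _ (hz.comap G) (Ideal.comap_mono hzy)).resolve_left
        (comap_ne_bot G Φ hΦ hsurj hz0)
    have hr0 : r ≠ 0 := fun h => hrz (h ▸ z.zero_mem)
    have hrK : algebraMap R K r ≠ 0 := by simpa using hr0
    obtain ⟨k, hk⟩ := hsurj (algebraMap R K r)⁻¹
    have h1 : RegAt z (Φ k) := ⟨1, r, hrz, by rw [hk]; simp [hrK]⟩
    have h2 := RegAt.map G Φ hΦ (RegAt.of_map G Φ hΦ hz hq hzq h1)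
    rw [hk] at h2
    obtain ⟨a, b, hb, hab⟩ := h2
    have : b = r * a := IsFractionRing.injective R K (by rw [map_mul, ← hab]; field_simp)
    exact hb (this ▸ y.mul_mem_right a hr)

/-- Suppose every height-one prime in `P` is the contraction of a height-one prime in `P`. The
image of a prime divisor `D` outside `P` lies in a prime divisor `E` outside `P`: otherwise, for a
function `s` with its only pole along `D`, `Φ⁻¹ s` would be regular at the generic point of the
image, and hence `s` regular at `D`. -/
theorem exists_le_comap (hsurj : Function.Surjective Φ) (P : Set (Ideal R))
    (hP : ∀ q ∈ P, IsHtOne q → ∃ p ∈ P, IsHtOne p ∧ Ideal.comap G p = q)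
    {D : Ideal R} (hD : IsHtOne D) (hDP : D ∉ P) :
    ∃ E : Ideal R, IsHtOne E ∧ E ∉ P ∧ E ≤ Ideal.comap G D := by
  by_contra! hcon
  obtain ⟨s, hsD, hs⟩ := exists_pole K hD
  obtain ⟨k, rfl⟩ := hsurj s
  refine hsD (RegAt.map G Φ hΦ ?_)
  by_contra hk
  have := hD.prime
  obtain ⟨q, hq, hqD, hqk⟩ := exists_htOne_not_regAt (hD.prime.comap G) hk
  have hqP : q ∈ P := by
    by_contra h
    exact hcon q hq h hqD
  obtain ⟨p, hpP, hp, hpq⟩ := hP q hqP hq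
  exact hqk (RegAt.of_map G Φ hΦ hp.prime hq hpq
    (hs p hp fun h => hDP (h ▸ hpP)))

/-- If every height-one prime is the contraction of a height-one prime, then `Φ⁻¹(R) ⊆ R`. -/
theorem surjective_of_forall_comap (hsurj : Function.Surjective Φ)
    (hP : ∀ q : Ideal R, IsHtOne q → ∃ p, IsHtOne p ∧ Ideal.comap G p = q) :
    Function.Surjective G := by
  intro r
  obtain ⟨k, hk⟩ := hsurj (algebraMap R K r)
  obtain ⟨r', rfl⟩ := exists_eq_algebraMap_of_regAt (R := R) (k := k) fun q hq => by
    obtain ⟨p, hp, hpq⟩ := hP q hq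
    exact RegAt.of_map G Φ hΦ hp.prime hq hpq
      ⟨r, 1, fun h => hp.prime.ne_top ((Ideal.eq_top_iff_one p).2 h), by rw [hk]; simp⟩
  exact ⟨r', IsFractionRing.injective R K (by rw [← hΦ, hk])⟩

end Birational

/-! ### Iteration -/

section Iteration
variable {R : Type*} [CommRing R] [Algebra ℂ R] (G : R →ₐ[ℂ] R)

theorem comap_pow_succ (m : ℕ) (p : Ideal R) :
    Ideal.comap (G ^ (m + 1)) p = Ideal.comap G (Ideal.comap (G ^ m) p) := by
  ext x
  simp only [Ideal.mem_comap, pow_succ, AlgHom.mul_apply]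

theorem comap_pow_zero (p : Ideal R) : Ideal.comap (G ^ 0) p = p := by
  ext x
  simp only [Ideal.mem_comap, pow_zero, AlgHom.one_apply]

/-- `p` is a periodic point of `Spec G`. -/
def IsPer (p : Ideal R) : Prop := ∃ m : ℕ, 1 ≤ m ∧ Ideal.comap (G ^ m) p = p

/-- A periodic prime is the contraction of a periodic prime. -/
theorem IsPer.exists_comap {p : Ideal R} (hp : p.IsPrime) (h : IsPer G p) :
    ∃ y : Ideal R, y.IsPrime ∧ IsPer G y ∧ Ideal.comap G y = p := by
  obtain ⟨m, hm, hmp⟩ := h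
  obtain ⟨n, rfl⟩ := Nat.exists_eq_add_of_le' hm
  refine ⟨Ideal.comap (G ^ n) p, hp.comap _, ⟨n + 1, hm, ?_⟩, ?_⟩
  · have hcomm : Ideal.comap (G ^ (n + 1)) (Ideal.comap (G ^ n) p) =
        Ideal.comap (G ^ n) (Ideal.comap (G ^ (n + 1)) p) := by
      ext x
      simp only [Ideal.mem_comap, ← AlgHom.mul_apply, ← pow_add, add_comm]
    rw [hcomm, hmp]
  · rw [← comap_pow_succ, hmp]

/-- A choice of `φ D ∈ F` with `φ D ⊆ G⁻¹(D)` is a self-map of a finite nonempty set, so it has a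
periodic point. -/
theorem exists_le_comap_pow {F : Set (Ideal R)} (hfin : F.Finite) (hne : F.Nonempty)
    (hF : ∀ D ∈ F, ∃ E ∈ F, E ≤ Ideal.comap G D) :
    ∃ D ∈ F, ∃ m : ℕ, 1 ≤ m ∧ D ≤ Ideal.comap (G ^ m) D := by
  choose! φ hφF hφ using hF
  obtain ⟨D₀, hD₀⟩ := hne
  have hit : ∀ n D, D ∈ F → φ^[n] D ∈ F ∧ φ^[n] D ≤ Ideal.comap (G ^ n) D := by
    intro n
    induction n with
    | zero => exact fun D hD => ⟨hD, (comap_pow_zero G D).ge⟩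
    | succ n ih =>
      intro D hD
      rw [Function.iterate_succ_apply', comap_pow_succ]
      exact ⟨hφF _ (ih D hD).1, (hφ _ (ih D hD).1).trans (Ideal.comap_mono (ih D hD).2)⟩
  have hmaps : Set.MapsTo (fun n : ℕ => φ^[n] D₀) Set.univ F := fun n _ => (hit n D₀ hD₀).1
  obtain ⟨i, -, j, -, hij, heq⟩ :=
    Set.infinite_univ.exists_lt_map_eq_of_mapsTo hmaps hfin
  refine ⟨φ^[i] D₀, (hit i D₀ hD₀).1, j - i, by omega, ?_⟩
  have h := (hit (j - i) _ (hit i D₀ hD₀).1).2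
  rwa [← Function.iterate_add_apply, Nat.sub_add_cancel hij.le, ← heq] at h

end Iteration

/-! ### The invariant open set -/

section OpenSet
variable {R : Type u} [CommRing R]

theorem exists_comap_eq_of_mem_open [Algebra ℂ R] (G : R →ₐ[ℂ] R)
    (U : (Spec (CommRingCat.of R)).Opens) (e : U.toScheme ≅ U.toScheme)
    (he : U.ι ≫ Spec.map (CommRingCat.ofHom G.toRingHom) = e.hom ≫ U.ι)
    (q : PrimeSpectrum R) (hq : q ∈ (U.carrier : Set (PrimeSpectrum R))) :
    ∃ y : PrimeSpectrum R, y ∈ (U.carrier : Set (PrimeSpectrum R)) ∧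
      Ideal.comap G y.asIdeal = q.asIdeal := by
  obtain ⟨x, hx⟩ : ∃ x : U.toScheme, U.ι x = q := ⟨⟨q, hq⟩, rfl⟩
  obtain ⟨y, rfl⟩ : ∃ y, e.hom y = x :=
    ⟨e.inv x, by rw [← Scheme.Hom.comp_apply, e.inv_hom_id]; rfl⟩
  refine ⟨U.ι y, y.2, ?_⟩
  have h1 : (U.ι ≫ Spec.map (CommRingCat.ofHom G.toRingHom)) y = (e.hom ≫ U.ι) y := by rw [he]
  rw [Scheme.Hom.comp_apply, Scheme.Hom.comp_apply, hx] at h1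
  exact congrArg PrimeSpectrum.asIdeal h1

theorem finite_htOne_not_mem_open [IsDomain R] [IsNoetherianRing R] {U : Set (PrimeSpectrum R)}
    (hUo : IsOpen U) (hU : U.Nonempty) :
    {p : Ideal R | IsHtOne p ∧ ∀ h : p.IsPrime, (⟨p, h⟩ : PrimeSpectrum R) ∉ U}.Finite := by
  obtain ⟨x, hx⟩ := hU
  obtain ⟨_, ⟨f, rfl⟩, hxf, hfU⟩ :=
    PrimeSpectrum.isTopologicalBasis_basic_opens.exists_subset_of_mem_open hx hUo
  have hf0 : f ≠ 0 := by
    rintro rfl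
    simp at hxf
  refine (Ideal.finite_minimalPrimes_of_isNoetherianRing R (Ideal.span {f})).subset ?_
  rintro p ⟨hp, hpU⟩
  refine hp.mem_minimalPrimes ?_ hf0
  by_contra hfp
  exact hpU hp.prime (hfU hfp)

end OpenSet

/-- Proposition 2.4.  Let `R` be an affine domain over `ℂ`, integrally closed in its
fraction field (so `Y = Spec R` is a normal affine variety).  Let `G : R → R` be an
injective `ℂ`-algebra homomorphism whose induced endomorphism of `Frac R` is bijective
(`g = Spec G` is a birational endomorphism) but which is not surjective (`g` is not an
automorphism), and suppose `Spec G` restricts to an automorphism of a nonempty open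
subscheme `U` of `Spec R`.  Then (1) there is an exceptional divisor: a height-one prime
`p` with `height G⁻¹(p) ≥ 2`; and (2) after replacing `G` by some power `G^m`, the
exceptional divisor can be chosen invariant: `G^m(p) ⊆ p`. -/
theorem exists_exceptional_divisor
    {R : Type u} [CommRing R] [IsDomain R] [Algebra ℂ R] [Algebra.FiniteType ℂ R]
    [IsIntegrallyClosed R]
    (G : R →ₐ[ℂ] R) (hGinj : Function.Injective G)
    (hGbir : ∃ Φ : FractionRing R →+* FractionRing R,
      (∀ r, Φ (algebraMap R (FractionRing R) r) = algebraMap R (FractionRing R) (G r)) ∧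
      Function.Bijective Φ)
    (hGns : ¬ Function.Surjective G)
    (U : (Spec (CommRingCat.of R)).Opens) (hU : Nonempty ↥U)
    (e : U.toScheme ≅ U.toScheme)
    (he : U.ι ≫ Spec.map (CommRingCat.ofHom G.toRingHom) = e.hom ≫ U.ι) :
    (∃ p : Ideal R, p.IsPrime ∧ p.heightOf = 1 ∧ 2 ≤ (Ideal.comap G p).heightOf) ∧
    (∃ m : ℕ, 1 ≤ m ∧ ∃ p : Ideal R, p.IsPrime ∧ p.heightOf = 1 ∧
      2 ≤ (Ideal.comap (G ^ m) p).heightOf ∧ Ideal.map (G ^ m) p ≤ p) := by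
  obtain ⟨Φ, hΦ, -, hsurj⟩ := hGbir
  have hnoeth : IsNoetherianRing R := Algebra.FiniteType.isNoetherianRing ℂ R
  let U' : Set (PrimeSpectrum R) := (U.carrier : Set (PrimeSpectrum R))
  have hU'o : IsOpen U' := U.2
  have hU'n : U'.Nonempty := hU.elim fun x => ⟨x.1, x.2⟩
  let P : Set (Ideal R) :=
    {p | (∃ h : p.IsPrime, (⟨p, h⟩ : PrimeSpectrum R) ∈ U') ∨ IsPer G p}
  have hP : ∀ q ∈ P, IsHtOne q → ∃ p ∈ P, IsHtOne p ∧ Ideal.comap G p = q := by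
    rintro q (⟨h, hqU⟩ | hper) hq
    · obtain ⟨y, hyU, hy⟩ := exists_comap_eq_of_mem_open G U e he ⟨q, h⟩ hqU
      exact ⟨y.asIdeal, Or.inl ⟨y.2, hyU⟩,
        IsHtOne.of_comap G Φ hΦ hsurj y.2 (by rw [hy]; exact hq), hy⟩
    · obtain ⟨y, hyp, hyper, hy⟩ := hper.exists_comap G hq.prime
      exact ⟨y, Or.inr hyper, IsHtOne.of_comap G Φ hΦ hsurj hyp (hy ▸ hq), hy⟩
  let F : Set (Ideal R) := {p | IsHtOne p ∧ p ∉ P}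
  have hFfin : F.Finite := (finite_htOne_not_mem_open hU'o hU'n).subset fun p hp =>
    ⟨hp.1, fun h hpU => hp.2 (Or.inl ⟨h, hpU⟩)⟩
  have hFne : F.Nonempty := by
    by_contra hemp
    refine hGns (surjective_of_forall_comap G Φ hΦ hsurj fun q hq => ?_)
    have hqP : q ∈ P := by
      by_contra h
      exact hemp ⟨q, hq, h⟩
    obtain ⟨p, -, hp⟩ := hP q hqP hq
    exact ⟨p, hp⟩
  obtain ⟨D, ⟨hD, hDP⟩, m, hm, hDm⟩ := exists_le_comap_pow G hFfin hFne fun D hD => by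
    obtain ⟨E, h1, h2, h3⟩ := exists_le_comap G Φ hΦ hsurj P hP hD.1 hD.2
    exact ⟨E, ⟨h1, h2⟩, h3⟩
  -- `D` is not periodic, so its image under `g ^ m` is strictly smaller than `D`
  have hnot : ¬ IsHtOne (Ideal.comap (G ^ m) D) := fun h =>
    (h.eq_or D hD.prime hDm).elim hD.ne_bot fun h => hDP (Or.inr ⟨m, hm, h.symm⟩)
  refine ⟨?_, m, hm, D, hD.prime, hD.heightOf_eq_one, ?_, Ideal.map_le_iff_le_comap.2 hDm⟩
  · by_contra! hcon
    have hstep : ∀ p : Ideal R, IsHtOne p → IsHtOne (Ideal.comap G p) := fun p hp => by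
      by_contra h
      have := hp.prime
      exact absurd (two_le_heightOf (hp.prime.comap G) (comap_ne_bot G Φ hΦ hsurj hp.ne_bot) h)
        (hcon p hp.prime hp.heightOf_eq_one).not_ge
    have hall : ∀ n, IsHtOne (Ideal.comap (G ^ n) D) := by
      intro n
      induction n with
      | zero => rwa [comap_pow_zero]
      | succ n ih =>
        rw [comap_pow_succ]
        exact hstep _ ih
    exact hnot (hall m)
  · exact two_le_heightOf (hD.prime.comap _)
      (fun h => hD.ne_bot (le_bot_iff.1 (h ▸ hDm))) hnot
end

section
/- Let R be an integral domain that is a finitely generated ℂ-algebra and is integrally closed in its fraction field. Let G : R → R be an injective ℂ-algebra homomorphism such that the induced endomorphism of Frac(R) is bijective, and suppose there is a nonempty open subscheme U of Spec R such that Spec(G) restricts to an automorphism of U. Then the complement of U is forward-invariant: for every prime ideal q of R not belonging to U, the prime ideal G⁻¹(q) does not belong to U. (Geometrically: for the birational endomorphism g = Spec(G) of the normal affine variety Y = Spec R that restricts to an automorphism of Y⁰ = U, one has g(Y ∖ Y⁰) ⊆ Y ∖ Y⁰.) -/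
/-!
Write `g = Spec G` and `V = g⁻¹(U)`, an open subscheme of `Spec R` containing `U`.
The morphism `V → U → U → Spec R` given by `g`, then `e⁻¹`, then the inclusion agrees on `U`
with the inclusion `V → Spec R`. Since `V` is reduced, `Spec R` is separated and `U` is dense
in `V`, the two morphisms agree on all of `V`. The first has image in `U`, so `V ⊆ U`: any point
mapped into `U` by `g` already lies in `U`.
-/

open AlgebraicGeometry CategoryTheory

universe u

/-- If a self-morphism `f` of an integral separated scheme restricts to an automorphism of a
nonempty open `U`, then `f⁻¹(U) ⊆ U`. -/
theorem preimage_le_of_restricts_to_iso {X : Scheme.{u}} [IsIntegral X] [X.IsSeparated]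
    (f : X ⟶ X) (U : X.Opens) (hU : Nonempty ↥U) (e : U.toScheme ≅ U.toScheme)
    (he : U.ι ≫ f = e.hom ≫ U.ι) : f ⁻¹ᵁ U ≤ U := by
  have hle : U ≤ f ⁻¹ᵁ U := by
    intro x hx
    have h : f x = (e.hom ⟨x, hx⟩ : U).1 := congr($he ⟨x, hx⟩)
    change f x ∈ U
    rw [h]
    exact (e.hom ⟨x, hx⟩ : U).2
  have hj : X.homOfLE hle ≫ f ∣_ U = e.hom := by
    rw [← cancel_mono U.ι, Category.assoc, morphismRestrict_ι, Scheme.homOfLE_ι_assoc, he]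
  have hdom : IsDominant (X.homOfLE hle) :=
    Opens.isDominant_homOfLE (U.isOpen.dense (Set.nonempty_coe_sort.mp hU)) hle
  have key : (f ⁻¹ᵁ U).ι = f ∣_ U ≫ e.inv ≫ U.ι := by
    apply ext_of_isDominant (X.homOfLE hle)
    rw [reassoc_of% hj]
    simp
  intro x hx
  have h : x = ((f ∣_ U ≫ e.inv) ⟨x, hx⟩ : U).1 := congr($key ⟨x, hx⟩)
  rw [h]
  exact ((f ∣_ U ≫ e.inv) ⟨x, hx⟩ : U).2

/-- Let `R` be an affine domain over `ℂ`, integrally closed in its fraction field.  Let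
`G : R → R` be an injective `ℂ`-algebra homomorphism whose induced endomorphism of
`Frac R` is bijective (`g = Spec G` is a birational endomorphism of the normal affine
variety `Y = Spec R`), and suppose `Spec G` restricts to an automorphism of a nonempty
open subscheme `U = Y⁰` of `Spec R`.  Then the complement of `U` is forward invariant:
for every prime `q ∉ U`, the point `Spec G (q) = G⁻¹(q)` is not in `U` either
(geometrically, `g(Y ∖ Y⁰) ⊆ Y ∖ Y⁰`). -/
theorem complement_forward_invariant
    {R : Type u} [CommRing R] [IsDomain R] [Algebra ℂ R] [Algebra.FiniteType ℂ R]
    [IsIntegrallyClosed R]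
    (G : R →ₐ[ℂ] R) (hGinj : Function.Injective G)
    (hGbir : ∃ Φ : FractionRing R →+* FractionRing R,
      (∀ r, Φ (algebraMap R (FractionRing R) r) = algebraMap R (FractionRing R) (G r)) ∧
      Function.Bijective Φ)
    (U : (Spec (CommRingCat.of R)).Opens) (hU : Nonempty ↥U)
    (e : U.toScheme ≅ U.toScheme)
    (he : U.ι ≫ Spec.map (CommRingCat.ofHom G.toRingHom) = e.hom ≫ U.ι) :
    ∀ q : PrimeSpectrum R, q ∉ U →
      (Spec.map (CommRingCat.ofHom G.toRingHom)).base q ∉ U := by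
  intro q hq hgq
  have : IsDomain (CommRingCat.of R) := inferInstanceAs (IsDomain R)
  exact hq (preimage_le_of_restricts_to_iso _ U hU e he hgq)
end

section
/- Let R and S be integral domains that are finitely generated ℂ-algebras, let ι : R → S be an injective ℂ-algebra homomorphism, assume R is integrally closed in its fraction field, let F : S → S be a bijective ℂ-algebra homomorphism, and let G : R → R be a ℂ-algebra homomorphism with ι ∘ G = F ∘ ι. If G is not bijective, then there exist an integer m ≥ 1 and a prime ideal p of R with height p = 1 such that the prime ideal (G^m)⁻¹(p) has height at least 2 and G^m(p) ⊆ p. (Geometrically: replacing g by some power g^m, there is an exceptional divisor D ⊂ Y = Spec R with codim_Y g^m(D) ≥ 2 and g^m(D) ⊆ D.) -/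
/-! ### Denominators and local rings inside the fraction field -/

section Denominators

variable {R : Type*} [CommRing R] {K : Type*} [Field K] [Algebra R K]

variable (R) in
/-- The ideal of denominators `{r | r y ∈ R}` of an element `y` of the fraction field. -/
def denIdeal (y : K) : Ideal R :=
  (LinearMap.range (Algebra.linearMap R K)).comap (LinearMap.toSpanSingleton R K y)

lemma mem_denIdeal {y : K} {r : R} :
    r ∈ denIdeal R y ↔ ∃ a : R, algebraMap R K r * y = algebraMap R K a := by
  simp [denIdeal, Algebra.smul_def, eq_comm]

lemma denIdeal_le_mul (c : R) (y : K) : denIdeal R y ≤ denIdeal R (algebraMap R K c * y) := by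
  intro r hr
  obtain ⟨a, ha⟩ := mem_denIdeal.1 hr
  refine mem_denIdeal.2 ⟨c * a, ?_⟩
  rw [map_mul, ← ha]; ring

lemma algebraMap_ne_zero_of_notMem [IsFractionRing R K] {p : Ideal R} {s : R} (hs : s ∉ p) : algebraMap R K s ≠ 0 := by
  intro h
  rw [IsFractionRing.to_map_eq_zero_iff] at h
  exact hs (h ▸ p.zero_mem)

end Denominators

section LocalRings
variable {R : Type*} [CommRing R] [IsDomain R] (K : Type*) [Field K] [Algebra R K]
  [IsFractionRing R K]

/-- The local ring `R_p`, viewed as a subring of the fraction field `K` of `R`. -/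
noncomputable def locAt (p : Ideal R) [p.IsPrime] : Subring K :=
  (Localization.subalgebra.ofField K p.primeCompl p.primeCompl_le_nonZeroDivisors).toSubring

variable {K}

lemma mem_locAt {p : Ideal R} [p.IsPrime] {x : K} :
    x ∈ locAt K p ↔ ∃ a s : R, s ∉ p ∧ x = algebraMap R K a / algebraMap R K s := by
  change (∃ (a s : R) (_ : s ∈ p.primeCompl), x = algebraMap R K a * (algebraMap R K s)⁻¹) ↔ _
  simp [div_eq_mul_inv, Ideal.primeCompl]

lemma mem_locAt_iff_mul {p : Ideal R} [p.IsPrime] {x : K} :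
    x ∈ locAt K p ↔ ∃ a s : R, s ∉ p ∧ algebraMap R K s * x = algebraMap R K a := by
  rw [mem_locAt]
  refine exists_congr fun a ↦ exists_congr fun s ↦ and_congr_right fun hs ↦ ?_
  have := algebraMap_ne_zero_of_notMem (K := K) hs
  rw [eq_div_iff this, mul_comm]

lemma algebraMap_mem_locAt (p : Ideal R) [p.IsPrime] (a : R) : algebraMap R K a ∈ locAt K p :=
  mem_locAt.2 ⟨a, 1, fun h ↦ Ideal.IsPrime.ne_top ‹_› ((Ideal.eq_top_iff_one _).2 h), by simp⟩

/-- The elements outside `p` are exactly the elements of `R` whose inverse lies in `R_p`. -/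
lemma inv_mem_locAt_iff {p : Ideal R} [p.IsPrime] {a : R} (ha : a ≠ 0) :
    (algebraMap R K a)⁻¹ ∈ locAt K p ↔ a ∉ p := by
  have ha' : algebraMap R K a ≠ 0 := by simpa using ha
  constructor
  · intro h hap
    obtain ⟨b, s, hs, h⟩ := mem_locAt_iff_mul.1 h
    rw [mul_inv_eq_iff_eq_mul₀ ha', ← map_mul] at h
    rw [IsFractionRing.injective R K h] at hs
    exact hs (p.mul_mem_left _ hap)
  · intro h
    exact mem_locAt.2 ⟨1, a, h, by simp⟩

lemma locAt_injective {p q : Ideal R} [p.IsPrime] [q.IsPrime] (h : locAt K p = locAt K q) :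
    p = q := by
  ext a
  rcases eq_or_ne a 0 with rfl | ha
  · simp
  · rw [← not_iff_not, ← inv_mem_locAt_iff (K := K) ha, ← inv_mem_locAt_iff (K := K) ha, h]

/-- Prime ideals whose local rings are identified by an endomorphism of `K` have equal height. -/
lemma height_eq_of_map_locAt_eq {φ : K →+* K} {p q : Ideal R} [p.IsPrime] [q.IsPrime]
    (h : (locAt K q).map φ = locAt K p) : q.height = p.height := by
  have key (p : Ideal R) [p.IsPrime] : ringKrullDim (locAt K p) = p.height :=
    IsLocalization.AtPrime.ringKrullDim_eq_height p
      (Localization.subalgebra.ofField K p.primeCompl p.primeCompl_le_nonZeroDivisors)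
  have e := ringKrullDim_eq_of_ringEquiv ((locAt K q).equivMapOfInjective φ φ.injective)
  rw [h, key, key] at e
  exact_mod_cast e

lemma notMem_locAt_iff {q : Ideal R} [q.IsPrime] {y : K} :
    y ∉ locAt K q ↔ denIdeal R y ≤ q := by
  rw [mem_locAt_iff_mul, ← not_iff_not, not_not, SetLike.not_le_iff_exists, exists_comm]
  refine exists_congr fun s ↦ ?_
  rw [mem_denIdeal]
  grind

end LocalRings

/-! ### Height-one primes of normal Noetherian domains -/

section Normal
variable {R : Type*} [CommRing R] [IsDomain R] [IsNoetherianRing R] [IsIntegrallyClosed R]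
  {K : Type*} [Field K] [Algebra R K] [IsFractionRing R K]

/-- A prime ideal of denominators in a normal Noetherian domain has height one: either it is
carried into itself by `y`, making `y` integral, or it is minimal over a principal ideal. -/
lemma height_denIdeal {y : K} (hP : (denIdeal R y).IsPrime) : (denIdeal R y).height = 1 := by
  have hne : denIdeal R y ≠ ⊥ := by
    obtain ⟨a, b, hb, rfl⟩ := IsFractionRing.div_surjective (A := R) y
    have hb0 : b ≠ 0 := nonZeroDivisors.ne_zero hb
    intro h
    refine hb0 ((Submodule.mem_bot R).1 (h ▸ mem_denIdeal.2 ⟨a, ?_⟩))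
    rw [mul_div_cancel₀]
    simpa using hb0
  have hex : ∃ p ∈ denIdeal R y, ∃ u ∉ denIdeal R y,
      algebraMap R K p * y = algebraMap R K u := by
    by_contra! hcon
    have hint : IsIntegral R y := by
      refine isIntegral_of_smul_mem_submodule
        (Submodule.map (Algebra.linearMap R K) (denIdeal R y)) ?_ ?_ y ?_
      · rw [Ne, (Submodule.map_injective_of_injective (f := Algebra.linearMap R K)
          (IsFractionRing.injective R K)).eq_iff' (Submodule.map_bot _)]
        exact hne
      · exact (IsNoetherian.noetherian (denIdeal R y)).map _
      · rintro _ ⟨r, hr, rfl⟩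
        obtain ⟨a, ha⟩ := mem_denIdeal.1 hr
        refine ⟨a, ?_, ?_⟩
        · by_contra haP
          exact hcon r hr a haP ha
        · simp [← ha, mul_comm]
    obtain ⟨a, ha⟩ := IsIntegrallyClosed.algebraMap_eq_of_integral hint
    exact hP.ne_top ((Ideal.eq_top_iff_one _).2 (mem_denIdeal.2 ⟨a, by simp [ha]⟩))
  obtain ⟨p, hp, u, hu, hpu⟩ := hex
  have hmin : denIdeal R y ∈ (Ideal.span {p}).minimalPrimes := by
    refine ⟨⟨hP, (Ideal.span_singleton_le_iff_mem _).2 hp⟩, ?_⟩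
    rintro Q ⟨hQ, hpQ⟩ hQP x hx
    obtain ⟨a, ha⟩ := mem_denIdeal.1 hx
    have : x * u = p * a := by
      apply IsFractionRing.injective R K
      rw [map_mul, map_mul, ← hpu, ← ha]; ring
    refine (hQ.mem_or_mem (this ▸ Q.mul_mem_right a ?_)).resolve_right fun h ↦ hu (hQP h)
    exact hpQ (Ideal.mem_span_singleton_self p)
  refine le_antisymm (Ideal.height_le_one_of_isPrincipal_of_mem_minimalPrimes _ _ hmin) ?_
  rw [Order.one_le_iff_ne_zero]
  exact fun h ↦ hne (Ideal.height_eq_zero_iff_eq_bot.1 h)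

/-- A normal Noetherian local domain `R_q` is the intersection of its localizations at
height-one primes. -/
lemma exists_height_one_notMem {q : Ideal R} [q.IsPrime] {x : K} (hx : x ∉ locAt K q) :
    ∃ (P : Ideal R) (_ : P.IsPrime), P.height = 1 ∧ P ≤ q ∧ x ∉ locAt K P := by
  -- `P` is maximal among the denominator ideals of multiples of `x` that lie inside `q`
  obtain ⟨P, ⟨c, rfl, hc⟩, hmax⟩ := set_has_maximal_iff_noetherian.2
    (inferInstance : IsNoetherian R R)
    {I | ∃ c : R, denIdeal R (algebraMap R K c * x) = I ∧ algebraMap R K c * x ∉ locAt K q}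
    ⟨_, 1, rfl, by simpa using hx⟩
  set y := algebraMap R K c * x with hy
  have hle := notMem_locAt_iff.1 hc
  have hmul (d : R) (hd : algebraMap R K d * y ∉ locAt K q) :
      denIdeal R (algebraMap R K d * y) = denIdeal R y := by
    by_contra hne
    refine hmax _ ⟨d * c, rfl, ?_⟩ ?_
    · rwa [map_mul, mul_assoc]
    · rw [map_mul, mul_assoc]
      exact lt_of_le_of_ne (denIdeal_le_mul d y) (Ne.symm hne)
  have hP : (denIdeal R y).IsPrime := by
    refine ⟨fun h ↦ Ideal.IsPrime.ne_top ‹q.IsPrime› (top_le_iff.1 (h ▸ hle)), ?_⟩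
    intro u v huv
    by_cases hu : algebraMap R K u * y ∈ locAt K q
    · left
      obtain ⟨a, s, hs, ha⟩ := mem_locAt_iff_mul.1 hu
      have hsy : algebraMap R K s * y ∉ locAt K q := by
        intro h
        refine hc ?_
        have := mul_mem ((inv_mem_locAt_iff (K := K) (p := q) (a := s) ?_).2 hs) h
        · rwa [inv_mul_cancel_left₀ (algebraMap_ne_zero_of_notMem hs)] at this
        · rintro rfl; exact hs q.zero_mem
      rw [← hmul s hsy]
      refine mem_denIdeal.2 ⟨a, ?_⟩
      rw [← ha]; ring
    · right
      rw [← hmul u hu]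
      obtain ⟨a, ha⟩ := mem_denIdeal.1 huv
      refine mem_denIdeal.2 ⟨a, ?_⟩
      rw [← ha, map_mul]; ring
  exact ⟨_, hP, height_denIdeal hP, hle, notMem_locAt_iff.2 (denIdeal_le_mul c x)⟩

/-- The local ring of a normal Noetherian domain at a prime of height at most one is a valuation
ring. -/
lemma mem_locAt_or_inv_mem {q : Ideal R} [q.IsPrime] (hq : q.height ≤ 1) (x : K) :
    x ∈ locAt K q ∨ x⁻¹ ∈ locAt K q := by
  let A := Localization.subalgebra.ofField K q.primeCompl q.primeCompl_le_nonZeroDivisors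
  have : IsLocalization.AtPrime A q := inferInstanceAs (IsLocalization q.primeCompl A)
  have : IsLocalRing A := IsLocalization.AtPrime.isLocalRing A q
  have : IsNoetherianRing A := IsLocalization.isNoetherianRing q.primeCompl A inferInstance
  have : IsIntegrallyClosed A :=
    isIntegrallyClosed_of_isLocalization A q.primeCompl q.primeCompl_le_nonZeroDivisors
  have hdim : Ring.KrullDimLE 1 A := by
    rw [Ring.krullDimLE_iff, IsLocalization.AtPrime.ringKrullDim_eq_height q A]
    exact_mod_cast hq
  have : ValuationRing A := by
    have h4 : IsIntegrallyClosed A ∧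
        ∀ Q : Ideal A, Q ≠ ⊥ → Q.IsPrime → Q = IsLocalRing.maximalIdeal A := by
      refine ⟨inferInstance, fun Q hQ hQ' ↦ ?_⟩
      exact IsLocalRing.eq_maximalIdeal (Ring.krullDimLE_one_iff_of_noZeroDivisors.1 hdim Q hQ hQ')
    exact ((tfae_of_isNoetherianRing_of_isLocalRing_of_isDomain A).out 1 3).2 h4
  rcases ValuationRing.isInteger_or_isInteger A x with ⟨a, ha⟩ | ⟨a, ha⟩
  · left; rw [← ha]; exact a.2
  · right; rw [← ha]; exact a.2

/-- If `q = G⁻¹(p)` has height at most one, then `R_p` dominates the valuation ring `φ(R_q)`, and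
the two coincide. -/
lemma map_locAt_comap {E : Type*} [FunLike E R R] [RingHomClass E R R] {G : E} {φ : K →+* K}
    (hφ : ∀ r, φ (algebraMap R K r) = algebraMap R K (G r)) (hsurj : Function.Surjective φ)
    (p : Ideal R) [p.IsPrime] (hq : (p.comap G).height ≤ 1) :
    (locAt K (p.comap G)).map φ = locAt K p := by
  have hle : (locAt K (p.comap G)).map φ ≤ locAt K p := by
    rintro _ ⟨x, hx, rfl⟩
    obtain ⟨a, s, hs, rfl⟩ := mem_locAt.1 hx
    exact mem_locAt.2 ⟨G a, G s, hs, by simp [hφ]⟩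
  refine le_antisymm hle fun y hy ↦ ?_
  obtain ⟨x, rfl⟩ := hsurj y
  by_cases hx : x ∈ locAt K (p.comap G)
  · exact ⟨x, hx, rfl⟩
  exfalso
  obtain ⟨a, s, hs, has⟩ := mem_locAt.1 ((mem_locAt_or_inv_mem hq x).resolve_left hx)
  have hxas : x = algebraMap R K s / algebraMap R K a := by rw [← inv_inv x, has, inv_div]
  have ha : a ∈ p.comap G := by
    by_contra ha
    exact hx (mem_locAt.2 ⟨s, a, ha, hxas⟩)
  have ha0 : G a ≠ 0 := by
    intro h
    have : algebraMap R K a = 0 := φ.injective (by simp [hφ, h])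
    apply hx; rw [hxas, this]; simp
  refine (inv_mem_locAt_iff (K := K) ha0).1 ?_ ha
  have hs' : G s ∉ p := hs
  have h2 := mul_mem ((inv_mem_locAt_iff (K := K) (p := p) (a := G s)
    (fun h ↦ hs' (h ▸ p.zero_mem))).2 hs') hy
  rwa [hxas, map_div₀, hφ, hφ, ← mul_div_assoc,
    inv_mul_cancel₀ (algebraMap_ne_zero_of_notMem hs'), one_div] at h2

end Normal

/-! ### Missed and contracted hypersurfaces -/

section Dynamics

lemma pow_extends {R K : Type*} [CommRing R] [Algebra ℂ R] [Field K] [Algebra R K]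
    {G : R →ₐ[ℂ] R} {φ : K →+* K} (hφ : ∀ r, φ (algebraMap R K r) = algebraMap R K (G r)) (n : ℕ)
    (r : R) :
    (φ ^ n) (algebraMap R K r) = algebraMap R K ((G ^ n) r) := by
  induction n generalizing r with
  | zero => simp
  | succ n ih =>
    rw [pow_succ, pow_succ, RingHom.mul_def, RingHom.comp_apply, hφ, ih]
    rfl

lemma comap_pow_add {R : Type*} [CommRing R] [Algebra ℂ R] {G : R →ₐ[ℂ] R} (m n : ℕ) (p : Ideal R) :
    p.comap (G ^ (m + n)) = (p.comap (G ^ m)).comap (G ^ n) := by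
  ext x
  simp [Ideal.mem_comap, pow_add]

variable {R : Type*} [CommRing R] [IsDomain R] [IsNoetherianRing R] [IsIntegrallyClosed R]
  [Algebra ℂ R] {K : Type*} [Field K] [Algebra R K] [IsFractionRing R K]
  {G : R →ₐ[ℂ] R} {φ : K →+* K}

/-- A height-one prime that is not the preimage under `G` of any prime: the generic point of a
hypersurface of `Spec R` missed by `Spec G`. -/
def Missed (G : R →ₐ[ℂ] R) (P : Ideal R) : Prop :=
  P.IsPrime ∧ P.height = 1 ∧ ∀ p : Ideal R, p.IsPrime → p.comap G ≠ P

lemma pow_surjective (hsurj : Function.Surjective φ) (n : ℕ) : Function.Surjective (φ ^ n) := by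
  rw [RingHom.coe_pow]
  exact hsurj.iterate n

lemma map_locAt_comap_pow (hφ : ∀ r, φ (algebraMap R K r) = algebraMap R K (G r))
    (hsurj : Function.Surjective φ) (n : ℕ) (p : Ideal R) [p.IsPrime]
    (h : (p.comap (G ^ n)).height ≤ 1) :
    (locAt K (p.comap (G ^ n))).map (φ ^ n) = locAt K p :=
  map_locAt_comap (pow_extends hφ n) (pow_surjective hsurj n) p h

lemma height_comap_pow (hφ : ∀ r, φ (algebraMap R K r) = algebraMap R K (G r))
    (hsurj : Function.Surjective φ) (n : ℕ) (p : Ideal R) [p.IsPrime]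
    (h : (p.comap (G ^ n)).height ≤ 1) : (p.comap (G ^ n)).height = p.height :=
  height_eq_of_map_locAt_eq (map_locAt_comap_pow hφ hsurj n p h)

lemma lt_two_iff_le_one {a : ℕ∞} : a < 2 ↔ a ≤ 1 := by
  rw [← one_add_one_eq_two, ENat.lt_add_one_iff (by simp)]

lemma two_le_height_comap_pow (hφ : ∀ r, φ (algebraMap R K r) = algebraMap R K (G r))
    (hsurj : Function.Surjective φ) (n : ℕ) (p : Ideal R) [p.IsPrime]
    (h : 2 ≤ p.height) : 2 ≤ (p.comap (G ^ n)).height := by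
  by_contra! hlt
  rw [← height_comap_pow hφ hsurj n p (lt_two_iff_le_one.1 hlt)] at h
  exact absurd h hlt.not_ge

/-- Over a prime of height at most one there is at most one prime for each power of `G`, because its local
ring is determined by `map_locAt_comap`. -/
lemma comap_pow_injective (hφ : ∀ r, φ (algebraMap R K r) = algebraMap R K (G r))
    (hsurj : Function.Surjective φ) (n : ℕ) {p p' : Ideal R} [p.IsPrime] [p'.IsPrime]
    (h : (p.comap (G ^ n)).height ≤ 1) (he : p.comap (G ^ n) = p'.comap (G ^ n)) : p = p' := by
  apply locAt_injective (K := K)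
  rw [← map_locAt_comap_pow hφ hsurj n p h, ← map_locAt_comap_pow hφ hsurj n p' (he ▸ h)]
  simp only [he]

/-- If every height-one prime inside `q` is hit by `G`, then `R ⊆ φ(R_q)`. -/
lemma mem_locAt_of_not_missed (hφ : ∀ r, φ (algebraMap R K r) = algebraMap R K (G r))
    (hsurj : Function.Surjective φ) (q : Ideal R) [q.IsPrime]
    (hq : ∀ P ≤ q, ¬ Missed G P) {x : K} {a : R} (hx : φ x = algebraMap R K a) :
    x ∈ locAt K q := by
  by_contra hxq
  obtain ⟨P, hP, hP1, hPq, hxP⟩ := exists_height_one_notMem hxq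
  have := hq P hPq
  simp only [Missed, not_and, not_forall, not_not] at this
  obtain ⟨p, hp, rfl⟩ := this hP hP1
  have hmem : φ x ∈ (locAt K (p.comap G)).map φ := by
    rw [map_locAt_comap hφ hsurj p hP1.le, hx]
    exact algebraMap_mem_locAt p a
  obtain ⟨x', hx', hxx⟩ := hmem
  exact hxP (φ.injective hxx ▸ hx')

lemma exists_missed (hφ : ∀ r, φ (algebraMap R K r) = algebraMap R K (G r))
    (hsurj : Function.Surjective φ) (hG : ¬ Function.Surjective G) : ∃ P, Missed G P := by
  by_contra! hno
  refine hG fun a ↦ ?_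
  obtain ⟨x, hx⟩ := hsurj (algebraMap R K a)
  have hden : denIdeal R x = ⊤ := by
    by_contra hne
    obtain ⟨q, hq, hle⟩ := Ideal.exists_le_maximal _ hne
    have := hq.isPrime
    exact notMem_locAt_iff.2 hle (mem_locAt_of_not_missed hφ hsurj q (fun P _ ↦ hno P) hx)
  obtain ⟨b, hb⟩ := mem_denIdeal.1 ((Ideal.eq_top_iff_one _).1 hden)
  refine ⟨b, IsFractionRing.injective R K ?_⟩
  rw [← hφ, ← hb, ← hx]; simp

/-- The image of an exceptional divisor lies in a missed hypersurface. -/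
lemma exists_missed_le (hφ : ∀ r, φ (algebraMap R K r) = algebraMap R K (G r))
    (hsurj : Function.Surjective φ) (p : Ideal R) [p.IsPrime] (hp : p.height ≤ 1)
    (hq : 2 ≤ (p.comap G).height) : ∃ P, Missed G P ∧ P ≤ p.comap G := by
  by_contra! hno
  have hno' : ∀ P ≤ p.comap G, ¬ Missed G P := fun P hP h ↦ hno P h hP
  have heq : (locAt K (p.comap G)).map φ = locAt K p := by
    apply le_antisymm
    · rintro _ ⟨x, hx, rfl⟩
      obtain ⟨a, s, hs, rfl⟩ := mem_locAt.1 hx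
      exact mem_locAt.2 ⟨G a, G s, hs, by simp [hφ]⟩
    intro y hy
    obtain ⟨a, s, hs, rfl⟩ := mem_locAt.1 hy
    obtain ⟨x, hx⟩ := hsurj (algebraMap R K a)
    obtain ⟨z, hz⟩ := hsurj (algebraMap R K s)
    have hxq := mem_locAt_of_not_missed hφ hsurj _ hno' hx
    obtain ⟨c, t, ht, rfl⟩ := mem_locAt.1 (mem_locAt_of_not_missed hφ hsurj _ hno' hz)
    -- `s = G c / G t` with `s, G t ∉ p`, so `c ∉ G⁻¹(p)` and `φ⁻¹(s)` is a unit of the local ring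
    have hc : c ∉ p.comap G := by
      intro hc
      have ht' : G t ∉ p := ht
      rw [map_div₀, hφ, hφ, div_eq_iff (algebraMap_ne_zero_of_notMem ht'), ← map_mul] at hz
      have := IsFractionRing.injective R K hz
      rw [Ideal.mem_comap, this] at hc
      exact (Ideal.IsPrime.mem_or_mem ‹_› hc).elim hs ht'
    refine ⟨x * (algebraMap R K t / algebraMap R K c),
      mul_mem hxq (mem_locAt.2 ⟨t, c, hc, rfl⟩), ?_⟩
    rw [map_mul, hx, ← hz, ← inv_div, map_inv₀, ← div_eq_mul_inv]
  have := height_eq_of_map_locAt_eq heq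
  rw [this] at hq
  exact absurd (hq.trans hp) (by decide)

/-- Iterating `Spec G` on a missed hypersurface `V(P)` eventually contracts it. Otherwise the images
are pairwise distinct hypersurfaces, each missed by some power of `Spec G`, while only finitely many
such hypersurfaces exist. -/
lemma exists_contracted (hφ : ∀ r, φ (algebraMap R K r) = algebraMap R K (G r))
    (hsurj : Function.Surjective φ)
    (hfin : {P : Ideal R | P.IsPrime ∧ P.height = 1 ∧
      ∃ n : ℕ, ∀ p : Ideal R, p.IsPrime → p.comap (G ^ n) ≠ P}.Finite)
    {P : Ideal R} (hP : Missed G P) : ∃ k : ℕ, 2 ≤ (P.comap (G ^ k)).height := by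
  by_contra! hlt
  obtain ⟨hPp, hP1, hPm⟩ := hP
  have hle (k : ℕ) : (P.comap (G ^ k)).height ≤ 1 := lt_two_iff_le_one.1 (hlt k)
  have hnot (k : ℕ) (p : Ideal R) (hp : p.IsPrime) : p.comap (G ^ (k + 1)) ≠ P.comap (G ^ k) := by
    intro he
    rw [add_comm, comap_pow_add, pow_one] at he
    exact hPm p hp (comap_pow_injective hφ hsurj k (he ▸ hle k) he)
  have hmaps : Set.MapsTo (fun k : ℕ ↦ P.comap (G ^ k)) Set.univ
      {P : Ideal R | P.IsPrime ∧ P.height = 1 ∧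
        ∃ n : ℕ, ∀ p : Ideal R, p.IsPrime → p.comap (G ^ n) ≠ P} := fun k _ ↦
    ⟨inferInstance, (height_comap_pow hφ hsurj k P (hle k)).trans hP1, k + 1, hnot k⟩
  refine Set.infinite_univ (hfin.of_injOn hmaps ?_)
  have key (i d : ℕ) : P.comap (G ^ i) ≠ P.comap (G ^ (i + d + 1)) := by
    intro he
    apply hnot i (P.comap (G ^ d)) inferInstance
    rw [he, ← comap_pow_add]
    congr 2
    omega
  intro i _ j _ hij
  rcases lt_trichotomy i j with h | h | h
  · obtain ⟨d, rfl⟩ := Nat.exists_eq_add_of_lt h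
    exact absurd hij (key i d)
  · exact h
  · obtain ⟨d, rfl⟩ := Nat.exists_eq_add_of_lt h
    exact absurd hij.symm (key j d)

/-- Some power of `Spec G` contracts a missed hypersurface `V(P)` into a missed hypersurface
`V(P')`. -/
lemma exists_next_missed (hφ : ∀ r, φ (algebraMap R K r) = algebraMap R K (G r))
    (hsurj : Function.Surjective φ)
    (hfin : {P : Ideal R | P.IsPrime ∧ P.height = 1 ∧
      ∃ n : ℕ, ∀ p : Ideal R, p.IsPrime → p.comap (G ^ n) ≠ P}.Finite)
    {P : Ideal R} (hP : Missed G P) :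
    ∃ P', Missed G P' ∧ ∃ m : ℕ, 1 ≤ m ∧ 2 ≤ (P.comap (G ^ m)).height ∧ P' ≤ P.comap (G ^ m) := by
  classical
  have hex := exists_contracted hφ hsurj hfin hP
  obtain ⟨hPp, hP1, -⟩ := hP
  have hk := Nat.find_spec hex
  obtain ⟨j, hj⟩ : ∃ j, Nat.find hex = j + 1 := by
    refine Nat.exists_eq_add_one_of_ne_zero fun h0 ↦ ?_
    rw [h0] at hk
    change 2 ≤ P.height at hk
    rw [hP1] at hk
    exact absurd hk (by decide)
  have hlt := Nat.find_min hex (m := j) (by omega)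
  rw [hj, comap_pow_add, pow_one] at hk
  obtain ⟨P', hP', hle⟩ := exists_missed_le hφ hsurj (P.comap (G ^ j))
    (lt_two_iff_le_one.1 (not_le.1 hlt)) hk
  exact ⟨P', hP', j + 1, by omega, by rwa [comap_pow_add, pow_one],
    by rwa [comap_pow_add, pow_one]⟩

/-- The missed hypersurfaces form a finite set on which "some contracted image of `V(P)` lies in
`V(P')`" is transitive and has no dead end, so the relation holds for some pair `P' = P`. -/
lemma exists_recurrent (hφ : ∀ r, φ (algebraMap R K r) = algebraMap R K (G r))
    (hsurj : Function.Surjective φ) (hG : ¬ Function.Surjective G)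
    (hfin : {P : Ideal R | P.IsPrime ∧ P.height = 1 ∧
      ∃ n : ℕ, ∀ p : Ideal R, p.IsPrime → p.comap (G ^ n) ≠ P}.Finite) :
    ∃ P, Missed G P ∧ ∃ m : ℕ, 1 ≤ m ∧ 2 ≤ (P.comap (G ^ m)).height ∧ P ≤ P.comap (G ^ m) := by
  by_contra! hno
  have hfinM : Finite {P : Ideal R // Missed G P} :=
    (hfin.subset fun P (h : Missed G P) ↦ ⟨h.1, h.2.1, 1, by simpa using h.2.2⟩).to_subtype
  let r : {P : Ideal R // Missed G P} → {P : Ideal R // Missed G P} → Prop := fun P' P ↦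
    ∃ m : ℕ, 1 ≤ m ∧ 2 ≤ (P.1.comap (G ^ m)).height ∧ P'.1 ≤ P.1.comap (G ^ m)
  have : IsTrans _ r := ⟨by
    rintro P'' P' P ⟨m', hm', -, h'⟩ ⟨m, hm, h2, h⟩
    have := P.2.1
    refine ⟨m + m', by omega, ?_, ?_⟩
    · rw [comap_pow_add]
      exact two_le_height_comap_pow hφ hsurj m' _ h2
    · rw [comap_pow_add]
      exact h'.trans (Ideal.comap_mono h)⟩
  have : Std.Irrefl r := ⟨fun P ⟨m, hm, h2, h⟩ ↦ hno P.1 P.2 m hm h2 h⟩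
  obtain ⟨P₀, hP₀⟩ := exists_missed hφ hsurj hG
  obtain ⟨P, -, hmin⟩ := (Finite.wellFounded_of_trans_of_irrefl r).has_min Set.univ
    ⟨⟨P₀, hP₀⟩, trivial⟩
  obtain ⟨P', hP', m, hm, h2, hle⟩ := exists_next_missed hφ hsurj hfin P.2
  exact hmin ⟨P', hP'⟩ trivial ⟨m, hm, h2, hle⟩

end Dynamics

/-! ### Birationality -/

section Birational

open TensorProduct in
/-- The endomorphism `G` is birational. The rings `F⁻ⁿ(ι R)` increase with `n`, hence so do the
ideals of `S ⊗ S` generated by the elements `x ⊗ 1 - 1 ⊗ x` with `F ^ n x ∈ ι R`. When these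
ideals stabilize at `n`, each `x` with `F ^ (n + 1) x ∈ ι R` is a quotient of elements of
`F⁻ⁿ(ι R)`: apply `λ ⊗ id`, where `λ` is a retraction of `Frac S` onto `Frac (F⁻ⁿ(ι R))`. -/
lemma exists_mul_map_eq_map {R S : Type*} [CommRing R] [IsDomain R] [CommRing S] [IsDomain S]
    [Algebra ℂ R] [Algebra ℂ S] [Algebra.FiniteType ℂ S]
    (ι : R →ₐ[ℂ] S) (hι : Function.Injective ι)
    (F : S →ₐ[ℂ] S) (hF : Function.Bijective F)
    (G : R →ₐ[ℂ] R) (hcomm : ∀ r, ι (G r) = F (ι r)) (a : R) :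
    ∃ b c : R, c ≠ 0 ∧ G c * a = G b := by
  have hFn (n : ℕ) : Function.Bijective (F ^ n) := by
    rw [AlgHom.coe_pow]; exact hF.iterate n
  have hFsucc (n : ℕ) (x : S) : (F ^ (n + 1)) x = F ((F ^ n) x) := by
    rw [pow_succ']; rfl
  have : IsNoetherianRing S := Algebra.FiniteType.isNoetherianRing ℂ S
  have : IsNoetherianRing (S ⊗[ℂ] S) := Algebra.FiniteType.isNoetherianRing S (S ⊗[ℂ] S)
  let I : ℕ →o Ideal (S ⊗[ℂ] S) :=
    { toFun := fun n ↦ Ideal.span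
        {z | ∃ x : S, (∃ r, (F ^ n) x = ι r) ∧ z = x ⊗ₜ[ℂ] 1 - 1 ⊗ₜ[ℂ] x}
      monotone' := by
        refine monotone_nat_of_le_succ fun n ↦ Ideal.span_mono ?_
        rintro _ ⟨x, ⟨r, hr⟩, rfl⟩
        exact ⟨x, ⟨G r, by rw [hFsucc, hr, hcomm]⟩, rfl⟩ }
  obtain ⟨n, hn⟩ := monotone_stabilizes_iff_noetherian.2
    (inferInstance : IsNoetherian (S ⊗[ℂ] S) (S ⊗[ℂ] S)) I
  obtain ⟨x, hx⟩ := (hFn (n + 1)).2 (ι a)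
  have hxI : x ⊗ₜ[ℂ] 1 - 1 ⊗ₜ[ℂ] x ∈ I n := by
    rw [hn (n + 1) (by omega)]
    exact Ideal.subset_span ⟨x, ⟨a, hx⟩, rfl⟩
  let e : S ≃ₐ[ℂ] S := AlgEquiv.ofBijective (F ^ n) (hFn n)
  have he (s : S) : e s = (F ^ n) s := rfl
  let j₀ : R →ₐ[ℂ] S := (e.symm : S →ₐ[ℂ] S).comp ι
  have hj₀ (r : R) : (F ^ n) (j₀ r) = ι r := by
    rw [← he]; exact e.apply_symm_apply (ι r)
  have hj₀inj : Function.Injective j₀ := e.symm.injective.comp hι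
  let K := FractionRing R
  let L := FractionRing S
  let j : K →+* L := IsFractionRing.lift (g := (algebraMap S L).comp (j₀ : R →+* S))
    ((IsFractionRing.injective S L).comp hj₀inj)
  have hj (r : R) : j (algebraMap R K r) = algebraMap S L (j₀ r) :=
    IsFractionRing.lift_algebraMap _ r
  let : Algebra K L := j.toAlgebra
  have halg (k : K) (l : L) : k • l = j k * l := Algebra.smul_def k l
  obtain ⟨lam, hlam⟩ := (Algebra.linearMap K L).exists_leftInverse_of_injective
    (LinearMap.ker_eq_bot.2 (algebraMap K L).injective)
  have hlamj (k : K) : lam (j k) = k := LinearMap.congr_fun hlam k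
  have hlam1 : lam 1 = 1 := by simpa using hlamj 1
  have hlammul (r : R) (l : L) :
      lam (algebraMap S L (j₀ r) * l) = algebraMap R K r * lam l := by
    rw [← hj, ← halg, map_smul, smul_eq_mul]
  -- the additive map `s ⊗ t ↦ λ(s) t`
  let T : S ⊗[ℂ] S →+ L := TensorProduct.liftAddHom
    { toFun := fun s ↦ (AddMonoidHom.mulLeft (j (lam (algebraMap S L s)))).comp
        (algebraMap S L : S →+ L)
      map_zero' := by ext; simp
      map_add' := by intro s t; ext; simp [add_mul] }
    (by
      intro c s t
      have hc : algebraMap ℂ S c = j₀ (algebraMap ℂ R c) := (j₀.commutes c).symm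
      simp only [Algebra.smul_def, hc, AddMonoidHom.coe_mk, ZeroHom.coe_mk,
        AddMonoidHom.coe_comp, Function.comp_apply, AddMonoidHom.coe_mulLeft,
        AddMonoidHom.coe_coe, map_mul, hlammul, hj]
      ring)
  have hT (s t : S) : T (s ⊗ₜ t) = j (lam (algebraMap S L s)) * algebraMap S L t := rfl
  have hkill : ∀ z ∈ I n, ∀ w, T (w * z) = 0 := by
    intro z hz
    induction hz using Submodule.span_induction with
    | mem z hz =>
      obtain ⟨y, ⟨r, hr⟩, rfl⟩ := hz
      obtain rfl : y = j₀ r := (hFn n).1 (by rw [hr, hj₀])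
      intro w
      induction w using TensorProduct.induction_on with
      | zero => simp
      | tmul s t =>
        rw [mul_sub, map_sub, Algebra.TensorProduct.tmul_mul_tmul,
          Algebra.TensorProduct.tmul_mul_tmul, hT, hT, mul_comm s, map_mul, hlammul]
        simp only [mul_one, map_mul, hj]
        ring
      | add w₁ w₂ h₁ h₂ => rw [add_mul, map_add, h₁, h₂, add_zero]
    | zero => simp
    | add z₁ z₂ _ _ h₁ h₂ => intro w; rw [mul_add, map_add, h₁, h₂, add_zero]
    | smul v z _ h => intro w; rw [smul_eq_mul, ← mul_assoc]; exact h _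
  have hxj := hkill _ hxI 1
  rw [one_mul, map_sub, hT, hT, map_one, hlam1, map_one, mul_one, one_mul, sub_eq_zero] at hxj
  obtain ⟨b, c, hc, hbc⟩ := IsFractionRing.div_surjective (A := R) (lam (algebraMap S L x))
  have hc0 : c ≠ 0 := nonZeroDivisors.ne_zero hc
  have hc1 : algebraMap S L (j₀ c) ≠ 0 := by
    rw [Ne, IsFractionRing.to_map_eq_zero_iff, map_eq_zero_iff _ hj₀inj]
    exact hc0
  rw [← hbc, map_div₀, hj, hj, div_eq_iff hc1, ← map_mul] at hxj
  have hS := congrArg (F ^ (n + 1)) (IsFractionRing.injective S L hxj)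
  rw [map_mul, hx, hFsucc, hFsucc, hj₀, hj₀, ← hcomm, ← hcomm, ← map_mul] at hS
  exact ⟨b, c, hc0, by rw [hι hS, mul_comm]⟩

end Birational

/-! ### Finiteness of the set of missed hypersurfaces -/

section Chevalley

/-- All but finitely many height-one primes lie in the image of a dominant morphism of affine
varieties, and automorphisms of the source make them lie in the image of every `Spec (G ^ n)`. -/
lemma finite_missed {R S : Type*} [CommRing R] [IsDomain R] [CommRing S] [IsDomain S]
    [Algebra ℂ R] [Algebra ℂ S] [Algebra.FiniteType ℂ R] [Algebra.FiniteType ℂ S]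
    (ι : R →ₐ[ℂ] S) (hι : Function.Injective ι)
    (F : S →ₐ[ℂ] S) (hF : Function.Bijective F)
    (G : R →ₐ[ℂ] R) (hcomm : ∀ r, ι (G r) = F (ι r)) :
    {P : Ideal R | P.IsPrime ∧ P.height = 1 ∧
      ∃ n : ℕ, ∀ p : Ideal R, p.IsPrime → p.comap (G ^ n) ≠ P}.Finite := by
  have : IsNoetherianRing R := Algebra.FiniteType.isNoetherianRing ℂ R
  have hft : (ι : R →+* S).FinitePresentation := by
    rw [← RingHom.FinitePresentation.of_finiteType]
    refine RingHom.FiniteType.of_comp_finiteType (f := algebraMap ℂ R) ?_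
    rw [AlgHom.comp_algebraMap]
    exact RingHom.finiteType_algebraMap.2 inferInstance
  obtain ⟨C, hC⟩ := PrimeSpectrum.exists_constructibleSetData_iff.2
    (PrimeSpectrum.isConstructible_range_comap hft)
  -- the generic point lies in the image, so the image contains a basic open set `D(f)`
  obtain ⟨f, hf0, hf⟩ : ∃ f : R, f ≠ 0 ∧ ∀ P : PrimeSpectrum R, f ∉ P.asIdeal →
      P ∈ Set.range (PrimeSpectrum.comap (ι : R →+* S)) := by
    have hbot : (⟨⊥, Ideal.isPrime_bot⟩ : PrimeSpectrum R) ∈ C.toSet := by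
      rw [hC]
      refine ⟨⟨⊥, Ideal.isPrime_bot⟩, ?_⟩
      ext x
      simp [map_eq_zero_iff ι hι]
    simp only [PrimeSpectrum.ConstructibleSetData.toSet, Set.mem_iUnion] at hbot
    obtain ⟨c, hc, hmem, hnot⟩ := hbot
    refine ⟨c.f, fun h ↦ hnot (by simp [h]), fun P hP ↦ ?_⟩
    rw [← hC]
    simp only [PrimeSpectrum.ConstructibleSetData.toSet, Set.mem_iUnion]
    refine ⟨c, hc, fun x hx ↦ ?_, fun h ↦ hP (h rfl)⟩
    have hx0 : x = 0 := by simpa using hmem hx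
    rw [hx0]
    exact P.asIdeal.zero_mem
  refine (Ideal.finite_minimalPrimes_of_isNoetherianRing R (Ideal.span {f})).subset ?_
  rintro P ⟨hP, hP1, n, hn⟩
  have hfP : f ∈ P := by
    by_contra hfP
    obtain ⟨Q, hQ⟩ := hf ⟨P, hP⟩ hfP
    have hFn : Function.Bijective (F ^ n) := by rw [AlgHom.coe_pow]; exact hF.iterate n
    let e : S ≃ₐ[ℂ] S := AlgEquiv.ofBijective (F ^ n) hFn
    have hcn (n : ℕ) (r : R) : ι ((G ^ n) r) = (F ^ n) (ι r) := by
      induction n generalizing r with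
      | zero => rfl
      | succ n ih =>
        rw [pow_succ, pow_succ]
        change ι ((G ^ n) (G r)) = (F ^ n) (F (ι r))
        rw [ih, hcomm]
    refine hn ((Q.asIdeal.comap e.symm).comap ι) inferInstance ?_
    ext r
    have hPQ : P = Q.asIdeal.comap (ι : R →+* S) := congrArg PrimeSpectrum.asIdeal hQ.symm
    have her : e.symm (ι ((G ^ n) r)) = ι r := by
      rw [hcn]; exact e.symm_apply_apply (ι r)
    rw [hPQ, Ideal.mem_comap, Ideal.mem_comap, Ideal.mem_comap, her]
    rfl
  refine Ideal.mem_minimalPrimes_of_height_le ((Ideal.span_singleton_le_iff_mem _).2 hfP) ?_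
  rw [hP1, Order.one_le_iff_ne_zero, Ne, Ideal.height_eq_zero_iff_eq_bot]
  simpa using hf0

end Chevalley

/-! ### The theorem -/

lemma heightOf_eq_height {R : Type*} [CommRing R] (p : Ideal R) [hp : p.IsPrime] :
    p.heightOf = p.height := by
  rw [PrimeSpectrum.height_eq_orderHeight ⟨p, hp⟩]
  exact le_antisymm (iInf₂_le (⟨p, hp⟩ : PrimeSpectrum R) le_rfl)
    (le_iInf₂ fun q hq ↦ Order.height_mono hq)

/-- Corollary 2.4.  Let `R`, `S` be affine domains over `ℂ`, `ι : R → S` an injective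
`ℂ`-algebra homomorphism, `R` integrally closed in its fraction field, `F : S → S` a
bijective `ℂ`-algebra homomorphism and `G : R → R` a `ℂ`-algebra homomorphism with
`ι ∘ G = F ∘ ι`.  If `G` is not bijective, then for some `m ≥ 1` there is a height-one
prime `p` of `R` with `height (G^m)⁻¹(p) ≥ 2` and `G^m(p) ⊆ p`: an exceptional divisor
`D ⊂ Spec R` for `g^m` with `g^m(D) ⊆ D`. -/
theorem exists_invariant_exceptional_divisor_of_not_bijective
    {R S : Type*} [CommRing R] [IsDomain R] [CommRing S] [IsDomain S]
    [Algebra ℂ R] [Algebra ℂ S] [Algebra.FiniteType ℂ R] [Algebra.FiniteType ℂ S]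
    [IsIntegrallyClosed R]
    (ι : R →ₐ[ℂ] S) (hι : Function.Injective ι)
    (F : S →ₐ[ℂ] S) (hF : Function.Bijective F)
    (G : R →ₐ[ℂ] R) (hcomm : ∀ r, ι (G r) = F (ι r))
    (hG : ¬ Function.Bijective G) :
    ∃ m : ℕ, 1 ≤ m ∧ ∃ p : Ideal R, p.IsPrime ∧ p.heightOf = 1 ∧
      2 ≤ (Ideal.comap (G ^ m) p).heightOf ∧ Ideal.map (G ^ m) p ≤ p := by
  have : IsNoetherianRing R := Algebra.FiniteType.isNoetherianRing ℂ R
  have hGinj : Function.Injective G := by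
    intro x y hxy
    apply hι; apply hF.1
    rw [← hcomm, ← hcomm, hxy]
  let K := FractionRing R
  let φ : K →+* K := IsFractionRing.lift (g := (algebraMap R K).comp (G : R →+* R))
    ((IsFractionRing.injective R K).comp hGinj)
  have hφ (r : R) : φ (algebraMap R K r) = algebraMap R K (G r) :=
    IsFractionRing.lift_algebraMap _ r
  have hsurjR (a : R) : ∃ x, φ x = algebraMap R K a := by
    obtain ⟨b, c, hc, h⟩ := exists_mul_map_eq_map ι hι F hF G hcomm a
    refine ⟨algebraMap R K b / algebraMap R K c, ?_⟩
    rw [map_div₀, hφ, hφ, ← h, map_mul, mul_div_cancel_left₀]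
    rw [Ne, IsFractionRing.to_map_eq_zero_iff, map_eq_zero_iff _ hGinj]
    exact hc
  have hsurj : Function.Surjective φ := by
    intro y
    obtain ⟨a, s, -, rfl⟩ := IsFractionRing.div_surjective (A := R) y
    obtain ⟨x, hx⟩ := hsurjR a
    obtain ⟨z, hz⟩ := hsurjR s
    exact ⟨x / z, by rw [map_div₀, hx, hz]⟩
  obtain ⟨P, hP, m, hm, h2, hle⟩ := exists_recurrent hφ hsurj (fun h ↦ hG ⟨hGinj, h⟩)
    (finite_missed ι hι F hF G hcomm)
  have := hP.1
  refine ⟨m, hm, P, hP.1, ?_, ?_, Ideal.map_le_iff_le_comap.2 hle⟩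
  · rw [heightOf_eq_height, hP.2.1]
  · rwa [heightOf_eq_height]
end

section
/- Let k be a field of characteristic 0, let A = k[x,y] be the polynomial ring in two variables, and let S be the localization of A away from x (so S = k[x, x⁻¹, y]), with A identified with its image R in S. There is a k-algebra automorphism F of S determined by F(x) = x and F(y) = x·y; it satisfies F(R) ⊆ R, but the restriction of F to R is an injective k-algebra endomorphism of R that is not surjective (hence not an automorphism of R). In particular, the element x of R is invertible in S but not in R. -/
/-!
Substituting `y ↦ x * y` is inverted on `S = k[x, x⁻¹, y]` by `y ↦ x⁻¹ * y`, so it is an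
automorphism `F` of `S` (`counterexampleHom_comp_eq_id`), and it visibly preserves `R = k[x, y]`.
The image `F(R)` is `k[x, x * y]`, whose elements are constant on the line `x = 0`; hence
`y ∉ F(R)`. Similarly `x` vanishes at the origin, so it is not a unit of `R`.
-/

/-- The polynomial ring `A = k[x,y]` in two variables. -/
abbrev CounterexamplePolyRing (k : Type*) [Field k] := MvPolynomial (Fin 2) k

/-- The localization `S = k[x, x⁻¹, y]` of `k[x,y]` away from `x`. -/
abbrev CounterexampleLocRing (k : Type*) [Field k] :=
  Localization.Away (MvPolynomial.X 0 : CounterexamplePolyRing k)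

/-- The image `R` of `A = k[x,y]` in `S = k[x, x⁻¹, y]`. -/
noncomputable abbrev CounterexampleSubring (k : Type*) [Field k] :
    Subalgebra k (CounterexampleLocRing k) :=
  (IsScalarTower.toAlgHom k (CounterexamplePolyRing k) (CounterexampleLocRing k)).range

/-- The `k`-algebra endomorphism of `S = k[x, x⁻¹, y]` with `x ↦ x` and `y ↦ w`. -/
noncomputable def counterexampleHom (k : Type*) [Field k] (w : CounterexampleLocRing k) :
    CounterexampleLocRing k →ₐ[k] CounterexampleLocRing k :=
  IsLocalization.liftAlgHom
    (M := Submonoid.powers (MvPolynomial.X 0 : CounterexamplePolyRing k))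
    (f := MvPolynomial.aeval
      ![algebraMap (CounterexamplePolyRing k) (CounterexampleLocRing k) (MvPolynomial.X 0), w])
    (by
      rintro ⟨_, n, rfl⟩
      simpa using (IsLocalization.Away.algebraMap_isUnit
        (S := CounterexampleLocRing k) (MvPolynomial.X 0 : CounterexamplePolyRing k)).pow n)

lemma counterexampleHom_algebraMap (k : Type*) [Field k] (w : CounterexampleLocRing k)
    (p : CounterexamplePolyRing k) :
    counterexampleHom k w (algebraMap _ _ p) = MvPolynomial.aeval
      ![algebraMap (CounterexamplePolyRing k) (CounterexampleLocRing k) (MvPolynomial.X 0), w]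
      p := by
  simp [counterexampleHom]

/-- An endomorphism of `S` is the identity as soon as it fixes `x` and `y`; the composite of
two substitutions for `y` always fixes `x`, so only the image of `y` has to be checked. -/
lemma counterexampleHom_comp_eq_id (k : Type*) [Field k] (v w : CounterexampleLocRing k)
    (h : counterexampleHom k v w =
      algebraMap (CounterexamplePolyRing k) (CounterexampleLocRing k) (MvPolynomial.X 1)) :
    (counterexampleHom k v).comp (counterexampleHom k w) = AlgHom.id k _ := by
  apply IsLocalization.algHom_ext
    (Submonoid.powers (MvPolynomial.X 0 : CounterexamplePolyRing k))
  apply MvPolynomial.algHom_ext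
  intro i
  change counterexampleHom k v (counterexampleHom k w
    (algebraMap (CounterexamplePolyRing k) (CounterexampleLocRing k) (MvPolynomial.X i))) =
      algebraMap (CounterexamplePolyRing k) (CounterexampleLocRing k) (MvPolynomial.X i)
  fin_cases i
  · simp [counterexampleHom_algebraMap]
  · simp [counterexampleHom_algebraMap, h]

lemma counterexample_algebraMap_injective (k : Type*) [Field k] :
    Function.Injective (algebraMap (CounterexamplePolyRing k) (CounterexampleLocRing k)) :=
  IsLocalization.injective _
    (powers_le_nonZeroDivisors_of_noZeroDivisors (MvPolynomial.X_ne_zero (0 : Fin 2)))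

/-- The counterexample: let `k` be a field of characteristic 0, `A = k[x,y]`,
`S = k[x,x⁻¹,y]` the localization of `A` away from `x`, and `R` the image of `A` in
`S`.  There is a `k`-algebra automorphism `F` of `S` with `F(x) = x` and `F(y) = x·y`;
it maps `R` into `R`, but its restriction to `R` is an injective `k`-algebra
endomorphism of `R` which is not surjective.  In particular `x ∈ R` is invertible in
`S` but not in `R`. -/
theorem counterexample_subring_not_automorphism (k : Type*) [Field k] [CharZero k] :
    ∃ F : CounterexampleLocRing k ≃ₐ[k] CounterexampleLocRing k,
      F (algebraMap (CounterexamplePolyRing k) (CounterexampleLocRing k)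
          (MvPolynomial.X 0)) =
        algebraMap (CounterexamplePolyRing k) (CounterexampleLocRing k)
          (MvPolynomial.X 0) ∧
      F (algebraMap (CounterexamplePolyRing k) (CounterexampleLocRing k)
          (MvPolynomial.X 1)) =
        algebraMap (CounterexamplePolyRing k) (CounterexampleLocRing k)
          (MvPolynomial.X 0 * MvPolynomial.X 1) ∧
      (∃ hFR : ∀ a ∈ CounterexampleSubring k, F a ∈ CounterexampleSubring k,
        Function.Injective (fun r : ↥(CounterexampleSubring k) =>
          (⟨F r.1, hFR r.1 r.2⟩ : ↥(CounterexampleSubring k))) ∧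
        ¬ Function.Surjective (fun r : ↥(CounterexampleSubring k) =>
          (⟨F r.1, hFR r.1 r.2⟩ : ↥(CounterexampleSubring k)))) ∧
      IsUnit (algebraMap (CounterexamplePolyRing k) (CounterexampleLocRing k)
        (MvPolynomial.X 0)) ∧
      ∀ hx : algebraMap (CounterexamplePolyRing k) (CounterexampleLocRing k)
          (MvPolynomial.X 0) ∈ CounterexampleSubring k,
        ¬ IsUnit (⟨algebraMap (CounterexamplePolyRing k) (CounterexampleLocRing k)
            (MvPolynomial.X 0), hx⟩ : ↥(CounterexampleSubring k)) := by
  set ι := algebraMap (CounterexamplePolyRing k) (CounterexampleLocRing k) with hι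
  have hinj : Function.Injective ι := counterexample_algebraMap_injective k
  have hu : IsUnit (ι (MvPolynomial.X 0)) := IsLocalization.Away.algebraMap_isUnit _
  obtain ⟨z, hz⟩ := hu.exists_right_inv
  have hX0 : ∀ w, counterexampleHom k w (ι (MvPolynomial.X 0)) = ι (MvPolynomial.X 0) := by
    intro w; simp [hι, counterexampleHom_algebraMap]
  have hX1 : ∀ w, counterexampleHom k w (ι (MvPolynomial.X 1)) = w := by
    intro w; simp [hι, counterexampleHom_algebraMap]
  have hfix : ∀ w, counterexampleHom k w z = z := by
    intro w
    apply hu.mul_left_cancel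
    have h := congrArg (counterexampleHom k w) hz
    rw [map_mul, hX0, map_one] at h
    rw [h, hz]
  -- On `R`, the substitution `y ↦ x * y` comes from the same substitution on `k[x, y]`.
  have hpoly : ∀ p : CounterexamplePolyRing k,
      counterexampleHom k (ι (MvPolynomial.X 0) * ι (MvPolynomial.X 1)) (ι p) =
        ι (MvPolynomial.aeval
          ![MvPolynomial.X 0, (MvPolynomial.X 0 * MvPolynomial.X 1 : CounterexamplePolyRing k)]
          p) := by
    intro p
    have h : (counterexampleHom k (ι (MvPolynomial.X 0) * ι (MvPolynomial.X 1))).comp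
        (IsScalarTower.toAlgHom k (CounterexamplePolyRing k) (CounterexampleLocRing k)) =
        (IsScalarTower.toAlgHom k (CounterexamplePolyRing k) (CounterexampleLocRing k)).comp
          (MvPolynomial.aeval ![MvPolynomial.X 0,
            (MvPolynomial.X 0 * MvPolynomial.X 1 : CounterexamplePolyRing k)]) := by
      apply MvPolynomial.algHom_ext
      intro i
      fin_cases i
      · simpa using hX0 _
      · simpa using hX1 _
    exact DFunLike.congr_fun h p
  let F : CounterexampleLocRing k ≃ₐ[k] CounterexampleLocRing k :=
    AlgEquiv.ofAlgHom
      (counterexampleHom k (ι (MvPolynomial.X 0) * ι (MvPolynomial.X 1)))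
      (counterexampleHom k (z * ι (MvPolynomial.X 1)))
      (counterexampleHom_comp_eq_id k _ _ (by
        rw [map_mul, hfix, hX1, ← mul_assoc, mul_comm z, hz, one_mul]))
      (counterexampleHom_comp_eq_id k _ _ (by
        rw [map_mul, hX0, hX1, ← mul_assoc, hz, one_mul]))
  have hF : ∀ s, F s =
      counterexampleHom k (ι (MvPolynomial.X 0) * ι (MvPolynomial.X 1)) s := fun _ => rfl
  refine ⟨F, ?_, ?_, ⟨?_, ?_, ?_⟩, hu, ?_⟩
  · rw [hF, hX0]
  · rw [hF, hX1, map_mul]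
  · rintro _ ⟨p, rfl⟩
    exact ⟨_, (hpoly p).symm⟩
  · intro a b hab
    exact Subtype.ext (F.injective (congrArg Subtype.val hab))
  · intro hsurj
    obtain ⟨⟨_, p, rfl⟩, hp⟩ := hsurj ⟨ι (MvPolynomial.X 1), MvPolynomial.X 1, rfl⟩
    have h := hinj ((hpoly p).symm.trans (congrArg Subtype.val hp))
    -- Polynomials in `x` and `x * y` are constant on the line `x = 0`, whereas `y` is not.
    have key : ∀ c : k, MvPolynomial.aeval ![(0 : k), c] (MvPolynomial.aeval
        ![MvPolynomial.X 0, (MvPolynomial.X 0 * MvPolynomial.X 1 : CounterexamplePolyRing k)]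
          p) = MvPolynomial.aeval ![(0 : k), 0] p := by
      intro c
      rw [← AlgHom.comp_apply]
      congr 1
      apply MvPolynomial.algHom_ext
      intro i
      fin_cases i <;> simp
    have h01 := (key 0).trans (key 1).symm
    rw [h] at h01
    simp at h01
  · intro hx hunit
    obtain ⟨⟨_, q, rfl⟩, hq⟩ := hunit.exists_right_inv
    have h : ι (MvPolynomial.X 0 * q) = ι 1 := by
      rw [map_mul, map_one]
      exact congrArg Subtype.val hq
    have h0 := congrArg (MvPolynomial.aeval ![(0 : k), 0]) (hinj h)
    simp at h0
end
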